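/- Let u : ℝ×ℝ² → ℂ be smooth, with u(t,·) and ∂_t u(t,·) Schwartz in x, continuously in t. With S := (1/2)t∂_t + x·∇_x, Λ := |∇|, and D^I ranging over all compositions of at most 4 operators from {Ω, ∂₁, ∂₂}, one has for every t ∈ ℝ: ‖u(t)‖_{L^∞(ℝ²)} ≤ C ( (1+|t|)^{−1} Σ_{k∈{0,1}} Σ_{|I|≤4} ‖ S^k D^I u(t) ‖_{L²(ℝ²)} + Σ_{|I|≤4} ‖ D^I ( ∂_t u + iΛ^{1/2} u )(t) ‖_{L²(ℝ²)} ), with C an absolute constant. -/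

import Mathlib

/-!
At a fixed time, work on the Fourier side with `F = 𝓕 (u(t, ·))`. The operator
`S - (t/2)(∂_t + iΛ^{1/2})` contains no time derivative, and its Fourier transform is
`-(R + 2)` with `R = ξ·∇_ξ + i(t/2)|ξ|^{1/2}` (`Rt`). By Plancherel, `R F` is therefore controlled
in `L²` by `S u`, `t (∂_t + iΛ^{1/2}) u` and `u` (`Reg.N2_Rt_le`).

In polar coordinates with `|ξ| = s²`, `R` becomes `(s/2)∂_s` acting on `e^{its} F`, while `Ω`
becomes `∂_θ`. Writing `x = ρ e(α)` and `Y = ±2πρ`, the inversion formula for `u(t, x)` splits,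
by an angular cutoff around each of the two stationary directions `±x`, into two integrals
`∫ e^{i(Y s² - ts)} s³ a(s) ds`, where `a(s)` is an angular integral with phase `Y s²(cos θ - 1)`
and amplitude `e^{its} F`. Stationary phase in `θ` gains `(|Y|^{1/2} s)^{-1}` (`angular_osc`), and
integration by parts in `s` around the stationary point `t/(2Y)`, with the multiplier
`(s - s₀)∂_s` regularised at scale `|Y|^{-1/2}`, gains `1/|t|` uniformly in `Y` (`radial_osc`).
The outcome, `core_bound`, is
`|t| |u(t, x)| ≲ ∫ |ξ|^{-1/2} (|F| + |ΩF| + |Ω²F| + |RF| + |RΩF|) dξ`,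
and Cauchy–Schwarz against `|ξ|^{-1/2}(1 + |ξ|²)^{-1/2} ∈ L²` turns the right side into `L²` norms
with one more derivative (`freq_bound`). For small `|t|` the usual Sobolev bound `low_bound` is used.

Finally `Ω, ∂₁, ∂₂` commute with `∂_t + iΛ^{1/2}` (`Reg.DI_halfWaveOp`): for `∂_j` by
differentiation under the integral, for `Ω` because the symbol `|ξ|^{1/2}` is radial, so that an
angular integration by parts produces no extra term (`integral_sqm_Om`).
-/

/-!
STATEMENT 16: Klainerman–Sobolev type estimate adapted to the half-wave flow: for `u`
smooth on `ℝ×ℝ²` with `u(t,·)` and `∂_t u(t,·)` Schwartz in `x` continuously in `t`,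
with `S = (1/2)t∂_t + x·∇_x`, `Λ = |∇|`, and `D^I` ranging over all compositions of at
most 4 operators from `{Ω, ∂₁, ∂₂}`:
`‖u(t)‖_{L^∞} ≤ C ( (1+|t|)^{−1} Σ_{k∈{0,1}} Σ_{|I|≤4} ‖S^k D^I u(t)‖_{L²}
  + Σ_{|I|≤4} ‖D^I(∂_t u + iΛ^{1/2}u)(t)‖_{L²} )`.
-/

open MeasureTheory
open scoped FourierTransform

noncomputable section

abbrev E2 := EuclideanSpace ℝ (Fin 2)

/-- Fourier multiplier on `ℝ²` with symbol `m`. -/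
def fm (m : E2 → ℂ) (g : E2 → ℂ) : E2 → ℂ := fun x => 𝓕⁻ (fun ξ => m ξ * 𝓕 g ξ) x

/-- The vector `(−x₂, x₁)`, generator of rotations in the plane. -/
def rotv (x : E2) : E2 :=
  EuclideanSpace.single (0 : Fin 2) (-(x 1)) + EuclideanSpace.single (1 : Fin 2) (x 0)

/-- The space-time scaling field `S g = (1/2)t∂_t g + x·∇_x g` on `ℝ × ℝ²`. -/
def Sop (g : ℝ × E2 → ℂ) : ℝ × E2 → ℂ := fun p => fderiv ℝ g p (p.1 / 2, p.2)

/-- The operators `Ω`, `∂₁`, `∂₂` (acting in the spatial variables) on `ℝ × ℝ²`. -/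
def opT : Fin 3 → ((ℝ × E2 → ℂ) → (ℝ × E2 → ℂ)) :=
  ![fun g p => fderiv ℝ g p (0, rotv p.2),
    fun g p => fderiv ℝ g p (0, EuclideanSpace.single (0 : Fin 2) (1 : ℝ)),
    fun g p => fderiv ℝ g p (0, EuclideanSpace.single (1 : Fin 2) (1 : ℝ))]

/-- Composition `D^I` of the operators from `{Ω, ∂₁, ∂₂}` indexed by the list `I`. -/
def DI : List (Fin 3) → (ℝ × E2 → ℂ) → (ℝ × E2 → ℂ)
  | [], g => g
  | i :: l, g => opT i (DI l g)

/-- The spatial `L²` norm at time `t`. -/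
def L2at (t : ℝ) (g : ℝ × E2 → ℂ) : ℝ := (∫ x : E2, ‖g (t, x)‖ ^ 2) ^ ((1 : ℝ) / 2)

/-- `(∂_t + iΛ^{1/2})u`, where `Λ^{1/2}` is the Fourier multiplier with symbol
`|ξ|^{1/2}` acting in the spatial variables. -/
def halfWaveOp (u : ℝ × E2 → ℂ) : ℝ × E2 → ℂ := fun p =>
  fderiv ℝ u p (1, 0) +
    Complex.I * fm (fun ξ => ((Real.sqrt ‖ξ‖ : ℝ) : ℂ)) (fun x => u (p.1, x)) p.2

open scoped ContDiff

/-! ### Oscillatory integrals on the circle -/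

lemma lorentz_integral_le (c : ℝ) (hc : 0 < c) (a p q : ℝ) :
    ∫ s in p..q, 1 / (1 + c * (s - a) ^ 2) ≤ Real.pi / Real.sqrt c := by
  have hsc : 0 < Real.sqrt c := Real.sqrt_pos.2 hc
  have hd : ∀ s : ℝ, HasDerivAt (fun s => Real.arctan (Real.sqrt c * (s - a)) / Real.sqrt c)
      (1 / (1 + c * (s - a) ^ 2)) s := by
    intro s
    have h1 : HasDerivAt (fun s : ℝ => Real.sqrt c * (s - a)) (Real.sqrt c * 1) s :=
      ((hasDerivAt_id s).sub_const a).const_mul _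
    have h2 := (h1.arctan).div_const (Real.sqrt c)
    refine h2.congr_deriv ?_
    rw [mul_pow, Real.sq_sqrt hc.le]
    field_simp
  have hcont : Continuous (fun s : ℝ => 1 / (1 + c * (s - a) ^ 2)) := by
    refine continuous_const.div (by fun_prop) (fun s => ?_)
    positivity
  rw [intervalIntegral.integral_eq_sub_of_hasDerivAt (fun s _ => hd s)
    (hcont.intervalIntegrable _ _), ← sub_div]
  gcongr
  have := Real.arctan_lt_pi_div_two (Real.sqrt c * (q - a))
  have := Real.neg_pi_div_two_lt_arctan (Real.sqrt c * (p - a))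
  linarith

/-- A one-dimensional Sobolev inequality on the interval `[-π, π]`. -/
lemma norm_le_integral_circle {G G' : ℝ → ℂ} (hG : ∀ θ, HasDerivAt G (G' θ) θ)
    (hG' : Continuous G') {θ : ℝ} (hθ : θ ∈ Set.Icc (-Real.pi) Real.pi) :
    ‖G θ‖ ≤ ∫ φ in (-Real.pi)..Real.pi, (‖G φ‖ + ‖G' φ‖) := by
  have hpi := Real.pi_gt_three
  have hGc : Continuous G := continuous_iff_continuousAt.2 fun θ => (hG θ).continuousAt
  have hle : -Real.pi ≤ Real.pi := by linarith
  set K := ∫ φ in (-Real.pi)..Real.pi, ‖G' φ‖ with hK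
  have hK0 : 0 ≤ K := intervalIntegral.integral_nonneg hle fun _ _ => norm_nonneg _
  have key : ∀ φ ∈ Set.Icc (-Real.pi) Real.pi, ‖G θ‖ ≤ ‖G φ‖ + K := by
    intro φ hφ
    have h1 : ∫ x in φ..θ, G' x = G θ - G φ :=
      intervalIntegral.integral_eq_sub_of_hasDerivAt (fun s _ => hG s) (hG'.intervalIntegrable _ _)
    have h2 : ‖G θ - G φ‖ ≤ K := by
      rw [← h1]
      refine (intervalIntegral.norm_integral_le_abs_integral_norm).trans ?_
      refine le_trans ?_ (le_of_eq (abs_of_nonneg hK0))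
      refine intervalIntegral.abs_integral_mono_interval ?_ ?_ (hG'.norm.intervalIntegrable _ _)
      · rw [Set.uIoc_of_le hle]
        intro x hx
        rw [Set.uIoc] at hx
        exact ⟨lt_of_le_of_lt (le_min hφ.1 hθ.1) hx.1, hx.2.trans (max_le hφ.2 hθ.2)⟩
      · exact Filter.Eventually.of_forall fun x => norm_nonneg _
    calc ‖G θ‖ = ‖G φ + (G θ - G φ)‖ := by congr 1; ring
      _ ≤ _ := (norm_add_le _ _).trans (by gcongr)
  have h3 : ∫ φ in (-Real.pi)..Real.pi, ‖G θ‖ ≤ ∫ φ in (-Real.pi)..Real.pi, (‖G φ‖ + K) := by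
    refine intervalIntegral.integral_mono_on hle (by simp) ?_ key
    exact (hGc.norm.add continuous_const).intervalIntegrable _ _
  rw [intervalIntegral.integral_add (hGc.norm.intervalIntegrable _ _) (by simp)] at h3
  rw [intervalIntegral.integral_add (hGc.norm.intervalIntegrable _ _)
    (hG'.norm.intervalIntegrable _ _)]
  simp only [intervalIntegral.integral_const, smul_eq_mul] at h3
  have h4 : 0 ≤ ∫ φ in (-Real.pi)..Real.pi, ‖G φ‖ :=
    intervalIntegral.integral_nonneg hle fun _ _ => norm_nonneg _
  rw [← hK]
  nlinarith

lemma sq_le_sin_half {θ : ℝ} (hθ : θ ∈ Set.Icc (-Real.pi) Real.pi) :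
    (θ / Real.pi) ^ 2 ≤ Real.sin (θ / 2) ^ 2 := by
  have hpi := Real.pi_pos
  rw [sq_le_sq]
  have h1 : |θ| ≤ Real.pi := abs_le.2 hθ
  have h2 := Real.mul_le_sin (x := |θ| / 2) (by positivity) (by linarith)
  have h3 : |Real.sin (θ / 2)| = Real.sin (|θ| / 2) := by
    rcases abs_cases θ with ⟨h, h'⟩ | ⟨h, h'⟩
    · rw [h, abs_of_nonneg]; exact Real.sin_nonneg_of_nonneg_of_le_pi (by linarith) (by linarith [h1, h ▸ h1])
    · rw [h, neg_div, Real.sin_neg, abs_of_nonpos]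
      exact Real.sin_nonpos_of_nonpos_of_neg_pi_le (by linarith) (by linarith [h ▸ h1])
  rw [h3, abs_div, abs_of_pos hpi]
  calc |θ| / Real.pi = 2 / Real.pi * (|θ| / 2) := by field_simp
    _ ≤ _ := h2

/-- Stationary phase on the circle at `θ = 0`. The factor `1 + cos θ` removes the second
stationary point `θ = π`; the proof integrates by parts with the primitive `sin(θ/2) e^{iX(cos θ - 1)}`,
whose derivative is `cos(θ/2)` times a factor of size comparable to `1 + |X| sin²(θ/2)`. -/
lemma angular_osc {G G' : ℝ → ℂ} (hG : ∀ θ, HasDerivAt G (G' θ) θ) (hG' : Continuous G')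
    (X : ℝ) :
    Real.sqrt |X| * ‖∫ θ in (-Real.pi)..Real.pi,
        Complex.exp (Complex.I * (X * (Real.cos θ - 1) : ℝ)) * ((1 + Real.cos θ : ℝ) * G θ)‖
      ≤ 60 * ∫ θ in (-Real.pi)..Real.pi, (‖G θ‖ + ‖G' θ‖) := by
  have hpi := Real.pi_gt_three
  have hle : -Real.pi ≤ Real.pi := by linarith
  have hGc : Continuous G := continuous_iff_continuousAt.2 fun θ => (hG θ).continuousAt
  set B := ∫ θ in (-Real.pi)..Real.pi, (‖G θ‖ + ‖G' θ‖) with hB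
  have hB0 : 0 ≤ B := intervalIntegral.integral_nonneg hle fun _ _ => by positivity
  rcases eq_or_ne X 0 with rfl | hX
  · simp only [abs_zero, Real.sqrt_zero, zero_mul]; positivity
  have hX' : 0 < |X| := abs_pos.2 hX
  set D : ℝ → ℂ := fun θ => 1 - 4 * Complex.I * X * (Real.sin (θ / 2) : ℂ) ^ 2 with hD
  have hDn : ∀ θ, ‖D θ‖ ^ 2 = 1 + (4 * X * Real.sin (θ / 2) ^ 2) ^ 2 := by
    intro θ
    have : D θ = ((1 : ℝ) : ℂ) + ((-(4 * X * Real.sin (θ / 2) ^ 2) : ℝ) : ℂ) * Complex.I := by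
      simp only [hD]; push_cast; ring
    rw [this, ← Complex.normSq_eq_norm_sq, Complex.normSq_add_mul_I]
    ring
  have hD1 : ∀ θ, 1 ≤ ‖D θ‖ := by
    intro θ
    nlinarith [hDn θ, norm_nonneg (D θ), sq_nonneg (4 * X * Real.sin (θ / 2) ^ 2)]
  have hD0 : ∀ θ, D θ ≠ 0 := fun θ => norm_pos_iff.1 (by linarith [hD1 θ])
  set e : ℝ → ℂ := fun θ => Complex.exp (Complex.I * (X * (Real.cos θ - 1) : ℝ)) with he
  have hen : ∀ θ, ‖e θ‖ = 1 := fun θ => by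
    simp only [he]; rw [mul_comm]; exact Complex.norm_exp_ofReal_mul_I _
  have hsinh : ∀ θ : ℝ, HasDerivAt (fun θ : ℝ => ((Real.sin (θ / 2) : ℝ) : ℂ))
      ((Real.cos (θ / 2) / 2 : ℝ) : ℂ) θ := by
    intro θ
    have := ((hasDerivAt_id' θ).div_const 2).sin.ofReal_comp
    exact this.congr_deriv (by push_cast; ring)
  have hcosh : ∀ θ : ℝ, HasDerivAt (fun θ : ℝ => ((Real.cos (θ / 2) : ℝ) : ℂ))
      ((-Real.sin (θ / 2) / 2 : ℝ) : ℂ) θ := by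
    intro θ
    have := ((hasDerivAt_id' θ).div_const 2).cos.ofReal_comp
    exact this.congr_deriv (by push_cast; ring)
  have hs2 : ∀ θ : ℝ, Real.sin θ = 2 * Real.sin (θ / 2) * Real.cos (θ / 2) := fun θ => by
    rw [← Real.sin_two_mul]; congr 1; ring
  have hc2 : ∀ θ : ℝ, 1 + Real.cos θ = 2 * Real.cos (θ / 2) ^ 2 := fun θ => by
    have := Real.cos_two_mul (θ / 2)
    rw [show 2 * (θ / 2) = θ by ring] at this; linarith
  have hede : ∀ θ : ℝ, HasDerivAt e (e θ * (Complex.I * ((X * (-Real.sin θ) : ℝ) : ℂ))) θ := by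
    intro θ
    have := ((((Real.hasDerivAt_cos θ).sub_const 1).const_mul X).ofReal_comp.const_mul
      Complex.I).cexp
    exact this
  -- the primitive `sin(θ/2) e` and the amplitude it is paired with
  set U : ℝ → ℂ := fun θ => (Real.sin (θ / 2) : ℂ) * e θ with hU
  set U' : ℝ → ℂ := fun θ => (Real.cos (θ / 2) : ℂ) / 2 * D θ * e θ with hU'
  have hUd : ∀ θ, HasDerivAt U (U' θ) θ := by
    intro θ
    refine ((hsinh θ).mul (hede θ)).congr_deriv ?_
    simp only [hU', hD, hs2 θ]
    push_cast
    ring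
  set V : ℝ → ℂ := fun θ => 4 * (Real.cos (θ / 2) : ℂ) * G θ / D θ with hV
  set V' : ℝ → ℂ := fun θ => (-2 * (Real.sin (θ / 2) : ℂ) * G θ
      + 4 * (Real.cos (θ / 2) : ℂ) * G' θ) / D θ
      + 16 * Complex.I * X * (Real.sin (θ / 2) : ℂ) * (Real.cos (θ / 2) : ℂ) ^ 2 * G θ / D θ ^ 2
    with hV'
  have hDd : ∀ θ, HasDerivAt D
      (-(4 * Complex.I * X * (Real.sin (θ / 2) : ℂ) * (Real.cos (θ / 2) : ℂ))) θ := by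
    intro θ
    refine ((((hsinh θ).pow 2).const_mul (4 * Complex.I * X)).const_sub 1).congr_deriv ?_
    push_cast
    ring
  have hVd : ∀ θ, HasDerivAt V (V' θ) θ := by
    intro θ
    refine ((((hcosh θ).const_mul 4).mul (hG θ)).div (hDd θ) (hD0 θ)).congr_deriv ?_
    simp only [hV', Pi.mul_apply]
    have := hD0 θ
    field_simp
    push_cast
    ring
  have hec : Continuous e := continuous_iff_continuousAt.2 fun θ => (hede θ).continuousAt
  have hDc : Continuous D := continuous_iff_continuousAt.2 fun θ => (hDd θ).continuousAt
  have hU'c : Continuous U' := by simp only [hU']; fun_prop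
  have hV'c : Continuous V' := by
    simp only [hV']
    refine Continuous.add (Continuous.div (by fun_prop) hDc hD0)
      (Continuous.div (by fun_prop) (hDc.pow 2) fun θ => pow_ne_zero 2 (hD0 θ))
  have hibp := intervalIntegral.integral_deriv_mul_eq_sub
    (a := -Real.pi) (b := Real.pi) (u := U) (v := V) (u' := U') (v' := V')
    (fun x _ => hUd x) (fun x _ => hVd x) (hU'c.intervalIntegrable _ _)
    (hV'c.intervalIntegrable _ _)
  have hUc : Continuous U := continuous_iff_continuousAt.2 fun θ => (hUd θ).continuousAt
  have hVc : Continuous V := continuous_iff_continuousAt.2 fun θ => (hVd θ).continuousAt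
  have hV0 : V Real.pi = 0 := by simp [hV]
  have hV0' : V (-Real.pi) = 0 := by simp [hV, neg_div]
  rw [hV0, hV0', intervalIntegral.integral_add (f := fun x => U' x * V x) (g := fun x => U x * V' x)
    ((hU'c.mul hVc).intervalIntegrable _ _)
    ((hUc.mul hV'c).intervalIntegrable _ _)] at hibp
  have hUV : ∀ θ, U' θ * V θ = e θ * ((1 + Real.cos θ : ℝ) * G θ) := by
    intro θ
    have := hD0 θ
    simp only [hU', hV, hc2 θ]
    field_simp
    push_cast
    ring
  simp_rw [hUV] at hibp
  have hEq : ∫ θ in (-Real.pi)..Real.pi, e θ * ((1 + Real.cos θ : ℝ) * G θ)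
      = -∫ θ in (-Real.pi)..Real.pi, U θ * V' θ := by
    linear_combination hibp
  rw [hEq, norm_neg]
  set c := 4 * |X| / Real.pi ^ 2 with hc
  have hc0 : 0 < c := by positivity
  have hptw : ∀ θ ∈ Set.Icc (-Real.pi) Real.pi, Real.sqrt |X| * ‖U θ * V' θ‖ ≤
      4 * (‖G θ‖ + ‖G' θ‖) + 8 * Real.sqrt |X| * B * (1 / (1 + c * (θ - 0) ^ 2)) := by
    intro θ hθ
    set v := |Real.sin (θ / 2)| with hv
    set d := ‖D θ‖ with hd
    have hv1 : v ≤ 1 := Real.abs_sin_le_one _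
    have hv0 : 0 ≤ v := abs_nonneg _
    have hd0 : 0 < d := by linarith [hD1 θ]
    have hcs : |Real.cos (θ / 2)| ≤ 1 := Real.abs_cos_le_one _
    have hGB : ‖G θ‖ ≤ B := norm_le_integral_circle hG hG' hθ
    have hdd : d ^ 2 = 1 + (4 * |X| * v ^ 2) ^ 2 := by
      rw [hd, hDn, hv, sq_abs, mul_pow, mul_pow, mul_pow (4 * |X|), mul_pow 4 |X|, sq_abs]
    have hr : Real.sqrt |X| * v ≤ d := by
      refine abs_le_of_sq_le_sq' ?_ hd0.le |>.2
      rw [mul_pow, Real.sq_sqrt hX'.le, hdd]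
      nlinarith [sq_nonneg (4 * |X| * v ^ 2 - 1), mul_nonneg hX'.le (sq_nonneg v)]
    have hV'n : ‖V' θ‖ ≤ (2 * ‖G θ‖ + 4 * ‖G' θ‖) / d + 16 * |X| * v * B / d ^ 2 := by
      simp only [hV']
      refine (norm_add_le _ _).trans (add_le_add ?_ ?_)
      · rw [norm_div]
        gcongr
        refine (norm_add_le _ _).trans (add_le_add ?_ ?_)
        · simp only [norm_mul, norm_neg, Complex.norm_real, Real.norm_eq_abs, Complex.norm_ofNat]
          have : 2 * |Real.sin (θ / 2)| ≤ 2 := by linarith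
          nlinarith [norm_nonneg (G θ)]
        · simp only [norm_mul, Complex.norm_real, Real.norm_eq_abs, Complex.norm_ofNat]
          nlinarith [norm_nonneg (G' θ)]
      · rw [norm_div, norm_pow]
        gcongr
        simp only [norm_mul, norm_pow, Complex.norm_real, Real.norm_eq_abs, Complex.norm_ofNat,
          Complex.norm_I, mul_one]
        have h2 : |Real.cos (θ / 2)| ^ 2 ≤ 1 := by
          rw [sq_abs]; exact Real.cos_sq_le_one _
        calc 16 * |X| * v * |Real.cos (θ / 2)| ^ 2 * ‖G θ‖ ≤ 16 * |X| * v * 1 * B := by gcongr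
          _ = _ := by ring
    have hUn : ‖U θ‖ = v := by
      simp only [hU, norm_mul, hen, Complex.norm_real, Real.norm_eq_abs, mul_one, hv]
    rw [norm_mul, hUn]
    have h8 : 16 * |X| * v ^ 2 / d ^ 2 ≤ 8 * (1 / (1 + c * (θ - 0) ^ 2)) := by
      have h9 : c * (θ - 0) ^ 2 ≤ 4 * |X| * v ^ 2 := by
        have := sq_le_sin_half hθ
        rw [← sq_abs (Real.sin (θ / 2))] at this
        calc c * (θ - 0) ^ 2 = 4 * |X| * (θ / Real.pi) ^ 2 := by rw [hc]; field_simp; ring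
          _ ≤ _ := by gcongr
      have h10 : 0 ≤ c * (θ - 0) ^ 2 := by positivity
      rw [mul_one_div, div_le_div_iff₀ (by positivity) (by positivity), hdd]
      nlinarith [sq_nonneg (4 * |X| * v ^ 2 - 1), mul_nonneg hX'.le (sq_nonneg v)]
    calc Real.sqrt |X| * (v * ‖V' θ‖)
        ≤ Real.sqrt |X| * (v * ((2 * ‖G θ‖ + 4 * ‖G' θ‖) / d + 16 * |X| * v * B / d ^ 2)) := by
          gcongr
      _ = (Real.sqrt |X| * v) / d * (2 * ‖G θ‖ + 4 * ‖G' θ‖)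
          + Real.sqrt |X| * B * (16 * |X| * v ^ 2 / d ^ 2) := by field_simp
      _ ≤ 1 * (4 * ‖G θ‖ + 4 * ‖G' θ‖)
          + Real.sqrt |X| * B * (8 * (1 / (1 + c * (θ - 0) ^ 2))) := by
          gcongr
          · rw [div_le_one hd0]; exact hr
          · norm_num
      _ = _ := by ring
  have hint : Real.sqrt |X| * ‖∫ θ in (-Real.pi)..Real.pi, U θ * V' θ‖ ≤
      ∫ θ in (-Real.pi)..Real.pi, Real.sqrt |X| * ‖U θ * V' θ‖ := by
    rw [intervalIntegral.integral_const_mul]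
    gcongr
    exact intervalIntegral.norm_integral_le_integral_norm hle
  have hlc : Continuous (fun s : ℝ => 1 / (1 + c * (s - 0) ^ 2)) := by
    refine continuous_const.div (by fun_prop) (fun s => ?_)
    positivity
  refine hint.trans ?_
  have hmono : ∫ θ in (-Real.pi)..Real.pi, Real.sqrt |X| * ‖U θ * V' θ‖ ≤
      ∫ θ in (-Real.pi)..Real.pi, (4 * (‖G θ‖ + ‖G' θ‖) +
        8 * Real.sqrt |X| * B * (1 / (1 + c * (θ - 0) ^ 2))) :=
    intervalIntegral.integral_mono_on (μ := volume) hle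
      ((continuous_const.mul (hUc.mul hV'c).norm).intervalIntegrable _ _)
      ((Continuous.add (f := fun θ => 4 * (‖G θ‖ + ‖G' θ‖))
        (g := fun θ => 8 * Real.sqrt |X| * B * (1 / (1 + c * (θ - 0) ^ 2)))
        (by fun_prop) (continuous_const.mul hlc)).intervalIntegrable _ _) hptw
  refine hmono.trans ?_
  rw [intervalIntegral.integral_add (f := fun θ => 4 * (‖G θ‖ + ‖G' θ‖))
    (g := fun θ => 8 * Real.sqrt |X| * B * (1 / (1 + c * (θ - 0) ^ 2)))
    (Continuous.intervalIntegrable (by fun_prop) _ _)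
    ((continuous_const.mul hlc).intervalIntegrable _ _),
    intervalIntegral.integral_const_mul, intervalIntegral.integral_const_mul, ← hB]
  have hL := lorentz_integral_le c hc0 0 (-Real.pi) Real.pi
  have hsc : Real.sqrt c = 2 * Real.sqrt |X| / Real.pi := by
    rw [hc, Real.sqrt_div (by positivity), Real.sqrt_sq Real.pi_pos.le,
      Real.sqrt_mul (by norm_num), show (4 : ℝ) = 2 ^ 2 by norm_num, Real.sqrt_sq (by norm_num)]
  have hsX : 0 < Real.sqrt |X| := Real.sqrt_pos.2 hX'
  have h11 : 8 * Real.sqrt |X| * B * ∫ θ in (-Real.pi)..Real.pi, 1 / (1 + c * (θ - 0) ^ 2)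
      ≤ 8 * Real.sqrt |X| * B * (Real.pi / Real.sqrt c) := by gcongr
  have h12 : 8 * Real.sqrt |X| * B * (Real.pi / Real.sqrt c) = 4 * Real.pi ^ 2 * B := by
    rw [hsc]; field_simp; ring
  have hpi2 : Real.pi ^ 2 ≤ 10 := by nlinarith [Real.pi_lt_d2, Real.pi_gt_three]
  nlinarith

/-! ### Oscillatory integrals in the radial variable -/

/-- Oscillatory integral with phase `Y s² - ts`, stationary at `s₀ = t/(2Y)`. The gain `1/|t|` is
uniform in `Y`: it uses the two bounds on the amplitude `a`, without and with the factor
`|Y|^{1/2} s`, together with the pointwise bounds `h5`, `h6` at the endpoint. -/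
lemma radial_osc (t Y T A : ℝ) (hY : Y ≠ 0) (hT : 0 ≤ T) {a a' : ℝ → ℂ} {M : ℝ → ℝ}
    (ha : ∀ s, HasDerivAt a (a' s) s) (ha' : Continuous a') (hM : Continuous M)
    (h1 : ∀ s, 0 ≤ s → ‖a s‖ ≤ M s)
    (h2 : ∀ s, 0 ≤ s → Real.sqrt |Y| * s * ‖a s‖ ≤ M s)
    (h3 : ∀ s, 0 ≤ s → s * ‖a' s‖ ≤ M s)
    (h4 : ∀ s, 0 ≤ s → Real.sqrt |Y| * s * (s * ‖a' s‖) ≤ M s)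
    (hA : ∫ s in (0 : ℝ)..T, s ^ 2 * M s ≤ A)
    (h5 : ∀ s, 0 ≤ s → s ^ 3 * ‖a s‖ ≤ A)
    (h6 : ∀ s, 0 ≤ s → s ^ 3 * (Real.sqrt |Y| * s * ‖a s‖) ≤ A) :
    |t| * ‖∫ s in (0 : ℝ)..T, Complex.exp (Complex.I * (Y * s ^ 2 - t * s : ℝ)) *
      ((s : ℂ) ^ 3 * a s)‖ ≤ 50 * A := by
  have hY' : 0 < |Y| := abs_pos.2 hY
  set y := Real.sqrt |Y| with hy
  have hy0 : 0 < y := Real.sqrt_pos.2 hY'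
  have hyy : y ^ 2 = |Y| := Real.sq_sqrt hY'.le
  set s0 := t / (2 * Y) with hs0
  have hts : t = 2 * Y * s0 := by rw [hs0]; field_simp
  have hac : Continuous a := continuous_iff_continuousAt.2 fun θ => (ha θ).continuousAt
  have hA0 : 0 ≤ A := by simpa using h5 0 le_rfl
  set D : ℝ → ℂ := fun s => 1 + 2 * Complex.I * Y * ((s - s0 : ℝ) : ℂ) ^ 2 with hD
  have hDn : ∀ s, ‖D s‖ ^ 2 = 1 + (2 * Y * (s - s0) ^ 2) ^ 2 := by
    intro s
    have : D s = ((1 : ℝ) : ℂ) + ((2 * Y * (s - s0) ^ 2 : ℝ) : ℂ) * Complex.I := by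
      simp only [hD]; push_cast; ring
    rw [this, ← Complex.normSq_eq_norm_sq, Complex.normSq_add_mul_I]
    ring
  have hD1 : ∀ s, 1 ≤ ‖D s‖ := by
    intro s
    nlinarith [hDn s, norm_nonneg (D s), sq_nonneg (2 * Y * (s - s0) ^ 2)]
  have hD0 : ∀ θ, D θ ≠ 0 := fun θ => norm_pos_iff.1 (by linarith [hD1 θ])
  set e : ℝ → ℂ := fun s => Complex.exp (Complex.I * (Y * s ^ 2 - t * s : ℝ)) with he
  have hen : ∀ s, ‖e s‖ = 1 := fun s => by
    simp only [he]; rw [mul_comm]; exact Complex.norm_exp_ofReal_mul_I _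
  have hede : ∀ s : ℝ, HasDerivAt e (e s * (Complex.I * ((2 * Y * (s - s0) : ℝ) : ℂ))) s := by
    intro s
    have := (((((hasDerivAt_id' s).pow 2).const_mul Y).sub
      ((hasDerivAt_id' s).const_mul t)).ofReal_comp.const_mul Complex.I).cexp
    refine this.congr_deriv ?_
    simp only [he]
    congr 3
    simp only [hts]
    push_cast
    ring
  have hsig : ∀ s : ℝ, HasDerivAt (fun s : ℝ => ((s - s0 : ℝ) : ℂ)) 1 s := fun s => by
    simpa using ((hasDerivAt_id' s).sub_const s0).ofReal_comp
  have hcub : ∀ s : ℝ, HasDerivAt (fun s : ℝ => (s : ℂ) ^ 3) (3 * (s : ℂ) ^ 2) s := fun s => by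
    refine (((hasDerivAt_id' s).ofReal_comp).pow 3).congr_deriv ?_
    push_cast
    ring
  set U : ℝ → ℂ := fun s => ((s - s0 : ℝ) : ℂ) * e s with hU
  set U' : ℝ → ℂ := fun s => D s * e s with hU'
  have hUd : ∀ s, HasDerivAt U (U' s) s := by
    intro s
    refine ((hsig s).mul (hede s)).congr_deriv ?_
    simp only [hU', hD]
    push_cast
    ring
  have hDd : ∀ s, HasDerivAt D (4 * Complex.I * Y * ((s - s0 : ℝ) : ℂ)) s := by
    intro s
    refine ((((hsig s).pow 2).const_mul (2 * Complex.I * Y)).const_add 1).congr_deriv ?_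
    push_cast
    ring
  set V : ℝ → ℂ := fun s => (s : ℂ) ^ 3 * a s / D s with hV
  set V' : ℝ → ℂ := fun s => (3 * (s : ℂ) ^ 2 * a s + (s : ℂ) ^ 3 * a' s) / D s
      - (s : ℂ) ^ 3 * a s * (4 * Complex.I * Y * ((s - s0 : ℝ) : ℂ)) / D s ^ 2 with hV'
  have hVd : ∀ s, HasDerivAt V (V' s) s := by
    intro s
    refine (((hcub s).mul (ha s)).div (hDd s) (hD0 s)).congr_deriv ?_
    simp only [hV', Pi.mul_apply]
    have := hD0 s
    field_simp
  have hec : Continuous e := continuous_iff_continuousAt.2 fun θ => (hede θ).continuousAt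
  have hDc : Continuous D := continuous_iff_continuousAt.2 fun θ => (hDd θ).continuousAt
  have hU'c : Continuous U' := by simp only [hU']; fun_prop
  have hV'c : Continuous V' := by
    simp only [hV']
    refine Continuous.sub (Continuous.div (by fun_prop) hDc hD0)
      (Continuous.div (by fun_prop) (hDc.pow 2) fun θ => pow_ne_zero 2 (hD0 θ))
  have hibp := intervalIntegral.integral_deriv_mul_eq_sub
    (a := 0) (b := T) (u := U) (v := V) (u' := U') (v' := V')
    (fun x _ => hUd x) (fun x _ => hVd x) (hU'c.intervalIntegrable _ _)
    (hV'c.intervalIntegrable _ _)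
  have hUc : Continuous U := continuous_iff_continuousAt.2 fun θ => (hUd θ).continuousAt
  have hVc : Continuous V := continuous_iff_continuousAt.2 fun θ => (hVd θ).continuousAt
  have hV0 : V 0 = 0 := by simp [hV]
  rw [hV0, intervalIntegral.integral_add (f := fun x => U' x * V x) (g := fun x => U x * V' x)
    ((hU'c.mul hVc).intervalIntegrable _ _)
    ((hUc.mul hV'c).intervalIntegrable _ _)] at hibp
  have hUV : ∀ s, U' s * V s = e s * ((s : ℂ) ^ 3 * a s) := by
    intro s
    have := hD0 s
    simp only [hU', hV]
    field_simp
  simp_rw [hUV] at hibp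
  have hEq : ∫ s in (0 : ℝ)..T, e s * ((s : ℂ) ^ 3 * a s)
      = U T * V T - ∫ s in (0 : ℝ)..T, U s * V' s := by
    linear_combination hibp
  rw [hEq]
  -- elementary consequences of `|t| ≤ 2|Y|(|s - s0| + s)` and `‖D‖² = 1 + 4Y²(s - s0)⁴`
  have hbase : ∀ s, 0 ≤ s → |t| * |s - s0| ≤ ‖D s‖ * (1 + y * s) ∧
      2 * |Y| * |s - s0| ^ 2 ≤ ‖D s‖ ∧ 2 * y * |s - s0| ≤ ‖D s‖ ∧
      |t| ≤ 2 * |Y| * (|s - s0| + s) ∧ 1 + |Y| * (s - s0) ^ 2 ≤ 2 * ‖D s‖ := by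
    intro s hs
    set σ := |s - s0| with hσ
    have hσ0 : 0 ≤ σ := abs_nonneg _
    have hd1 := hD1 s
    have hdd : ‖D s‖ ^ 2 = 1 + (2 * |Y| * σ ^ 2) ^ 2 := by
      rw [hDn, hσ, sq_abs, mul_pow, mul_pow, mul_pow (2 * |Y|), mul_pow 2 |Y|, sq_abs]
    have hq : 2 * |Y| * σ ^ 2 ≤ ‖D s‖ := by
      refine abs_le_of_sq_le_sq' ?_ (by linarith) |>.2
      rw [hdd]; linarith
    have hl : 2 * y * σ ≤ ‖D s‖ := by
      refine abs_le_of_sq_le_sq' ?_ (by linarith) |>.2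
      rw [hdd, ← hyy]; nlinarith [sq_nonneg (2 * y ^ 2 * σ ^ 2 - 1)]
    have ht : |t| ≤ 2 * |Y| * (σ + s) := by
      rw [hts, abs_mul, abs_mul, abs_two]
      gcongr
      calc |s0| = |s - (s - s0)| := by congr 1; ring
        _ ≤ |s| + |s - s0| := abs_sub _ _
        _ = _ := by rw [abs_of_nonneg hs]; ring
    refine ⟨?_, hq, hl, ht, ?_⟩
    · calc |t| * σ ≤ 2 * |Y| * (σ + s) * σ := by gcongr
        _ = 2 * |Y| * σ ^ 2 + (y * s) * (2 * y * σ) := by rw [← hyy]; ring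
        _ ≤ ‖D s‖ + (y * s) * ‖D s‖ := by gcongr
        _ = _ := by ring
    · rw [← sq_abs (s - s0)]
      have : 0 ≤ |Y| * σ ^ 2 := by positivity
      linarith
  have hUn : ∀ s, ‖U s‖ = |s - s0| := fun s => by
    simp only [hU, norm_mul, hen, Complex.norm_real, Real.norm_eq_abs, mul_one]
  have hbd : |t| * ‖U T * V T‖ ≤ 2 * A := by
    obtain ⟨hb1, -⟩ := hbase T hT
    have hDp : 0 < ‖D T‖ := by linarith [hD1 T]
    rw [norm_mul, hUn]
    simp only [hV, norm_div, norm_mul, norm_pow, Complex.norm_real, Real.norm_eq_abs,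
      abs_of_nonneg hT]
    calc |t| * (|T - s0| * (T ^ 3 * ‖a T‖ / ‖D T‖))
        = (|t| * |T - s0|) / ‖D T‖ * (T ^ 3 * ‖a T‖) := by ring
      _ ≤ (1 + y * T) * (T ^ 3 * ‖a T‖) := by
          gcongr
          rw [div_le_iff₀ hDp]; linarith
      _ = T ^ 3 * ‖a T‖ + T ^ 3 * (y * T * ‖a T‖) := by ring
      _ ≤ _ := by linarith [h5 T hT, h6 T hT]
  have hptw : ∀ s ∈ Set.Icc 0 T, |t| * ‖U s * V' s‖ ≤
      10 * (s ^ 2 * M s) + 8 * y * A * (1 / (1 + |Y| * (s - s0) ^ 2)) := by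
    rintro s ⟨hs, -⟩
    obtain ⟨hb1, hb2, hb3, hb4, hb5⟩ := hbase s hs
    have hDp : 0 < ‖D s‖ := by linarith [hD1 s]
    set d := ‖D s‖ with hd
    set σ := |s - s0| with hσ
    have hσ0 : 0 ≤ σ := abs_nonneg _
    have h1s := h1 s hs
    have h2s := h2 s hs
    have h3s := h3 s hs
    have h4s := h4 s hs
    have hV'n : ‖V' s‖ ≤ (3 * s ^ 2 * ‖a s‖ + s ^ 3 * ‖a' s‖) / d
        + s ^ 3 * ‖a s‖ * (4 * |Y| * σ) / d ^ 2 := by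
      simp only [hV']
      refine (norm_sub_le _ _).trans (add_le_add ?_ ?_)
      · rw [norm_div]
        gcongr
        refine (norm_add_le _ _).trans (le_of_eq ?_)
        simp [abs_of_nonneg hs]
      · rw [norm_div, norm_pow]
        refine le_of_eq ?_
        simp only [norm_mul, norm_pow, Complex.norm_real, Real.norm_eq_abs, Complex.norm_ofNat,
          Complex.norm_I, mul_one, abs_of_nonneg hs]
        rfl
    rw [norm_mul, hUn]
    have e1 : (|t| * σ) / d * (3 * s ^ 2 * ‖a s‖ + s ^ 3 * ‖a' s‖) ≤ 8 * (s ^ 2 * M s) := by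
      calc (|t| * σ) / d * (3 * s ^ 2 * ‖a s‖ + s ^ 3 * ‖a' s‖)
          ≤ (1 + y * s) * (3 * s ^ 2 * ‖a s‖ + s ^ 3 * ‖a' s‖) := by
            gcongr
            rw [div_le_iff₀ hDp]; linarith
        _ = 3 * (s ^ 2 * ‖a s‖) + s ^ 2 * (s * ‖a' s‖) + 3 * (s ^ 2 * (y * s * ‖a s‖))
            + s ^ 2 * (y * s * (s * ‖a' s‖)) := by ring
        _ ≤ 3 * (s ^ 2 * M s) + s ^ 2 * M s + 3 * (s ^ 2 * M s) + s ^ 2 * M s := by gcongr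
        _ = _ := by ring
    have e2 : |t| * (s ^ 3 * ‖a s‖) * (4 * |Y| * σ ^ 2) / d ^ 2 ≤
        2 * (s ^ 2 * M s) + 8 * y * A * (1 / (1 + |Y| * (s - s0) ^ 2)) := by
      calc |t| * (s ^ 3 * ‖a s‖) * (4 * |Y| * σ ^ 2) / d ^ 2
          ≤ (2 * |Y| * (σ + s)) * (s ^ 3 * ‖a s‖) * (2 * d) / d ^ 2 := by
            obtain ⟨k, hk⟩ : ∃ k, k = 4 * |Y| * σ ^ 2 := ⟨_, rfl⟩
            have hk2 : k ≤ 2 * d := by linarith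
            have hk0 : 0 ≤ k := by rw [hk]; positivity
            rw [← hk]
            gcongr
        _ = (2 * y * σ) / d * (2 * (s ^ 2 * (y * s * ‖a s‖)))
            + 4 * y * (s ^ 3 * (y * s * ‖a s‖)) / d := by
            rw [← hyy]; field_simp; ring
        _ ≤ 1 * (2 * (s ^ 2 * M s)) + 4 * y * A / d := by
            gcongr
            · rw [div_le_one hDp]; exact hb3
            · exact h6 s hs
        _ ≤ _ := by
            rw [one_mul]
            gcongr
            rw [mul_one_div, div_le_div_iff₀ hDp (by positivity)]
            have : 0 ≤ 4 * y * A := by positivity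
            nlinarith
    calc |t| * (σ * ‖V' s‖) ≤ |t| * (σ * ((3 * s ^ 2 * ‖a s‖ + s ^ 3 * ‖a' s‖) / d
        + s ^ 3 * ‖a s‖ * (4 * |Y| * σ) / d ^ 2)) := by gcongr
      _ = (|t| * σ) / d * (3 * s ^ 2 * ‖a s‖ + s ^ 3 * ‖a' s‖)
          + |t| * (s ^ 3 * ‖a s‖) * (4 * |Y| * σ ^ 2) / d ^ 2 := by ring
      _ ≤ _ := by linarith
  have hint : |t| * ‖∫ s in (0 : ℝ)..T, U s * V' s‖ ≤
      |t| * ∫ s in (0 : ℝ)..T, ‖U s * V' s‖ := by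
    gcongr
    exact intervalIntegral.norm_integral_le_integral_norm hT
  have hlc : Continuous (fun s : ℝ => 1 / (1 + |Y| * (s - s0) ^ 2)) := by
    refine continuous_const.div (by fun_prop) (fun s => ?_)
    positivity
  have hmono : ∫ s in (0 : ℝ)..T, |t| * ‖U s * V' s‖ ≤ ∫ s in (0 : ℝ)..T,
      (10 * (s ^ 2 * M s) + 8 * y * A * (1 / (1 + |Y| * (s - s0) ^ 2))) :=
    intervalIntegral.integral_mono_on (μ := volume) hT
    ((continuous_const.mul (hUc.mul hV'c).norm).intervalIntegrable _ _)
    ((Continuous.add (f := fun s => 10 * (s ^ 2 * M s))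
      (g := fun s => 8 * y * A * (1 / (1 + |Y| * (s - s0) ^ 2))) (by fun_prop)
      (continuous_const.mul hlc)).intervalIntegrable _ _) hptw
  rw [intervalIntegral.integral_add (f := fun s => 10 * (s ^ 2 * M s))
    (g := fun s => 8 * y * A * (1 / (1 + |Y| * (s - s0) ^ 2)))
    (Continuous.intervalIntegrable (by fun_prop) _ _)
    ((continuous_const.mul hlc).intervalIntegrable _ _),
    intervalIntegral.integral_const_mul, intervalIntegral.integral_const_mul,
    intervalIntegral.integral_const_mul] at hmono
  have hL := lorentz_integral_le |Y| hY' s0 0 T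
  have h11 : 8 * y * A * ∫ s in (0 : ℝ)..T, 1 / (1 + |Y| * (s - s0) ^ 2)
      ≤ 8 * y * A * (Real.pi / y) := by gcongr
  have h12 : 8 * y * A * (Real.pi / y) = 8 * Real.pi * A := by field_simp
  calc |t| * ‖U T * V T - ∫ s in (0 : ℝ)..T, U s * V' s‖
      ≤ |t| * (‖U T * V T‖ + ‖∫ s in (0 : ℝ)..T, U s * V' s‖) := by
        gcongr; exact norm_sub_le _ _
    _ ≤ 2 * A + (10 * A + 8 * Real.pi * A) := by
        rw [mul_add]
        refine add_le_add hbd (hint.trans (hmono.trans ?_))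
        refine add_le_add ?_ (h11.trans h12.le)
        gcongr
    _ ≤ _ := by nlinarith [Real.pi_lt_d2]

/-! ### Amplitudes and parameter integrals -/

/-- `angular_osc` combined with the trivial bound, for an amplitude carrying a smooth factor `p`. -/
lemma amp_bound {p p' : ℝ → ℝ} {K K' : ℝ → ℂ} {B : ℝ} (hp : ∀ θ, HasDerivAt p (p' θ) θ)
    (hp' : Continuous p') (hK : ∀ θ, HasDerivAt K (K' θ) θ) (hK' : Continuous K')
    (hB : ∀ θ, |p θ| ≤ B) (hB' : ∀ θ, |p' θ| ≤ B) (X : ℝ) :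
    (1 + Real.sqrt |X|) * ‖∫ θ in (-Real.pi)..Real.pi,
        Complex.exp (Complex.I * (X * (Real.cos θ - 1) : ℝ)) *
          (((1 + Real.cos θ) * p θ : ℝ) * K θ)‖
      ≤ 122 * B * ∫ θ in (-Real.pi)..Real.pi, (‖K θ‖ + ‖K' θ‖) := by
  have hle : -Real.pi ≤ Real.pi := by linarith [Real.pi_pos]
  have hKc : Continuous K := continuous_iff_continuousAt.2 fun θ => (hK θ).continuousAt
  have hpc : Continuous p := continuous_iff_continuousAt.2 fun θ => (hp θ).continuousAt
  have hB0 : 0 ≤ B := (abs_nonneg _).trans (hB 0)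
  have hG : ∀ θ, HasDerivAt (fun θ => (p θ : ℂ) * K θ) ((p' θ : ℂ) * K θ + (p θ : ℂ) * K' θ) θ :=
    fun θ => (hp θ).ofReal_comp.mul (hK θ)
  have hcongr : ∀ θ : ℝ, Complex.exp (Complex.I * (X * (Real.cos θ - 1) : ℝ)) *
      (((1 + Real.cos θ) * p θ : ℝ) * K θ) = Complex.exp (Complex.I * (X * (Real.cos θ - 1) : ℝ)) *
      ((1 + Real.cos θ : ℝ) * ((p θ : ℂ) * K θ)) := fun θ => by push_cast; ring
  have h1 := angular_osc hG (by fun_prop) X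
  simp_rw [← hcongr] at h1
  have h2 : ∫ θ in (-Real.pi)..Real.pi, (‖(p θ : ℂ) * K θ‖ +
      ‖(p' θ : ℂ) * K θ + (p θ : ℂ) * K' θ‖) ≤ ∫ θ in (-Real.pi)..Real.pi,
        2 * B * (‖K θ‖ + ‖K' θ‖) := by
    refine intervalIntegral.integral_mono_on hle (Continuous.intervalIntegrable (by fun_prop) _ _)
      (Continuous.intervalIntegrable (by fun_prop) _ _) fun θ _ => ?_
    have h3 := norm_add_le ((p' θ : ℂ) * K θ) ((p θ : ℂ) * K' θ)
    simp only [norm_mul, Complex.norm_real, Real.norm_eq_abs] at h3 ⊢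
    have := mul_le_mul_of_nonneg_right (hB θ) (norm_nonneg (K θ))
    have := mul_le_mul_of_nonneg_right (hB θ) (norm_nonneg (K' θ))
    have := mul_le_mul_of_nonneg_right (hB' θ) (norm_nonneg (K θ))
    have := mul_nonneg hB0 (norm_nonneg (K' θ))
    linarith
  have h4 : ‖∫ θ in (-Real.pi)..Real.pi, Complex.exp (Complex.I * (X * (Real.cos θ - 1) : ℝ)) *
      (((1 + Real.cos θ) * p θ : ℝ) * K θ)‖ ≤ ∫ θ in (-Real.pi)..Real.pi,
        2 * B * (‖K θ‖ + ‖K' θ‖) := by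
    refine intervalIntegral.norm_integral_le_of_norm_le hle
      (Filter.Eventually.of_forall fun θ _ => ?_) (Continuous.intervalIntegrable (by fun_prop) _ _)
    rw [norm_mul, mul_comm Complex.I, Complex.norm_exp_ofReal_mul_I, norm_mul, Complex.norm_real,
      Real.norm_eq_abs, one_mul, abs_mul]
    have h5 : |1 + Real.cos θ| ≤ 2 := by
      rw [abs_le]; constructor <;> linarith [Real.neg_one_le_cos θ, Real.cos_le_one θ]
    calc |1 + Real.cos θ| * |p θ| * ‖K θ‖ ≤ 2 * B * ‖K θ‖ := by gcongr; exact hB θ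
      _ ≤ _ := by gcongr; linarith [norm_nonneg (K' θ)]
  rw [intervalIntegral.integral_const_mul] at h2 h4
  rw [add_mul, one_mul]
  linarith

/-- Differentiation under an interval integral, for jointly continuous integrands. -/
lemma hasDerivAt_param {Φ Φs : ℝ → ℝ → ℂ} (a b : ℝ) (hΦ : Continuous Φ.uncurry)
    (hΦs : Continuous Φs.uncurry) (hd : ∀ s θ, HasDerivAt (fun s => Φ s θ) (Φs s θ) s) (s : ℝ) :
    HasDerivAt (fun s => ∫ θ in a..b, Φ s θ) (∫ θ in a..b, Φs s θ) s := by
  have hcpt : IsCompact (Metric.closedBall s 1 ×ˢ Set.uIcc a b) :=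
    (isCompact_closedBall s 1).prod isCompact_uIcc
  obtain ⟨C, hC⟩ := hcpt.exists_bound_of_continuousOn hΦs.continuousOn
  have h1 : ∀ s, Continuous (Φ s) := fun s => hΦ.comp (by fun_prop : Continuous fun θ => (s, θ))
  have h2 : ∀ s, Continuous (Φs s) := fun s => hΦs.comp (by fun_prop : Continuous fun θ => (s, θ))
  refine (intervalIntegral.hasDerivAt_integral_of_dominated_loc_of_deriv_le (bound := fun _ => C)
    (s := Metric.ball s 1) (Metric.ball_mem_nhds s one_pos)
    (Filter.Eventually.of_forall fun s => (h1 s).aestronglyMeasurable)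
    ((h1 s).intervalIntegrable _ _) ((h2 s).aestronglyMeasurable)
    (Filter.Eventually.of_forall fun θ hθ s' hs' => ?_) intervalIntegrable_const
    (Filter.Eventually.of_forall fun θ hθ s' hs' => hd s' θ)).2
  exact hC (s', θ) ⟨Metric.ball_subset_closedBall hs', Set.uIoc_subset_uIcc hθ⟩

/-! ### The combined angular and radial estimate -/

/-- Smooth angular weight concentrated away from `θ = π`: `cutoff θ + cutoff (θ + π) = 1`, and it
contains the factor `(1 + cos θ)²`, which vanishes at `θ = ±π`. -/
def cutoff (θ : ℝ) : ℝ := (1 + Real.cos θ) ^ 2 * (2 - Real.cos θ) / 4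

lemma cutoff_add (θ : ℝ) : cutoff θ + cutoff (θ + Real.pi) = 1 := by
  simp only [cutoff, Real.cos_add_pi]; ring

/-- The sum of `L¹(dθ)` norms of the angular and radial derivatives entering the
oscillatory estimate. -/
def circ (H Hθ Hθθ Hs Hsθ : ℝ → ℝ → ℂ) (s : ℝ) : ℝ :=
  ∫ θ in (-Real.pi)..Real.pi,
    (‖H s θ‖ + ‖Hθ s θ‖ + ‖Hθθ s θ‖ + s * ‖Hs s θ‖ + s * ‖Hsθ s θ‖)

/-- The fundamental theorem of calculus for `s³ K`, integrated over the circle. -/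
lemma cube_bound {K Ks : ℝ → ℝ → ℂ} (hK : Continuous K.uncurry) (hKs : Continuous Ks.uncurry)
    (hd : ∀ s θ, HasDerivAt (fun s => K s θ) (Ks s θ) s) {s : ℝ} (hs : 0 ≤ s) :
    s ^ 3 * ∫ θ in (-Real.pi)..Real.pi, ‖K s θ‖ ≤
      3 * ∫ σ in (0 : ℝ)..s, σ ^ 2 * ∫ θ in (-Real.pi)..Real.pi, (‖K σ θ‖ + σ * ‖Ks σ θ‖) := by
  have hle : -Real.pi ≤ Real.pi := by linarith [Real.pi_pos]
  have h2 : ∀ θ, Continuous (fun s => K s θ) := fun θ =>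
    hK.comp (by fun_prop : Continuous fun s => (s, θ))
  have h2' : ∀ θ, Continuous (fun s => Ks s θ) := fun θ =>
    hKs.comp (by fun_prop : Continuous fun s => (s, θ))
  have h3 : Continuous (fun p : ℝ × ℝ => K p.1 p.2) := hK
  have h3' : Continuous (fun p : ℝ × ℝ => Ks p.1 p.2) := hKs
  have h4 : Continuous (fun p : ℝ × ℝ => K p.2 p.1) := hK.comp continuous_swap
  have h4' : Continuous (fun p : ℝ × ℝ => Ks p.2 p.1) := hKs.comp continuous_swap
  have h5 : Continuous (K s) := hK.comp (by fun_prop : Continuous fun θ => (s, θ))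
  have hpt : ∀ θ, s ^ 3 * ‖K s θ‖ ≤ ∫ σ in (0 : ℝ)..s, 3 * (σ ^ 2 * (‖K σ θ‖ + σ * ‖Ks σ θ‖)) := by
    intro θ
    have hcub : ∀ s : ℝ, HasDerivAt (fun s : ℝ => (s : ℂ) ^ 3) (3 * (s : ℂ) ^ 2) s := fun s => by
      refine (((hasDerivAt_id' s).ofReal_comp).pow 3).congr_deriv ?_
      push_cast
      ring
    have h1 : ∀ σ : ℝ, HasDerivAt (fun σ : ℝ => (σ : ℂ) ^ 3 * K σ θ)
        (3 * (σ : ℂ) ^ 2 * K σ θ + (σ : ℂ) ^ 3 * Ks σ θ) σ := fun σ => (hcub σ).mul (hd σ θ)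
    have hF := intervalIntegral.integral_eq_sub_of_hasDerivAt (a := 0) (b := s)
      (fun σ _ => h1 σ) (Continuous.intervalIntegrable (by fun_prop) _ _)
    have h6 : s ^ 3 * ‖K s θ‖ = ‖∫ σ in (0 : ℝ)..s, (3 * (σ : ℂ) ^ 2 * K σ θ + (σ : ℂ) ^ 3 * Ks σ θ)‖ := by
      rw [hF]; simp [abs_of_nonneg hs]
    rw [h6]
    refine intervalIntegral.norm_integral_le_of_norm_le hs
      (Filter.Eventually.of_forall fun σ hσ => ?_) (Continuous.intervalIntegrable (by fun_prop) _ _)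
    have hσ0 : 0 ≤ σ := hσ.1.le
    refine (norm_add_le _ _).trans ?_
    simp only [norm_mul, norm_pow, Complex.norm_real, Real.norm_eq_abs, Complex.norm_ofNat,
      abs_of_nonneg hσ0]
    have : 0 ≤ σ ^ 3 * ‖Ks σ θ‖ := by positivity
    nlinarith
  rw [← intervalIntegral.integral_const_mul]
  calc ∫ θ in (-Real.pi)..Real.pi, s ^ 3 * ‖K s θ‖
      ≤ ∫ θ in (-Real.pi)..Real.pi, ∫ σ in (0 : ℝ)..s, 3 * (σ ^ 2 * (‖K σ θ‖ + σ * ‖Ks σ θ‖)) := by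
        refine intervalIntegral.integral_mono_on hle
          (Continuous.intervalIntegrable (by fun_prop) _ _)
          (Continuous.intervalIntegrable ?_ _ _) fun θ _ => hpt θ
        refine intervalIntegral.continuous_parametric_intervalIntegral_of_continuous' ?_ _ _
        simp only [Function.uncurry_def]
        fun_prop
    _ = ∫ σ in (0 : ℝ)..s, ∫ θ in (-Real.pi)..Real.pi, 3 * (σ ^ 2 * (‖K σ θ‖ + σ * ‖Ks σ θ‖)) := by
        refine intervalIntegral_intervalIntegral_swap ?_
        refine IntegrableOn.mono_set (ContinuousOn.integrableOn_compact
          (isCompact_uIcc.prod isCompact_uIcc) (Continuous.continuousOn ?_))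
          (Set.prod_mono Set.uIoc_subset_uIcc Set.uIoc_subset_uIcc)
        simp only [Function.uncurry_def]
        fun_prop
    _ = _ := by
        rw [← intervalIntegral.integral_const_mul]
        refine intervalIntegral.integral_congr fun σ _ => ?_
        simp only [intervalIntegral.integral_const_mul]

/-- The angular and radial estimates combined: the angular integral satisfies the hypotheses of
`radial_osc`, with `M` a multiple of `circ`. -/
lemma J_bound (t Y A : ℝ) (hY : Y ≠ 0) {H Hθ Hθθ Hs Hsθ : ℝ → ℝ → ℂ}
    (cH : Continuous H.uncurry) (cHθ : Continuous Hθ.uncurry) (cHθθ : Continuous Hθθ.uncurry)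
    (cHs : Continuous Hs.uncurry) (cHsθ : Continuous Hsθ.uncurry)
    (dθ : ∀ s θ, HasDerivAt (H s) (Hθ s θ) θ) (dθθ : ∀ s θ, HasDerivAt (Hθ s) (Hθθ s θ) θ)
    (ds : ∀ s θ, HasDerivAt (fun s => H s θ) (Hs s θ) s)
    (dsθ : ∀ s θ, HasDerivAt (Hs s) (Hsθ s θ) θ)
    (dθs : ∀ s θ, HasDerivAt (fun s => Hθ s θ) (Hsθ s θ) s)
    (hA : ∀ T, 0 ≤ T → ∫ s in (0 : ℝ)..T, s ^ 2 * circ H Hθ Hθθ Hs Hsθ s ≤ A)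
    {T : ℝ} (hT : 0 ≤ T) :
    |t| * ‖∫ s in (0 : ℝ)..T, Complex.exp (Complex.I * (Y * s ^ 2 - t * s : ℝ)) *
      ((s : ℂ) ^ 3 * ∫ θ in (-Real.pi)..Real.pi,
        Complex.exp (Complex.I * (Y * s ^ 2 * (Real.cos θ - 1) : ℝ)) * (cutoff θ * H s θ))‖
      ≤ 200000 * A := by
  have hle : -Real.pi ≤ Real.pi := by linarith [Real.pi_pos]
  have c1 : Continuous (fun p : ℝ × ℝ => H p.1 p.2) := cH
  have c2 : Continuous (fun p : ℝ × ℝ => Hθ p.1 p.2) := cHθ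
  have c3 : Continuous (fun p : ℝ × ℝ => Hθθ p.1 p.2) := cHθθ
  have c4 : Continuous (fun p : ℝ × ℝ => Hs p.1 p.2) := cHs
  have c5 : Continuous (fun p : ℝ × ℝ => Hsθ p.1 p.2) := cHsθ
  have g1 : ∀ s, Continuous (H s) := fun s => cH.comp (by fun_prop : Continuous fun θ => (s, θ))
  have g2 : ∀ s, Continuous (Hθ s) := fun s => cHθ.comp (by fun_prop : Continuous fun θ => (s, θ))
  have g3 : ∀ s, Continuous (Hθθ s) := fun s => cHθθ.comp (by fun_prop : Continuous fun θ => (s, θ))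
  have g4 : ∀ s, Continuous (Hs s) := fun s => cHs.comp (by fun_prop : Continuous fun θ => (s, θ))
  have g5 : ∀ s, Continuous (Hsθ s) := fun s => cHsθ.comp (by fun_prop : Continuous fun θ => (s, θ))
  have hcut : Continuous cutoff := by unfold cutoff; fun_prop
  set m := circ H Hθ Hθθ Hs Hsθ with hm
  have hmc : Continuous m := by
    refine intervalIntegral.continuous_parametric_intervalIntegral_of_continuous' ?_ _ _
    simp only [Function.uncurry_def]
    fun_prop
  -- the trigonometric factors left after extracting `1 + cos θ`
  set p1 : ℝ → ℝ := fun θ => 5 * Real.cos θ - 3 * Real.cos θ ^ 2 - 1 with hp1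
  set p2 : ℝ → ℝ := fun θ => Real.sin θ * (2 - Real.cos θ) with hp2
  set p3 : ℝ → ℝ := fun θ => (1 + Real.cos θ) * (2 - Real.cos θ) / 4 with hp3
  have dp1 : ∀ θ, HasDerivAt p1 (-5 * Real.sin θ + 6 * Real.cos θ * Real.sin θ) θ := fun θ => by
    refine ((((Real.hasDerivAt_cos θ).const_mul 5).sub
      (((Real.hasDerivAt_cos θ).pow 2).const_mul 3)).sub_const 1).congr_deriv ?_
    push_cast; ring
  have dp2 : ∀ θ, HasDerivAt p2 (Real.cos θ * (2 - Real.cos θ) + Real.sin θ ^ 2) θ := fun θ => by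
    refine ((Real.hasDerivAt_sin θ).mul ((Real.hasDerivAt_cos θ).const_sub 2)).congr_deriv ?_
    ring
  have dp3 : ∀ θ, HasDerivAt p3 ((-Real.sin θ * (2 - Real.cos θ)
      + (1 + Real.cos θ) * Real.sin θ) / 4) θ := fun θ => by
    refine ((((Real.hasDerivAt_cos θ).const_add 1).mul
      ((Real.hasDerivAt_cos θ).const_sub 2)).div_const 4).congr_deriv ?_
    ring
  have tr : ∀ θ, |Real.cos θ| ≤ 1 ∧ |Real.sin θ| ≤ 1 := fun θ =>
    ⟨Real.abs_cos_le_one θ, Real.abs_sin_le_one θ⟩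
  have B1 : ∀ θ, |p1 θ| ≤ 11 ∧ |-5 * Real.sin θ + 6 * Real.cos θ * Real.sin θ| ≤ 11 := fun θ => by
    obtain ⟨hc, hs⟩ := tr θ
    obtain ⟨hc1, hc2⟩ := abs_le.1 hc
    obtain ⟨hs1, hs2⟩ := abs_le.1 hs
    constructor
    · simp only [hp1]; rw [abs_le]; constructor <;> nlinarith
    · rw [abs_le]; constructor <;> nlinarith
  have B2 : ∀ θ, |p2 θ| ≤ 4 ∧ |Real.cos θ * (2 - Real.cos θ) + Real.sin θ ^ 2| ≤ 4 := fun θ => by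
    obtain ⟨hc, hs⟩ := tr θ
    obtain ⟨hc1, hc2⟩ := abs_le.1 hc
    obtain ⟨hs1, hs2⟩ := abs_le.1 hs
    constructor
    · simp only [hp2]; rw [abs_le]; constructor <;> nlinarith
    · rw [abs_le]; constructor <;> nlinarith
  have B3 : ∀ θ, |p3 θ| ≤ 2 ∧ |(-Real.sin θ * (2 - Real.cos θ)
      + (1 + Real.cos θ) * Real.sin θ) / 4| ≤ 2 := fun θ => by
    obtain ⟨hc, hs⟩ := tr θ
    obtain ⟨hc1, hc2⟩ := abs_le.1 hc
    obtain ⟨hs1, hs2⟩ := abs_le.1 hs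
    constructor
    · simp only [hp3]; rw [abs_le]; constructor <;> nlinarith
    · rw [abs_le]; constructor <;> nlinarith
  set e : ℝ → ℝ → ℂ := fun X θ => Complex.exp (Complex.I * (X * (Real.cos θ - 1) : ℝ)) with he
  have ce : Continuous (fun p : ℝ × ℝ => e p.1 p.2) := by simp only [he]; fun_prop
  set a : ℝ → ℂ := fun s => ∫ θ in (-Real.pi)..Real.pi, e (Y * s ^ 2) θ * (cutoff θ * H s θ) with ha
  set Φs : ℝ → ℝ → ℂ := fun s θ => e (Y * s ^ 2) θ *
    (Complex.I * (2 * Y * s * (Real.cos θ - 1) : ℝ)) * (cutoff θ * H s θ)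
    + e (Y * s ^ 2) θ * (cutoff θ * Hs s θ) with hΦs
  have cΦs : Continuous Φs.uncurry := by
    simp only [Function.uncurry_def, hΦs]
    fun_prop
  have dΦ : ∀ s θ, HasDerivAt (fun s => e (Y * s ^ 2) θ * (cutoff θ * H s θ)) (Φs s θ) s := by
    intro s θ
    have h1 : HasDerivAt (fun s : ℝ => e (Y * s ^ 2) θ) (e (Y * s ^ 2) θ *
        (Complex.I * (2 * Y * s * (Real.cos θ - 1) : ℝ))) s := by
      refine ((((((hasDerivAt_id' s).pow 2).const_mul Y).mul_const
        (Real.cos θ - 1)).ofReal_comp).const_mul Complex.I).cexp.congr_deriv ?_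
      simp only [he, Pi.pow_apply]
      push_cast
      ring
    exact h1.mul ((ds s θ).const_mul _)
  set a' : ℝ → ℂ := fun s => ∫ θ in (-Real.pi)..Real.pi, Φs s θ with ha'
  have hda : ∀ s, HasDerivAt a (a' s) s := fun s => by
    refine hasDerivAt_param _ _ ?_ cΦs dΦ s
    simp only [Function.uncurry_def]
    fun_prop
  have hca' : Continuous a' :=
    intervalIntegral.continuous_parametric_intervalIntegral_of_continuous' cΦs _ _
  -- integration by parts in `θ` removes the factor `Y s²` produced by `∂_s`
  have hsa' : ∀ s : ℝ, (s : ℂ) * a' s =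
      -(1 / 2) * (∫ θ in (-Real.pi)..Real.pi, e (Y * s ^ 2) θ *
        (((1 + Real.cos θ) * p1 θ : ℝ) * H s θ))
      - (1 / 2) * (∫ θ in (-Real.pi)..Real.pi, e (Y * s ^ 2) θ *
        (((1 + Real.cos θ) * p2 θ : ℝ) * Hθ s θ))
      + ∫ θ in (-Real.pi)..Real.pi, e (Y * s ^ 2) θ *
        (((1 + Real.cos θ) * p3 θ : ℝ) * (s * Hs s θ)) := by
    intro s
    set X := Y * s ^ 2 with hX
    have gce : Continuous (e X) := by simp only [he]; fun_prop
    have hp1c : Continuous p1 := by simp only [hp1]; fun_prop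
    have hp2c : Continuous p2 := by simp only [hp2]; fun_prop
    have hp3c : Continuous p3 := by simp only [hp3]; fun_prop
    have hdE : ∀ θ, HasDerivAt (e X) (e X θ * (-Complex.I * (X * Real.sin θ : ℝ))) θ := by
      intro θ
      refine (((((Real.hasDerivAt_cos θ).sub_const 1).const_mul X).ofReal_comp).const_mul
        Complex.I).cexp.congr_deriv ?_
      simp only [he]
      push_cast
      ring
    have hdq : ∀ θ, HasDerivAt (fun θ => (1 + Real.cos θ) * p2 θ) ((1 + Real.cos θ) * p1 θ) θ := by
      intro θ
      refine (((Real.hasDerivAt_cos θ).const_add 1).mul (dp2 θ)).congr_deriv ?_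
      simp only [hp1, hp2]
      have := Real.sin_sq_add_cos_sq θ
      have h7 : Real.sin θ ^ 2 = 1 - Real.cos θ ^ 2 := by linarith
      linear_combination (2 * Real.cos θ - 1) * h7
    have hdV : ∀ θ, HasDerivAt (fun θ => (((1 + Real.cos θ) * p2 θ : ℝ) : ℂ) * H s θ)
        ((((1 + Real.cos θ) * p1 θ : ℝ) : ℂ) * H s θ +
          (((1 + Real.cos θ) * p2 θ : ℝ) : ℂ) * Hθ s θ) θ :=
      fun θ => (hdq θ).ofReal_comp.mul (dθ s θ)
    have hibp := intervalIntegral.integral_deriv_mul_eq_sub (a := -Real.pi) (b := Real.pi)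
      (fun x _ => hdE x) (fun x _ => hdV x) (Continuous.intervalIntegrable (by fun_prop) _ _)
      (Continuous.intervalIntegrable (by fun_prop) _ _)
    have hb : ((1 + Real.cos Real.pi) * p2 Real.pi : ℝ) = 0 := by simp
    have hb' : ((1 + Real.cos (-Real.pi)) * p2 (-Real.pi) : ℝ) = 0 := by simp
    rw [hb, hb', Complex.ofReal_zero, zero_mul, zero_mul, mul_zero, mul_zero, sub_zero] at hibp
    have h8 : ∀ θ, (s : ℂ) * Φs s θ =
        (1 / 2) * (e X θ * (-Complex.I * (X * Real.sin θ : ℝ)) *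
          ((((1 + Real.cos θ) * p2 θ : ℝ) : ℂ) * H s θ) + e X θ *
          ((((1 + Real.cos θ) * p1 θ : ℝ) : ℂ) * H s θ +
          (((1 + Real.cos θ) * p2 θ : ℝ) : ℂ) * Hθ s θ))
        - (1 / 2) * (e X θ * (((1 + Real.cos θ) * p1 θ : ℝ) * H s θ))
        - (1 / 2) * (e X θ * (((1 + Real.cos θ) * p2 θ : ℝ) * Hθ s θ))
        + e X θ * (((1 + Real.cos θ) * p3 θ : ℝ) * (s * Hs s θ)) := by
      intro θ
      have h7 : ((Real.sin θ : ℝ) : ℂ) ^ 2 = 1 - ((Real.cos θ : ℝ) : ℂ) ^ 2 := by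
        rw [← Complex.ofReal_pow, ← Complex.ofReal_pow, Real.sin_sq]; push_cast; ring
      simp only [hΦs, hp2, hp3, cutoff, hX]
      push_cast at h7 ⊢
      linear_combination (Complex.I * e (Y * s ^ 2) θ * Y * s ^ 2 * H s θ *
        (1 + Complex.cos θ) * (2 - Complex.cos θ) / 2) * h7
    have h9 : (s : ℂ) * a' s = ∫ θ in (-Real.pi)..Real.pi, (s : ℂ) * Φs s θ := by
      rw [intervalIntegral.integral_const_mul]
    rw [h9]
    simp_rw [h8]
    rw [intervalIntegral.integral_add (Continuous.intervalIntegrable (by fun_prop) _ _)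
      (Continuous.intervalIntegrable (by fun_prop) _ _),
      intervalIntegral.integral_sub (Continuous.intervalIntegrable (by fun_prop) _ _)
      (Continuous.intervalIntegrable (by fun_prop) _ _),
      intervalIntegral.integral_sub (Continuous.intervalIntegrable (by fun_prop) _ _)
      (Continuous.intervalIntegrable (by fun_prop) _ _),
      intervalIntegral.integral_const_mul, intervalIntegral.integral_const_mul,
      intervalIntegral.integral_const_mul, hibp]
    ring
  have hsqrt : ∀ s, 0 ≤ s → Real.sqrt |Y * s ^ 2| = Real.sqrt |Y| * s := fun s hs => by
    rw [abs_mul, abs_of_nonneg (sq_nonneg s), Real.sqrt_mul (abs_nonneg _), Real.sqrt_sq hs]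
  have hab : ∀ s, 0 ≤ s → (1 + Real.sqrt |Y| * s) * ‖a s‖ ≤
      244 * ∫ θ in (-Real.pi)..Real.pi, (‖H s θ‖ + ‖Hθ s θ‖) := fun s hs => by
    have := amp_bound dp3 (by fun_prop) (dθ s) (g2 s) (fun θ => (B3 θ).1) (fun θ => (B3 θ).2)
      (Y * s ^ 2)
    rw [hsqrt s hs] at this
    convert this using 1
    · congr 2
      simp only [ha]
      refine intervalIntegral.integral_congr fun θ _ => ?_
      simp only [cutoff, hp3, he]
      push_cast
      ring
    · norm_num
  have hm0 : ∀ s, 0 ≤ s → ∫ θ in (-Real.pi)..Real.pi, (‖H s θ‖ + ‖Hθ s θ‖) ≤ m s := fun s hs => by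
    refine intervalIntegral.integral_mono_on hle (Continuous.intervalIntegrable (by fun_prop) _ _)
      (Continuous.intervalIntegrable (by fun_prop) _ _) fun θ _ => ?_
    have h1 : 0 ≤ s * ‖Hs s θ‖ := by positivity
    have h2 : 0 ≤ s * ‖Hsθ s θ‖ := by positivity
    linarith [norm_nonneg (Hθθ s θ)]
  have hm1 : ∀ s, 0 ≤ s → ∫ θ in (-Real.pi)..Real.pi, (‖Hθ s θ‖ + ‖Hθθ s θ‖) ≤ m s := fun s hs => by
    refine intervalIntegral.integral_mono_on hle (Continuous.intervalIntegrable (by fun_prop) _ _)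
      (Continuous.intervalIntegrable (by fun_prop) _ _) fun θ _ => ?_
    have h1 : 0 ≤ s * ‖Hs s θ‖ := by positivity
    have h2 : 0 ≤ s * ‖Hsθ s θ‖ := by positivity
    linarith [norm_nonneg (H s θ)]
  have hm2 : ∀ s, 0 ≤ s → ∫ θ in (-Real.pi)..Real.pi, (‖s * Hs s θ‖ + ‖s * Hsθ s θ‖) ≤ m s :=
      fun s hs => by
    refine intervalIntegral.integral_mono_on hle (Continuous.intervalIntegrable (by fun_prop) _ _)
      (Continuous.intervalIntegrable (by fun_prop) _ _) fun θ _ => ?_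
    simp only [norm_mul, Complex.norm_real, Real.norm_eq_abs, abs_of_nonneg hs]
    linarith [norm_nonneg (H s θ), norm_nonneg (Hθ s θ), norm_nonneg (Hθθ s θ)]
  have hmn : ∀ s, 0 ≤ s → 0 ≤ m s := fun s hs => (intervalIntegral.integral_nonneg hle
    fun _ _ => by positivity).trans (hm0 s hs)
  have hab' : ∀ s, 0 ≤ s → (1 + Real.sqrt |Y| * s) * (s * ‖a' s‖) ≤ 1220 * m s := fun s hs => by
    have e1 := amp_bound dp1 (by fun_prop) (dθ s) (g2 s) (fun θ => (B1 θ).1) (fun θ => (B1 θ).2)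
      (Y * s ^ 2)
    have e2 := amp_bound dp2 (by fun_prop) (dθθ s) (g3 s) (fun θ => (B2 θ).1) (fun θ => (B2 θ).2)
      (Y * s ^ 2)
    have e3 := amp_bound dp3 (by fun_prop) (fun θ => (dsθ s θ).const_mul (s : ℂ)) (by fun_prop)
      (fun θ => (B3 θ).1) (fun θ => (B3 θ).2) (Y * s ^ 2)
    rw [hsqrt s hs] at e1 e2 e3
    have h10 : s * ‖a' s‖ = ‖(s : ℂ) * a' s‖ := by simp [abs_of_nonneg hs]
    rw [h10, hsa' s]
    refine (mul_le_mul_of_nonneg_left ((norm_add_le _ _).trans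
      (add_le_add_left (norm_sub_le _ _) _)) (by positivity)).trans ?_
    rw [norm_mul, norm_mul]
    have : ‖(-(1 / 2) : ℂ)‖ = 1 / 2 := by norm_num
    rw [this]
    have : ‖((1 / 2) : ℂ)‖ = 1 / 2 := by norm_num
    rw [this]
    have key : ∀ w N1 N2 N3 I1 I2 I3 μ : ℝ, w * N1 ≤ 122 * 11 * I1 → w * N2 ≤ 122 * 4 * I2 →
        w * N3 ≤ 122 * 2 * I3 → I1 ≤ μ → I2 ≤ μ → I3 ≤ μ → 0 ≤ μ →
        w * (1 / 2 * N1 + 1 / 2 * N2 + N3) ≤ 1220 * μ := by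
      intro w N1 N2 N3 I1 I2 I3 μ k1 k2 k3 k4 k5 k6 k7
      rw [mul_add, mul_add]
      linarith
    exact key _ _ _ _ _ _ _ _ e1 e2 e3 (hm0 s hs) (hm1 s hs) (hm2 s hs) (hmn s hs)
  have hcube : ∀ s, 0 ≤ s → s ^ 3 * ∫ θ in (-Real.pi)..Real.pi, (‖H s θ‖ + ‖Hθ s θ‖) ≤ 3 * A := by
    intro s hs
    have k1 := cube_bound cH cHs ds hs
    have k2 := cube_bound cHθ cHsθ dθs hs
    rw [intervalIntegral.integral_add (Continuous.intervalIntegrable (by fun_prop) _ _)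
      (Continuous.intervalIntegrable (by fun_prop) _ _), mul_add]
    refine (add_le_add k1 k2).trans ?_
    rw [← mul_add]
    refine mul_le_mul_of_nonneg_left (le_trans ?_ (hA s hs)) (by norm_num)
    have cc1 : Continuous fun σ => ∫ θ in (-Real.pi)..Real.pi, (‖H σ θ‖ + σ * ‖Hs σ θ‖) := by
      refine intervalIntegral.continuous_parametric_intervalIntegral_of_continuous' ?_ _ _
      simp only [Function.uncurry_def]
      fun_prop
    have cc2 : Continuous fun σ => ∫ θ in (-Real.pi)..Real.pi, (‖Hθ σ θ‖ + σ * ‖Hsθ σ θ‖) := by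
      refine intervalIntegral.continuous_parametric_intervalIntegral_of_continuous' ?_ _ _
      simp only [Function.uncurry_def]
      fun_prop
    rw [← intervalIntegral.integral_add (Continuous.intervalIntegrable (by fun_prop) _ _)
      (Continuous.intervalIntegrable (by fun_prop) _ _)]
    refine intervalIntegral.integral_mono_on hs (Continuous.intervalIntegrable (by fun_prop) _ _)
      (Continuous.intervalIntegrable (by fun_prop) _ _) fun σ hσ => ?_
    rw [← mul_add]
    refine mul_le_mul_of_nonneg_left ?_ (sq_nonneg σ)
    rw [← intervalIntegral.integral_add (Continuous.intervalIntegrable (by fun_prop) _ _)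
      (Continuous.intervalIntegrable (by fun_prop) _ _)]
    refine intervalIntegral.integral_mono_on hle (Continuous.intervalIntegrable (by fun_prop) _ _)
      (Continuous.intervalIntegrable (by fun_prop) _ _) fun θ _ => ?_
    linarith [norm_nonneg (Hθθ σ θ)]
  have hsy : ∀ s, 0 ≤ s → 0 ≤ Real.sqrt |Y| * s := fun s hs => by positivity
  have hfin := radial_osc t Y T (3660 * A) hY hT (M := fun s => 1220 * m s) hda hca' (by fun_prop)
    (fun s hs => by
      nlinarith [hab s hs, hm0 s hs, hsy s hs, norm_nonneg (a s), hmn s hs,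
        mul_nonneg (hsy s hs) (norm_nonneg (a s))])
    (fun s hs => by
      nlinarith [hab s hs, hm0 s hs, hsy s hs, norm_nonneg (a s), hmn s hs,
        mul_nonneg (hsy s hs) (norm_nonneg (a s))])
    (fun s hs => by
      have h0 : 0 ≤ s * ‖a' s‖ := by positivity
      nlinarith [hab' s hs, mul_nonneg (hsy s hs) h0])
    (fun s hs => by
      have h0 : 0 ≤ s * ‖a' s‖ := by positivity
      nlinarith [hab' s hs, mul_nonneg (hsy s hs) h0])
    (by
      have h1 : ∀ s, s ^ 2 * (1220 * m s) = 1220 * (s ^ 2 * m s) := fun s => by ring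
      have h0 : 0 ≤ A := by simpa using hA 0 le_rfl
      simp_rw [h1]
      rw [intervalIntegral.integral_const_mul]
      linarith [hA T hT])
    (fun s hs => by
      have h1 := mul_le_mul_of_nonneg_left (hab s hs) (by positivity : 0 ≤ s ^ 3)
      have h2 : 0 ≤ s ^ 3 * (Real.sqrt |Y| * s * ‖a s‖) := by positivity
      have h0 : 0 ≤ A := by simpa using hA 0 le_rfl
      nlinarith [hcube s hs])
    (fun s hs => by
      have h1 := mul_le_mul_of_nonneg_left (hab s hs) (by positivity : 0 ≤ s ^ 3)
      have h2 : 0 ≤ s ^ 3 * ‖a s‖ := by positivity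
      have h0 : 0 ≤ A := by simpa using hA 0 le_rfl
      nlinarith [hcube s hs])
  have h0 : 0 ≤ A := by simpa using hA 0 le_rfl
  refine hfin.trans (by linarith)

/-! ### Squared-radius polar coordinates on the plane -/

/-- The unit vector at angle `θ`. -/
def eθ (θ : ℝ) : E2 := Real.cos θ • EuclideanSpace.single (0 : Fin 2) (1 : ℝ) +
  Real.sin θ • EuclideanSpace.single (1 : Fin 2) (1 : ℝ)

/-- Polar coordinates with squared radius, `(s, θ) ↦ s² (cos θ, sin θ)`. -/
def sqPolar (p : ℝ × ℝ) : ℝ × ℝ := (p.1 ^ 2 * Real.cos p.2, p.1 ^ 2 * Real.sin p.2)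

/-- The derivative of `sqPolar`. -/
def sqPolarD (p : ℝ × ℝ) : ℝ × ℝ →L[ℝ] ℝ × ℝ :=
  (Matrix.toLin (.finTwoProd ℝ) (.finTwoProd ℝ)
    !![2 * p.1 * Real.cos p.2, -p.1 ^ 2 * Real.sin p.2;
      2 * p.1 * Real.sin p.2, p.1 ^ 2 * Real.cos p.2]).toContinuousLinearMap

lemma hasFDerivAt_sqPolar (p : ℝ × ℝ) : HasFDerivAt sqPolar (sqPolarD p) p := by
  unfold sqPolarD
  rw [Matrix.toLin_finTwoProd_toContinuousLinearMap]
  have h1 := ((hasFDerivAt_fst (𝕜 := ℝ) (p := p)).pow 2).mul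
    ((Real.hasDerivAt_cos p.2).comp_hasFDerivAt p hasFDerivAt_snd)
  have h2 := ((hasFDerivAt_fst (𝕜 := ℝ) (p := p)).pow 2).mul
    ((Real.hasDerivAt_sin p.2).comp_hasFDerivAt p hasFDerivAt_snd)
  refine (h1.prodMk h2).congr_fderiv ?_
  ext <;> simp <;> ring

lemma det_sqPolarD (p : ℝ × ℝ) : (sqPolarD p).det = 2 * p.1 ^ 3 := by
  unfold sqPolarD
  simp only [LinearMap.det_toContinuousLinearMap, LinearMap.det_toLin, Matrix.det_fin_two_of]
  linear_combination 2 * p.1 ^ 3 * Real.sin_sq_add_cos_sq p.2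

lemma sqPolar_injOn : Set.InjOn sqPolar polarCoord.target := by
  intro p hp q hq h
  have hp' : ((p.1 ^ 2, p.2) : ℝ × ℝ) ∈ polarCoord.target :=
    ⟨Set.mem_Ioi.2 (pow_pos (Set.mem_Ioi.1 hp.1) 2), hp.2⟩
  have hq' : ((q.1 ^ 2, q.2) : ℝ × ℝ) ∈ polarCoord.target :=
    ⟨Set.mem_Ioi.2 (pow_pos (Set.mem_Ioi.1 hq.1) 2), hq.2⟩
  have := polarCoord.symm.injOn hp' hq' h
  rw [Prod.mk.injEq] at this
  refine Prod.ext ?_ this.2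
  exact (pow_left_inj₀ (le_of_lt hp.1) (le_of_lt hq.1) two_ne_zero).1 this.1

lemma sqPolar_image : sqPolar '' polarCoord.target = polarCoord.source := by
  have h := polarCoord.symm.image_source_eq_target
  simp only [OpenPartialHomeomorph.symm_source, OpenPartialHomeomorph.symm_target] at h
  rw [← h]
  ext x
  constructor
  · rintro ⟨p, hp, rfl⟩
    exact ⟨(p.1 ^ 2, p.2), ⟨Set.mem_Ioi.2 (pow_pos (Set.mem_Ioi.1 hp.1) 2), hp.2⟩, rfl⟩
  · rintro ⟨p, hp, rfl⟩
    refine ⟨(Real.sqrt p.1, p.2), ⟨Real.sqrt_pos.2 hp.1, hp.2⟩, ?_⟩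
    have : Real.sqrt p.1 ^ 2 = p.1 := Real.sq_sqrt (le_of_lt hp.1)
    simp [sqPolar, polarCoord, this]

/-- Polar coordinates on the plane with radius `s²`, together with the integrability of the
inner angular integral. -/
lemma polar_integral {V : Type*} [NormedAddCommGroup V] [NormedSpace ℝ V]
    {Φ : E2 → V} (hΦ : Integrable Φ) :
    IntegrableOn (fun s : ℝ => ∫ θ in (-Real.pi)..Real.pi, (2 * s ^ 3) • Φ (s ^ 2 • eθ θ)) (Set.Ioi 0) ∧
    ∫ s in Set.Ioi (0 : ℝ), ∫ θ in (-Real.pi)..Real.pi, (2 * s ^ 3) • Φ (s ^ 2 • eθ θ) = ∫ ξ, Φ ξ := by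
  have hle : -Real.pi ≤ Real.pi := by linarith [Real.pi_pos]
  set L : ℝ × ℝ ≃ᵐ E2 := (MeasurableEquiv.finTwoArrow (α := ℝ)).symm.trans
    (MeasurableEquiv.toLp 2 (Fin 2 → ℝ)) with hL
  have hLm : MeasurePreserving L volume volume :=
    ((volume_preserving_finTwoArrow ℝ).symm).trans
      (EuclideanSpace.volume_preserving_symm_measurableEquiv_toLp (Fin 2)).symm
  have hLe : ∀ s θ, L (sqPolar (s, θ)) = s ^ 2 • eθ θ := by
    intro s θ
    ext i
    fin_cases i <;> simp [hL, sqPolar, eθ, MeasurableEquiv.finTwoArrow]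
  have hΨ : Integrable (fun p => Φ (L p)) := (hLm.integrable_comp_emb L.measurableEmbedding).2 hΦ
  have hΨi : ∫ p, Φ (L p) = ∫ ξ, Φ ξ := hLm.integral_comp L.measurableEmbedding _
  have hmt : MeasurableSet polarCoord.target := polarCoord.open_target.measurableSet
  have hd : ∀ x ∈ polarCoord.target,
      HasFDerivWithinAt sqPolar (sqPolarD x) polarCoord.target x :=
    fun x _ => (hasFDerivAt_sqPolar x).hasFDerivWithinAt
  have h1 := (integrableOn_image_iff_integrableOn_abs_det_fderiv_smul volume hmt hd sqPolar_injOn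
    (fun p => Φ (L p))).1 hΨ.integrableOn
  have h2 := integral_image_eq_integral_abs_det_fderiv_smul volume hmt hd sqPolar_injOn
    (fun p => Φ (L p))
  rw [sqPolar_image, setIntegral_congr_set polarCoord_source_ae_eq_univ, setIntegral_univ, hΨi] at h2
  have hc : Set.EqOn (fun x => |(sqPolarD x).det| • Φ (L (sqPolar x)))
      (fun x => (2 * x.1 ^ 3) • Φ (x.1 ^ 2 • eθ x.2)) polarCoord.target := by
    intro x hx
    have hx1 : 0 < x.1 := hx.1
    simp only [det_sqPolarD]
    rw [abs_of_pos (by positivity), ← hLe]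
  have h1' := h1.congr_fun hc hmt
  rw [setIntegral_congr_fun hmt hc] at h2
  have htar : polarCoord.target = Set.Ioi (0 : ℝ) ×ˢ Set.Ioo (-Real.pi) Real.pi := rfl
  rw [htar] at h1' h2
  have hio : ∀ s : ℝ, ∫ θ in (-Real.pi)..Real.pi, (2 * s ^ 3) • Φ (s ^ 2 • eθ θ) =
      ∫ θ in Set.Ioo (-Real.pi) Real.pi, (2 * s ^ 3) • Φ (s ^ 2 • eθ θ) := fun s => by
    rw [intervalIntegral.integral_of_le hle, integral_Ioc_eq_integral_Ioo]
  simp_rw [hio]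
  rw [Measure.volume_eq_prod] at h1' h2
  constructor
  · rw [IntegrableOn, ← Measure.prod_restrict] at h1'
    exact h1'.integral_prod_left
  · rw [h2, setIntegral_prod _ h1']

/-! ### Pullback of `Ω` and of `Rt` to polar coordinates -/

/-- The rotation field `Ω` acting on functions on the plane. -/
def Om (F : E2 → ℂ) (ξ : E2) : ℂ := fderiv ℝ F ξ (rotv ξ)

/-- The operator `ξ·∇ + i(t/2)|ξ|^{1/2}`: along the ray `|ξ| = s²` it satisfies
`s∂_s (e^{its} F) = 2 e^{its} Rt t F`. -/
def Rt (t : ℝ) (F : E2 → ℂ) (ξ : E2) : ℂ :=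
  fderiv ℝ F ξ ξ + Complex.I * ((t / 2 * Real.sqrt ‖ξ‖ : ℝ) : ℂ) * F ξ

/-- The pullback `e^{its} F(s² e(θ + α))` in squared-radius polar coordinates. -/
def pol (t α : ℝ) (F : E2 → ℂ) (s θ : ℝ) : ℂ :=
  Complex.exp (Complex.I * (t * s : ℝ)) * F (s ^ 2 • eθ (θ + α))

/-- The `s`-derivative of `pol`. -/
def polS (t α : ℝ) (F : E2 → ℂ) (s θ : ℝ) : ℂ :=
  Complex.exp (Complex.I * (t * s : ℝ)) * (Complex.I * t * F (s ^ 2 • eθ (θ + α)) +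
    fderiv ℝ F (s ^ 2 • eθ (θ + α)) ((2 * s) • eθ (θ + α)))

lemma eθ_contDiff : ContDiff ℝ ∞ eθ := by
  unfold eθ
  exact (Real.contDiff_cos.smul contDiff_const).add (Real.contDiff_sin.smul contDiff_const)

lemma eθ_deriv (θ : ℝ) : HasDerivAt eθ (rotv (eθ θ)) θ := by
  have h := ((Real.hasDerivAt_cos θ).smul_const (EuclideanSpace.single (0 : Fin 2) (1 : ℝ))).add
    ((Real.hasDerivAt_sin θ).smul_const (EuclideanSpace.single (1 : Fin 2) (1 : ℝ)))
  refine h.congr_deriv ?_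
  ext i
  fin_cases i <;> simp [rotv, eθ]

lemma norm_eθ (θ : ℝ) : ‖eθ θ‖ = 1 := by
  rw [EuclideanSpace.norm_eq]
  simp [eθ]

lemma rotv_smul (c : ℝ) (x : E2) : rotv (c • x) = c • rotv x := by
  ext i
  fin_cases i <;> simp [rotv]

lemma rotv_add (x y : E2) : rotv (x + y) = rotv x + rotv y := by
  ext i
  fin_cases i <;> simp [rotv, add_comm]

/-- `rotv` as a continuous linear map. -/
def rotL : E2 →L[ℝ] E2 := LinearMap.toContinuousLinearMap
  { toFun := rotv, map_add' := rotv_add, map_smul' := fun c x => rotv_smul c x }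

lemma rotL_apply (x : E2) : rotL x = rotv x := rfl

lemma Om_contDiff {F : E2 → ℂ} (hF : ContDiff ℝ ∞ F) : ContDiff ℝ ∞ (Om F) := by
  have h := hF.fderiv_right (m := ∞) (by simp)
  exact h.clm_apply rotL.contDiff

lemma pol_contDiff (t α : ℝ) {F : E2 → ℂ} (hF : ContDiff ℝ ∞ F) :
    ContDiff ℝ ∞ (fun p : ℝ × ℝ => pol t α F p.1 p.2) := by
  unfold pol
  refine ContDiff.mul ?_ (hF.comp ((contDiff_fst.pow 2).smul
    (eθ_contDiff.comp (contDiff_snd.add contDiff_const))))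
  refine Complex.contDiff_exp.comp (contDiff_const.mul (Complex.ofRealCLM.contDiff.comp
    (contDiff_const.mul contDiff_fst)))

lemma pol_dθ (t α : ℝ) {F : E2 → ℂ} (hF : ContDiff ℝ ∞ F) (s θ : ℝ) :
    HasDerivAt (pol t α F s) (pol t α (Om F) s θ) θ := by
  have h1 : HasDerivAt (fun θ => eθ (θ + α)) (rotv (eθ (θ + α))) θ :=
    (eθ_deriv (θ + α)).comp_add_const θ α
  have h2 := (h1.const_smul (s ^ 2))
  have h3 := (hF.differentiable (by simp) (s ^ 2 • eθ (θ + α))).hasFDerivAt.comp_hasDerivAt θ h2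
  refine (h3.const_mul (Complex.exp (Complex.I * (t * s : ℝ)))).congr_deriv ?_
  simp only [pol, Om, rotv_smul]

lemma pol_ds (t α : ℝ) {F : E2 → ℂ} (hF : ContDiff ℝ ∞ F) (s θ : ℝ) :
    HasDerivAt (fun s => pol t α F s θ) (polS t α F s θ) s := by
  have h2 : HasDerivAt (fun s : ℝ => s ^ 2 • eθ (θ + α)) ((2 * s) • eθ (θ + α)) s := by
    simpa using (hasDerivAt_pow 2 s).smul_const (eθ (θ + α))
  have h3 := (hF.differentiable (by simp) (s ^ 2 • eθ (θ + α))).hasFDerivAt.comp_hasDerivAt s h2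
  have h4 := ((((hasDerivAt_id' s).const_mul t).ofReal_comp).const_mul Complex.I).cexp
  refine (h4.mul h3).congr_deriv ?_
  simp only [polS, Function.comp]
  push_cast
  ring

lemma polS_continuous (t α : ℝ) {F : E2 → ℂ} (hF : ContDiff ℝ ∞ F) :
    Continuous (polS t α F).uncurry := by
  have h1 := (hF.continuous_fderiv (by simp))
  have h2 := hF.continuous
  have h3 := eθ_contDiff.continuous
  simp only [Function.uncurry_def, polS]
  fun_prop

lemma hasDerivAt_curve {V W : Type*} [NormedAddCommGroup V] [NormedSpace ℝ V]
    [NormedAddCommGroup W] [NormedSpace ℝ W] {f : V → W} (hf : Differentiable ℝ f) {c : ℝ → V}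
    {v : V} {s : ℝ} (hc : HasDerivAt c v s) :
    HasDerivAt (fun s => f (c s)) (fderiv ℝ f (c s) v) s :=
  (hf (c s)).hasFDerivAt.comp_hasDerivAt s hc

lemma fderiv_clm_apply_const {V W : Type*} [NormedAddCommGroup V] [NormedSpace ℝ V]
    [NormedAddCommGroup W] [NormedSpace ℝ W] {f : V → W} (hf : ContDiff ℝ ∞ f) (p v w : V) :
    fderiv ℝ (fun p => fderiv ℝ f p w) p v = fderiv ℝ (fderiv ℝ f) p v w := by
  have h := (hf.fderiv_right (m := ∞) (by simp)).differentiable (by simp) p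
  rw [fderiv_clm_apply h (differentiableAt_const w)]
  simp

lemma differentiable_fderiv_apply {V W : Type*} [NormedAddCommGroup V] [NormedSpace ℝ V]
    [NormedAddCommGroup W] [NormedSpace ℝ W] {f : V → W} (hf : ContDiff ℝ ∞ f) (w : V) :
    Differentiable ℝ (fun p => fderiv ℝ f p w) :=
  ((hf.fderiv_right (m := ∞) (by simp)).clm_apply contDiff_const).differentiable (by simp)

lemma fderiv_fderiv_symm {V W : Type*} [NormedAddCommGroup V] [NormedSpace ℝ V]
    [NormedAddCommGroup W] [NormedSpace ℝ W] {f : V → W} (hf : ContDiff ℝ ∞ f) (p v w : V) :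
    fderiv ℝ (fderiv ℝ f) p v w = fderiv ℝ (fderiv ℝ f) p w v :=
  second_derivative_symmetric (fun p => (hf.differentiable (by simp) p).hasFDerivAt)
    (((hf.fderiv_right (m := ∞) (by simp)).differentiable (by simp) p).hasFDerivAt) v w

/-- Equality of the mixed derivatives of a smooth function of two real variables. -/
lemma hasDerivAt_mixed {h hθ hs hθs : ℝ → ℝ → ℂ}
    (hc : ContDiff ℝ ∞ (fun p : ℝ × ℝ => h p.1 p.2))
    (d1 : ∀ s θ, HasDerivAt (h s) (hθ s θ) θ) (d2 : ∀ s θ, HasDerivAt (fun s => h s θ) (hs s θ) s)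
    (d3 : ∀ s θ, HasDerivAt (fun s => hθ s θ) (hθs s θ) s) (s θ : ℝ) :
    HasDerivAt (hs s) (hθs s θ) θ := by
  obtain ⟨f, hf⟩ : ∃ f : ℝ × ℝ → ℂ, f = fun p => h p.1 p.2 := ⟨_, rfl⟩
  rw [← hf] at hc
  have hfd : Differentiable ℝ f := hc.differentiable (by simp)
  have l1 : ∀ s θ : ℝ, HasDerivAt (fun θ : ℝ => ((s, θ) : ℝ × ℝ)) (0, 1) θ := fun s θ =>
    (hasDerivAt_const θ s).prodMk (hasDerivAt_id' θ)
  have l2 : ∀ s θ : ℝ, HasDerivAt (fun s : ℝ => ((s, θ) : ℝ × ℝ)) (1, 0) s := fun s θ =>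
    (hasDerivAt_id' s).prodMk (hasDerivAt_const s θ)
  have e1 : ∀ s θ, hθ s θ = fderiv ℝ f (s, θ) (0, 1) := fun s θ => by
    have k := hasDerivAt_curve hfd (l1 s θ)
    have k' : HasDerivAt (fun θ => f (s, θ)) (hθ s θ) θ := by rw [hf]; exact d1 s θ
    exact k'.unique k
  have e2 : ∀ s θ, hs s θ = fderiv ℝ f (s, θ) (1, 0) := fun s θ => by
    have k := hasDerivAt_curve hfd (l2 s θ)
    have k' : HasDerivAt (fun s => f (s, θ)) (hs s θ) s := by rw [hf]; exact d2 s θ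
    exact k'.unique k
  have e3 : hθs s θ = fderiv ℝ (fderiv ℝ f) (s, θ) (1, 0) (0, 1) := by
    have k := hasDerivAt_curve (differentiable_fderiv_apply hc (0, 1)) (l2 s θ)
    rw [fderiv_clm_apply_const hc] at k
    refine HasDerivAt.unique ?_ k
    simpa only [e1] using d3 s θ
  have e2' : hs s = fun θ => fderiv ℝ f (s, θ) (1, 0) := funext fun θ => e2 s θ
  rw [e3, e2', fderiv_fderiv_symm hc, ← fderiv_clm_apply_const hc]
  exact hasDerivAt_curve (differentiable_fderiv_apply hc (1, 0)) (l1 s θ)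

lemma polS_norm (t α : ℝ) (F : E2 → ℂ) {s : ℝ} (hs : 0 ≤ s) (θ : ℝ) :
    s * ‖polS t α F s θ‖ = 2 * ‖Rt t F (s ^ 2 • eθ (θ + α))‖ := by
  have h1 : ((s : ℂ) * (Complex.I * t * F (s ^ 2 • eθ (θ + α)) +
    fderiv ℝ F (s ^ 2 • eθ (θ + α)) ((2 * s) • eθ (θ + α)))) = 2 * Rt t F (s ^ 2 • eθ (θ + α)) := by
    have h2 : ‖s ^ 2 • eθ (θ + α)‖ = s ^ 2 := by rw [norm_smul, norm_eθ]; simp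
    simp only [Rt]
    rw [h2, Real.sqrt_sq hs]
    simp only [map_smul, Complex.real_smul]
    push_cast
    ring
  have h3 := congrArg norm h1
  rw [norm_mul, norm_mul, Complex.norm_real, Real.norm_eq_abs, abs_of_nonneg hs] at h3
  rw [polS, norm_mul, mul_comm Complex.I, Complex.norm_exp_ofReal_mul_I, one_mul, h3]
  simp

lemma pol_norm (t α : ℝ) (F : E2 → ℂ) (s θ : ℝ) : ‖pol t α F s θ‖ = ‖F (s ^ 2 • eθ (θ + α))‖ := by
  rw [pol, norm_mul, mul_comm Complex.I, Complex.norm_exp_ofReal_mul_I, one_mul]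

lemma eθ_periodic (θ : ℝ) : eθ (θ + 2 * Real.pi) = eθ θ := by simp [eθ]

lemma shift_integral {V : Type*} [NormedAddCommGroup V] [NormedSpace ℝ V] (f : ℝ → V) (hf : Function.Periodic f (2 * Real.pi))
    (α : ℝ) : ∫ θ in (-Real.pi)..Real.pi, f (θ + α) = ∫ θ in (-Real.pi)..Real.pi, f θ := by
  rw [intervalIntegral.integral_comp_add_right]
  have := hf.intervalIntegral_add_eq (-Real.pi + α) (-Real.pi)
  rw [show -Real.pi + α + 2 * Real.pi = Real.pi + α by ring,
    show -Real.pi + 2 * Real.pi = Real.pi by ring] at this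
  exact this

/-! ### The pointwise bound on the frequency side -/

/-- The weighted density on the frequency side whose integral controls `|t|` times the
oscillatory integral. -/
def Phi (t : ℝ) (F : E2 → ℂ) (ξ : E2) : ℝ :=
  (Real.sqrt ‖ξ‖)⁻¹ * (‖F ξ‖ + ‖Om F ξ‖ + ‖Om (Om F) ξ‖ + ‖Rt t F ξ‖ + ‖Rt t (Om F) ξ‖)

lemma Phi_nonneg (t : ℝ) (F : E2 → ℂ) (ξ : E2) : 0 ≤ Phi t F ξ := by
  unfold Phi; positivity

lemma Rt_continuous (t : ℝ) {F : E2 → ℂ} (hF : ContDiff ℝ ∞ F) : Continuous (Rt t F) := by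
  have h1 := (hF.continuous_fderiv (by simp))
  have h2 := hF.continuous
  unfold Rt
  fun_prop

/-- Pointwise in the radius, the quantity `circ` of the pulled-back function is bounded by the polar
form of `Phi`; the shift of the angle by `α` is irrelevant by periodicity. -/
lemma circ_pol_le (t α : ℝ) {F : E2 → ℂ} (hF : ContDiff ℝ ∞ F) {s : ℝ} (hs : 0 ≤ s) :
    s ^ 2 * circ (pol t α F) (pol t α (Om F)) (pol t α (Om (Om F))) (polS t α F)
      (polS t α (Om F)) s ≤
    ∫ θ in (-Real.pi)..Real.pi, (2 * s ^ 3) • Phi t F (s ^ 2 • eθ θ) := by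
  rcases hs.eq_or_lt with rfl | hs'
  · simp
  have hc1 := hF.continuous
  have hO := Om_contDiff hF
  have hc2 := hO.continuous
  have hc3 := (Om_contDiff hO).continuous
  have hc4 := Rt_continuous t hF
  have hc5 := Rt_continuous t hO
  have he := eθ_contDiff.continuous
  have hΦ : ∀ θ, (2 * s ^ 3) • Phi t F (s ^ 2 • eθ θ) = 2 * s ^ 2 * (‖F (s ^ 2 • eθ θ)‖ +
      ‖Om F (s ^ 2 • eθ θ)‖ + ‖Om (Om F) (s ^ 2 • eθ θ)‖ + ‖Rt t F (s ^ 2 • eθ θ)‖ +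
      ‖Rt t (Om F) (s ^ 2 • eθ θ)‖) := by
    intro θ
    have h2 : ‖s ^ 2 • eθ θ‖ = s ^ 2 := by rw [norm_smul, norm_eθ]; simp
    rw [Phi, h2, Real.sqrt_sq hs, smul_eq_mul]
    field_simp
  have hper : Function.Periodic (fun θ => (2 * s ^ 3) • Phi t F (s ^ 2 • eθ θ))
      (2 * Real.pi) := fun θ => by simp only [eθ_periodic]
  rw [← shift_integral _ hper α, circ, ← intervalIntegral.integral_const_mul]
  simp only [hΦ]
  refine intervalIntegral.integral_mono_on (by linarith [Real.pi_pos]) ?_ ?_ ?_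
  · simp only [pol_norm, polS_norm _ _ _ hs]
    exact Continuous.intervalIntegrable (by fun_prop) _ _
  · exact Continuous.intervalIntegrable (by fun_prop) _ _
  · intro θ _
    simp only [pol_norm, polS_norm _ _ _ hs]
    have key : ∀ a b c d e : ℝ, 0 ≤ a → 0 ≤ b → 0 ≤ c →
        s ^ 2 * (a + b + c + 2 * d + 2 * e) ≤ 2 * s ^ 2 * (a + b + c + d + e) := by
      intro a b c d e ha hb hc
      have : 0 ≤ s ^ 2 * (a + b + c) := by positivity
      linarith
    exact key _ _ _ _ _ (norm_nonneg _) (norm_nonneg _) (norm_nonneg _)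

lemma circ_nonneg {H Hθ Hθθ Hs Hsθ : ℝ → ℝ → ℂ} {s : ℝ} (hs : 0 ≤ s) :
    0 ≤ circ H Hθ Hθθ Hs Hsθ s := by
  unfold circ
  refine intervalIntegral.integral_nonneg (by linarith [Real.pi_pos]) fun θ _ => ?_
  positivity

lemma integral_circ_pol_le (t α : ℝ) {F : E2 → ℂ} (hF : ContDiff ℝ ∞ F)
    (hΦ : Integrable (Phi t F)) (T : ℝ) (hT : 0 ≤ T) :
    ∫ s in (0:ℝ)..T, s ^ 2 * circ (pol t α F) (pol t α (Om F)) (pol t α (Om (Om F)))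
      (polS t α F) (polS t α (Om F)) s ≤ ∫ ξ, Phi t F ξ := by
  obtain ⟨h1, h2⟩ := polar_integral hΦ
  have hnn : ∀ s : ℝ, 0 ≤ s →
      0 ≤ ∫ θ in (-Real.pi)..Real.pi, (2 * s ^ 3) • Phi t F (s ^ 2 • eθ θ) := fun s hs =>
    intervalIntegral.integral_nonneg (by linarith [Real.pi_pos]) fun θ _ =>
      smul_nonneg (by positivity) (Phi_nonneg _ _ _)
  rw [← h2, intervalIntegral.integral_of_le hT]
  calc _ ≤ ∫ s in Set.Ioc 0 T, ∫ θ in (-Real.pi)..Real.pi, (2 * s ^ 3) • Phi t F (s ^ 2 • eθ θ) := by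
        refine integral_mono_of_nonneg ?_ (h1.mono_set Set.Ioc_subset_Ioi_self) ?_
        · refine (ae_restrict_iff' measurableSet_Ioc).2 (Filter.Eventually.of_forall fun s hs => ?_)
          exact mul_nonneg (sq_nonneg _) (circ_nonneg hs.1.le)
        · refine (ae_restrict_iff' measurableSet_Ioc).2 (Filter.Eventually.of_forall fun s hs => ?_)
          exact circ_pol_le t α hF hs.1.le
    _ ≤ _ := by
        refine setIntegral_mono_set h1 ?_ (Filter.Eventually.of_forall Set.Ioc_subset_Ioi_self)
        refine (ae_restrict_iff' measurableSet_Ioi).2 (Filter.Eventually.of_forall fun s hs => ?_)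
        exact hnn s (le_of_lt hs)

/-- The radial integrand attached to the stationary direction `α`, localised by `cutoff`. -/
def Jin (Y α : ℝ) (F : E2 → ℂ) (s : ℝ) : ℂ :=
  (s : ℂ) ^ 3 * ∫ θ in (-Real.pi)..Real.pi,
    (cutoff θ : ℂ) * (Complex.exp (Complex.I * (Y * s ^ 2 * Real.cos θ : ℝ)) *
      F (s ^ 2 • eθ (θ + α)))

lemma cutoff_continuous : Continuous cutoff := by
  unfold cutoff; fun_prop

lemma Jin_continuous (Y α : ℝ) {F : E2 → ℂ} (hF : Continuous F) :
    Continuous (Jin Y α F) := by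
  have he := eθ_contDiff.continuous
  have hk := cutoff_continuous
  unfold Jin
  refine Continuous.mul (by fun_prop) ?_
  refine intervalIntegral.continuous_parametric_intervalIntegral_of_continuous' ?_ _ _
  simp only [Function.uncurry_def]
  fun_prop

lemma Jin_eq (t Y α : ℝ) (F : E2 → ℂ) (s : ℝ) : Jin Y α F s =
    Complex.exp (Complex.I * (Y * s ^ 2 - t * s : ℝ)) * ((s : ℂ) ^ 3 *
      ∫ θ in (-Real.pi)..Real.pi, Complex.exp (Complex.I * (Y * s ^ 2 * (Real.cos θ - 1) : ℝ)) *
        (cutoff θ * pol t α F s θ)) := by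
  rw [mul_left_comm, ← intervalIntegral.integral_const_mul, Jin]
  congr 1
  refine intervalIntegral.integral_congr (μ := volume) fun θ _ => ?_
  simp only [pol]
  have : Complex.exp (Complex.I * (Y * s ^ 2 * Real.cos θ : ℝ)) =
      Complex.exp (Complex.I * (Y * s ^ 2 - t * s : ℝ)) *
      Complex.exp (Complex.I * (Y * s ^ 2 * (Real.cos θ - 1) : ℝ)) *
      Complex.exp (Complex.I * (t * s : ℝ)) := by
    rw [← Complex.exp_add, ← Complex.exp_add]
    congr 1
    push_cast
    ring
  rw [this]
  ring

lemma Jin_bound (t Y α : ℝ) (hY : Y ≠ 0) {F : E2 → ℂ} (hF : ContDiff ℝ ∞ F)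
    (hΦ : Integrable (Phi t F)) {T : ℝ} (hT : 0 ≤ T) :
    |t| * ‖∫ s in (0:ℝ)..T, Jin Y α F s‖ ≤ 200000 * ∫ ξ, Phi t F ξ := by
  have hO := Om_contDiff hF
  have hOO := Om_contDiff hO
  have hcont : ∀ G : E2 → ℂ, ContDiff ℝ ∞ G → Continuous (pol t α G).uncurry := fun G hG =>
    (pol_contDiff t α hG).continuous
  simp only [Jin_eq t]
  exact J_bound t Y _ hY (hcont _ hF) (hcont _ hO) (hcont _ hOO) (polS_continuous t α hF)
    (polS_continuous t α hO) (pol_dθ t α hF) (pol_dθ t α hO) (pol_ds t α hF)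
    (hasDerivAt_mixed (pol_contDiff t α hF) (pol_dθ t α hF) (pol_ds t α hF) (pol_ds t α hO))
    (pol_ds t α hO) (integral_circ_pol_le t α hF hΦ) hT

lemma inner_eθ (φ α : ℝ) : inner ℝ (eθ φ) (eθ α) = Real.cos (φ - α) := by
  simp [eθ, PiLp.inner_apply, Real.cos_sub]
  ring

lemma exists_polar (x : E2) : ∃ ρ α : ℝ, x = ρ • eθ α ∧ ρ = ‖x‖ := by
  refine ⟨‖x‖, Complex.arg ⟨x 0, x 1⟩, ?_, rfl⟩
  have hn : ‖x‖ = ‖(⟨x 0, x 1⟩ : ℂ)‖ := by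
    rw [EuclideanSpace.norm_eq, Complex.norm_eq_sqrt_sq_add_sq]
    simp
  ext i
  fin_cases i
  · simp [eθ, hn, Complex.norm_mul_cos_arg]
  · simp [eθ, hn, Complex.norm_mul_sin_arg]

/-- The partition of unity `cutoff θ + cutoff (θ + π) = 1` splits the angular integral into the
contributions of the two stationary directions `±x`. -/
lemma inner_circle (ρ α : ℝ) {F : E2 → ℂ} (hF : Continuous F) (s : ℝ) :
    (∫ θ in (-Real.pi)..Real.pi, (2 * s ^ 3) • (Complex.exp (Complex.I *
      (2 * Real.pi * inner ℝ (s ^ 2 • eθ θ) (ρ • eθ α) : ℝ)) * F (s ^ 2 • eθ θ))) =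
    2 * Jin (2 * Real.pi * ρ) α F s + 2 * Jin (-(2 * Real.pi * ρ)) (α - Real.pi) F s := by
  have he := eθ_contDiff.continuous
  have hk := cutoff_continuous
  obtain ⟨G, hG⟩ : ∃ G : ℝ → ℂ, G = fun θ => Complex.exp (Complex.I *
      (2 * Real.pi * ρ * s ^ 2 * Real.cos (θ - α) : ℝ)) * F (s ^ 2 • eθ θ) := ⟨_, rfl⟩
  have hGp : Function.Periodic G (2 * Real.pi) := fun θ => by
    have : θ + 2 * Real.pi - α = θ - α + 2 * Real.pi := by ring
    simp only [hG, eθ_periodic, this, Real.cos_add_two_pi]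
  have hcutp : Function.Periodic cutoff (2 * Real.pi) := fun θ => by simp [cutoff]
  have hGc : Continuous G := by rw [hG]; fun_prop
  have e0 : (∫ θ in (-Real.pi)..Real.pi, (2 * s ^ 3) • (Complex.exp (Complex.I *
      (2 * Real.pi * inner ℝ (s ^ 2 • eθ θ) (ρ • eθ α) : ℝ)) * F (s ^ 2 • eθ θ))) =
      (2 * (s : ℂ) ^ 3) * ∫ θ in (-Real.pi)..Real.pi, G θ := by
    rw [← intervalIntegral.integral_const_mul]
    refine intervalIntegral.integral_congr fun θ _ => ?_
    simp only [hG, inner_smul_left, inner_smul_right, inner_eθ, Complex.real_smul]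
    have : (2 * Real.pi * (ρ * ((starRingEnd ℝ) (s ^ 2) * Real.cos (θ - α)))) =
      2 * Real.pi * ρ * s ^ 2 * Real.cos (θ - α) := by simp; ring
    rw [this]
    push_cast
    ring
  have e1 : ∫ θ in (-Real.pi)..Real.pi, G θ =
      (∫ θ in (-Real.pi)..Real.pi, (cutoff θ : ℂ) * G (θ + α)) +
      ∫ θ in (-Real.pi)..Real.pi, (cutoff θ : ℂ) * G (θ + (α - Real.pi)) := by
    have hp2 : Function.Periodic (fun θ => (cutoff θ : ℂ) * G (θ + (α - Real.pi)))
        (2 * Real.pi) := fun θ => by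
      have : θ + 2 * Real.pi + (α - Real.pi) = θ + (α - Real.pi) + 2 * Real.pi := by ring
      simp only [hcutp θ, this, hGp (θ + (α - Real.pi))]
    rw [← shift_integral _ hp2 Real.pi, ← shift_integral _ hGp α,
      ← intervalIntegral.integral_add (Continuous.intervalIntegrable (by fun_prop) _ _)
        (Continuous.intervalIntegrable (by fun_prop) _ _)]
    refine intervalIntegral.integral_congr fun θ _ => ?_
    have h1 : θ + Real.pi + (α - Real.pi) = θ + α := by ring
    have h2 : ((cutoff θ : ℝ) : ℂ) + (cutoff (θ + Real.pi) : ℝ) = 1 := by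
      rw [← Complex.ofReal_add, cutoff_add]; simp
    simp only [h1]
    rw [← add_mul, h2, one_mul]
  rw [e0, e1, Jin, Jin]
  have f1 : ∀ θ, G (θ + α) = Complex.exp (Complex.I * (2 * Real.pi * ρ * s ^ 2 * Real.cos θ : ℝ)) *
      F (s ^ 2 • eθ (θ + α)) := fun θ => by simp only [hG, add_sub_cancel_right]
  have f2 : ∀ θ, G (θ + (α - Real.pi)) = Complex.exp (Complex.I *
      (-(2 * Real.pi * ρ) * s ^ 2 * Real.cos θ : ℝ)) *
      F (s ^ 2 • eθ (θ + (α - Real.pi))) := fun θ => by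
    have : θ + (α - Real.pi) - α = θ - Real.pi := by ring
    simp only [hG, this, Real.cos_sub_pi]
    congr 4
    ring
  simp only [f1, f2]
  ring

/-- The weighted oscillatory integral estimate: away from the origin, `|t|` times the inverse
Fourier integral of `F` is controlled by the integral of `Phi t F`. -/
lemma core_bound (t : ℝ) {F : E2 → ℂ} (hF : ContDiff ℝ ∞ F) (hFi : Integrable F)
    (hΦ : Integrable (Phi t F)) {x : E2} (hx : x ≠ 0) :
    |t| * ‖∫ ξ, Complex.exp (Complex.I * (2 * Real.pi * inner ℝ ξ x : ℝ)) * F ξ‖ ≤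
      800000 * ∫ ξ, Phi t F ξ := by
  obtain ⟨ρ, α, rfl, hρ⟩ := exists_polar x
  have hY : 2 * Real.pi * ρ ≠ 0 := by
    have : ρ ≠ 0 := by rintro rfl; simp at hx
    have := Real.pi_pos
    positivity
  have hint : Integrable (fun ξ : E2 => Complex.exp (Complex.I *
      (2 * Real.pi * inner ℝ ξ (ρ • eθ α) : ℝ)) * F ξ) := by
    refine hFi.bdd_mul (c := 1) (Continuous.aestronglyMeasurable (by fun_prop)) ?_
    refine Filter.Eventually.of_forall fun ξ => ?_
    rw [mul_comm Complex.I, Complex.norm_exp_ofReal_mul_I]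
  obtain ⟨h1, h2⟩ := polar_integral hint
  rw [← h2]
  have hlim := intervalIntegral_tendsto_integral_Ioi 0 h1 Filter.tendsto_id
  refine le_of_tendsto (hlim.norm.const_mul |t|) ?_
  filter_upwards [Filter.eventually_ge_atTop (0:ℝ)] with T hT
  simp only [inner_circle ρ α hF.continuous, id]
  have c1 := Jin_continuous (2 * Real.pi * ρ) α hF.continuous
  have c2 := Jin_continuous (-(2 * Real.pi * ρ)) (α - Real.pi) hF.continuous
  rw [intervalIntegral.integral_add (Continuous.intervalIntegrable (by fun_prop) _ _)
        (Continuous.intervalIntegrable (by fun_prop) _ _),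
    intervalIntegral.integral_const_mul, intervalIntegral.integral_const_mul]
  have b1 := Jin_bound t _ α hY hF hΦ hT
  have b2 := Jin_bound t _ (α - Real.pi) (neg_ne_zero.2 hY) hF hΦ hT
  have key : ∀ a b : ℂ, ‖2 * a + 2 * b‖ ≤ 2 * ‖a‖ + 2 * ‖b‖ := fun a b =>
    (norm_add_le _ _).trans (by simp)
  have := mul_le_mul_of_nonneg_left (key (∫ s in (0:ℝ)..T, Jin (2 * Real.pi * ρ) α F s)
    (∫ s in (0:ℝ)..T, Jin (-(2 * Real.pi * ρ)) (α - Real.pi) F s)) (abs_nonneg t)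
  linarith

/-! ### `L²` norms and a weighted Cauchy–Schwarz inequality -/

/-- The `L²` norm, written as an integral. -/
def N2 (G : E2 → ℂ) : ℝ := (∫ x : E2, ‖G x‖ ^ 2) ^ ((1 : ℝ) / 2)

lemma N2_nonneg (G : E2 → ℂ) : 0 ≤ N2 G :=
  Real.rpow_nonneg (integral_nonneg fun _ => by positivity) _

lemma N2_eq_sqrt (G : E2 → ℂ) : N2 G = Real.sqrt (∫ x : E2, ‖G x‖ ^ 2) := by
  rw [N2, Real.sqrt_eq_rpow]

lemma N2_eq_eLpNorm {G : E2 → ℂ} (hG : MemLp G 2) : N2 G = (eLpNorm G 2 volume).toReal := by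
  rw [hG.eLpNorm_eq_integral_rpow_norm (by simp) (by simp), ENNReal.toReal_ofReal (by positivity)]
  simp [N2]

lemma N2_add_le {G H : E2 → ℂ} (hG : MemLp G 2) (hH : MemLp H 2) :
    N2 (fun x => G x + H x) ≤ N2 G + N2 H := by
  have := eLpNorm_add_le hG.1 hH.1 (p := 2) (by norm_num)
  rw [N2_eq_eLpNorm hG, N2_eq_eLpNorm hH, show (fun x => G x + H x) = G + H from rfl,
    N2_eq_eLpNorm (hG.add hH), ← ENNReal.toReal_add hG.2.ne hH.2.ne]
  exact ENNReal.toReal_mono (ENNReal.add_ne_top.2 ⟨hG.2.ne, hH.2.ne⟩) this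

lemma N2_const_mul (c : ℂ) (G : E2 → ℂ) : N2 (fun x => c * G x) = ‖c‖ * N2 G := by
  simp only [N2_eq_sqrt, norm_mul, mul_pow]
  rw [integral_const_mul, Real.sqrt_mul (by positivity), Real.sqrt_sq (norm_nonneg _)]

lemma weight_integrable :
    Integrable (fun ξ : E2 => ‖ξ‖⁻¹ * (1 + ‖ξ‖ ^ 2)⁻¹) := by
  have := (integrable_fun_norm_addHaar (volume : Measure E2)
    (f := fun y : ℝ => y⁻¹ * (1 + y ^ 2)⁻¹)).2 ?_
  · exact this
  · rw [finrank_euclideanSpace_fin]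
    refine (integrable_inv_one_add_sq.integrableOn (s := Set.Ioi (0:ℝ))).congr_fun ?_
      measurableSet_Ioi
    intro y hy
    have : y ≠ 0 := ne_of_gt hy
    simp
    field_simp

/-- The constant in the weighted Cauchy–Schwarz inequality. -/
def cw : ℝ := Real.sqrt (∫ ξ : E2, ‖ξ‖⁻¹ * (1 + ‖ξ‖ ^ 2)⁻¹)

lemma cw_nonneg : 0 ≤ cw := Real.sqrt_nonneg _

lemma sqrt_add3 {a b c : ℝ} (ha : 0 ≤ a) (hb : 0 ≤ b) (hc : 0 ≤ c) :
    Real.sqrt (a + b + c) ≤ Real.sqrt a + Real.sqrt b + Real.sqrt c := by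
  rw [Real.sqrt_le_left (by positivity)]
  have h1 := Real.sq_sqrt ha
  have h2 := Real.sq_sqrt hb
  have h3 := Real.sq_sqrt hc
  have := Real.sqrt_nonneg a
  have := Real.sqrt_nonneg b
  have := Real.sqrt_nonneg c
  nlinarith [mul_nonneg (Real.sqrt_nonneg a) (Real.sqrt_nonneg b),
    mul_nonneg (Real.sqrt_nonneg a) (Real.sqrt_nonneg c),
    mul_nonneg (Real.sqrt_nonneg b) (Real.sqrt_nonneg c)]

/-- Weighted Cauchy–Schwarz: `|ξ|^{-1/2} G` is integrable as soon as `G`, `ξ₁G`, `ξ₂G` are in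
`L²`, because `|ξ|^{-1}(1+|ξ|²)^{-1}` is integrable on the plane. -/
lemma weighted_cs {G : E2 → ℂ} (hG : MemLp G 2)
    (hG1 : ∀ i : Fin 2, MemLp (fun ξ : E2 => (ξ i : ℂ) * G ξ) 2) :
    Integrable (fun ξ : E2 => (Real.sqrt ‖ξ‖)⁻¹ * ‖G ξ‖) ∧
    ∫ ξ : E2, (Real.sqrt ‖ξ‖)⁻¹ * ‖G ξ‖ ≤ cw * (N2 G + N2 (fun ξ : E2 => (ξ 0 : ℂ) * G ξ) +
      N2 (fun ξ : E2 => (ξ 1 : ℂ) * G ξ)) := by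
  obtain ⟨a, ha⟩ : ∃ a : E2 → ℝ, a = fun ξ => (Real.sqrt ‖ξ‖)⁻¹ * (Real.sqrt (1 + ‖ξ‖ ^ 2))⁻¹ :=
    ⟨_, rfl⟩
  obtain ⟨b, hb⟩ : ∃ b : E2 → ℝ, b = fun ξ => Real.sqrt (1 + ‖ξ‖ ^ 2) * ‖G ξ‖ := ⟨_, rfl⟩
  have ha2 : ∀ ξ, a ξ ^ 2 = ‖ξ‖⁻¹ * (1 + ‖ξ‖ ^ 2)⁻¹ := fun ξ => by
    simp only [ha, mul_pow, inv_pow]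
    rw [Real.sq_sqrt (norm_nonneg _), Real.sq_sqrt (by positivity)]
  have hb2 : ∀ ξ, b ξ ^ 2 = ‖G ξ‖ ^ 2 + ‖(ξ 0 : ℂ) * G ξ‖ ^ 2 + ‖(ξ 1 : ℂ) * G ξ‖ ^ 2 := fun ξ => by
    simp only [hb, mul_pow, norm_mul]
    rw [Real.sq_sqrt (by positivity), EuclideanSpace.norm_sq_eq]
    simp [Fin.sum_univ_two]
    ring
  have hab : ∀ ξ, (Real.sqrt ‖ξ‖)⁻¹ * ‖G ξ‖ = a ξ * b ξ := fun ξ => by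
    have : Real.sqrt (1 + ‖ξ‖ ^ 2) ≠ 0 := by positivity
    simp only [ha, hb]
    field_simp
  have ha0 : ∀ ξ, 0 ≤ a ξ := fun ξ => by rw [ha]; positivity
  have hb0 : ∀ ξ, 0 ≤ b ξ := fun ξ => by rw [hb]; positivity
  have i1 := hG.integrable_norm_pow (by norm_num)
  have i2 := fun i => (hG1 i).integrable_norm_pow (by norm_num)
  have am : MemLp a 2 := by
    rw [memLp_two_iff_integrable_sq]
    · simp only [ha2]; exact weight_integrable
    · rw [ha]; exact (Measurable.aestronglyMeasurable (by fun_prop))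
  have bm : MemLp b 2 := by
    rw [memLp_two_iff_integrable_sq]
    · simp only [hb2]
      exact (i1.add (i2 0)).add (i2 1)
    · rw [hb]
      exact (Measurable.aestronglyMeasurable (by fun_prop)).mul hG.1.norm
  simp only [hab]
  refine ⟨am.integrable_mul bm, ?_⟩
  have := integral_mul_le_Lp_mul_Lq_of_nonneg (μ := volume) (p := 2) (q := 2) (by
    constructor <;> norm_num) (Filter.Eventually.of_forall ha0) (Filter.Eventually.of_forall hb0)
    (by simpa using am) (by simpa using bm)
  refine this.trans ?_
  simp only [Real.rpow_two, ha2, hb2, ← Real.sqrt_eq_rpow, N2_eq_sqrt]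
  refine mul_le_mul_of_nonneg_left ?_ (Real.sqrt_nonneg _)
  rw [integral_add (f := fun ξ : E2 => ‖G ξ‖ ^ 2 + ‖(ξ 0 : ℂ) * G ξ‖ ^ 2) (i1.add (i2 0)) (i2 1), integral_add i1 (i2 0)]
  exact sqrt_add3 (integral_nonneg fun _ => by positivity) (integral_nonneg fun _ => by positivity)
    (integral_nonneg fun _ => by positivity)

/-! ### Plancherel and vector fields on Schwartz functions -/

lemma integral_fourierInv_mul {f g : E2 → ℂ} (hf : Integrable f) (hg : Integrable g) :
    ∫ x, 𝓕⁻ f x * g x = ∫ x, f x * 𝓕⁻ g x := by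
  have := VectorFourier.integral_fourierIntegral_smul_eq_flip (L := -innerₗ E2) (μ := volume)
    (ν := volume) Real.continuous_fourierChar
    (continuous_inner (𝕜 := ℝ) (E := E2)).neg hf hg
  have hfl : (-innerₗ E2).flip = -innerₗ E2 := by
    ext x y; simp [real_inner_comm]
  rw [hfl] at this
  exact this

/-- Plancherel for the inverse Fourier integral on `L¹ ∩ L²`. -/
lemma plancherel {W : E2 → ℂ} (h1 : Integrable W) (h2 : MemLp W 2) :
    MemLp (𝓕⁻ W) 2 ∧ N2 (𝓕⁻ W) = N2 W := by
  obtain ⟨w, hw⟩ : ∃ w : Lp (α := E2) ℂ 2, w = h2.toLp W := ⟨_, rfl⟩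
  have hwW : w =ᵐ[volume] W := by rw [hw]; exact h2.coeFn_toLp
  obtain ⟨h, hh⟩ : ∃ h : Lp (α := E2) ℂ 2, h = 𝓕⁻ w := ⟨_, rfl⟩
  have hnorm : ‖h‖ = ‖w‖ := by
    rw [hh, ← Lp.norm_fourier_eq (𝓕⁻ w), FourierTransform.fourier_fourierInv_eq]
  have hcont : Continuous (𝓕⁻ W) :=
    VectorFourier.fourierIntegral_continuous Real.continuous_fourierChar
      (continuous_inner (𝕜 := ℝ) (E := E2)).neg h1
  have hae : ∀ᵐ x : E2, h x = 𝓕⁻ W x := by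
    refine ae_eq_of_integral_contDiff_smul_eq
      ((Lp.memLp h).locallyIntegrable (by norm_num)) hcont.locallyIntegrable ?_
    intro φ hφ hφc
    have hφc' : HasCompactSupport (fun x => (φ x : ℂ)) := hφc.comp_left Complex.ofReal_zero
    let ψ : SchwartzMap E2 ℂ := hφc'.toSchwartzMap (Complex.ofRealCLM.contDiff.comp hφ)
    have hψ : ∀ x, ψ x = (φ x : ℂ) := fun x => rfl
    have e1 : ∫ x, φ x • h x = ∫ x, ψ x • h x := by
      simp only [hψ, Complex.real_smul, smul_eq_mul]
    have e2 : ∫ x, φ x • 𝓕⁻ W x = ∫ x, ψ x * 𝓕⁻ W x := by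
      simp only [hψ, Complex.real_smul]
    rw [e1, ← Lp.toTemperedDistribution_apply, hh, ← Lp.fourierInv_toTemperedDistribution_eq,
      TemperedDistribution.fourierInv_apply, Lp.toTemperedDistribution_apply, e2,
      ← integral_fourierInv_mul ψ.integrable h1, SchwartzMap.fourierInv_coe]
    refine integral_congr_ae ?_
    filter_upwards [hwW] with x hx
    rw [hx, smul_eq_mul]
  have hm : MemLp (𝓕⁻ W) 2 := (memLp_congr_ae hae).1 (Lp.memLp h)
  refine ⟨hm, ?_⟩
  rw [N2_eq_eLpNorm hm, N2_eq_eLpNorm h2, ← eLpNorm_congr_ae hae, ← eLpNorm_congr_ae hwW]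
  rw [Lp.norm_def, Lp.norm_def] at hnorm
  exact hnorm

/-- Multiplication by the `i`-th coordinate on Schwartz functions. -/
def mulS (i : Fin 2) : SchwartzMap E2 ℂ →L[ℝ] SchwartzMap E2 ℂ :=
  SchwartzMap.smulLeftCLM ℂ (fun x : E2 => x i)

/-- The partial derivative `∂_i` on Schwartz functions. -/
def dS (i : Fin 2) : SchwartzMap E2 ℂ →L[ℝ] SchwartzMap E2 ℂ :=
  LineDeriv.lineDerivOpCLM ℝ (SchwartzMap E2 ℂ) (EuclideanSpace.single i (1 : ℝ))

/-- The rotation field on Schwartz functions. -/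
def OmS : SchwartzMap E2 ℂ →L[ℝ] SchwartzMap E2 ℂ := mulS 0 ∘L dS 1 - mulS 1 ∘L dS 0

/-- The Euler field `x·∇` on Schwartz functions. -/
def EuS : SchwartzMap E2 ℂ →L[ℝ] SchwartzMap E2 ℂ := mulS 0 ∘L dS 0 + mulS 1 ∘L dS 1

lemma coord_growth (i : Fin 2) : (fun x : E2 => x i).HasTemperateGrowth :=
  (EuclideanSpace.proj (𝕜 := ℝ) (ι := Fin 2) i).hasTemperateGrowth

lemma mulS_apply (i : Fin 2) (f : SchwartzMap E2 ℂ) (x : E2) : mulS i f x = (x i : ℂ) * f x := by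
  rw [mulS, SchwartzMap.smulLeftCLM_apply_apply (coord_growth i), Complex.real_smul]

lemma dS_apply (i : Fin 2) (f : SchwartzMap E2 ℂ) (x : E2) :
    dS i f x = fderiv ℝ f x (EuclideanSpace.single i 1) := rfl

lemma decomp (x : E2) : x = x 0 • EuclideanSpace.single 0 (1 : ℝ) + x 1 • EuclideanSpace.single 1 (1 : ℝ) := by
  ext i
  fin_cases i <;> simp

lemma rotv_eq (x : E2) : rotv x =
    x 0 • EuclideanSpace.single 1 (1 : ℝ) - x 1 • EuclideanSpace.single 0 (1 : ℝ) := by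
  ext i
  fin_cases i <;> simp [rotv]

lemma OmS_apply (f : SchwartzMap E2 ℂ) (x : E2) : OmS f x = fderiv ℝ f x (rotv x) := by
  rw [rotv_eq, map_sub, map_smul, map_smul]
  change mulS 0 (dS 1 f) x - mulS 1 (dS 0 f) x = _
  simp only [mulS_apply, dS_apply, Complex.real_smul]

lemma EuS_apply (f : SchwartzMap E2 ℂ) (x : E2) : EuS f x = fderiv ℝ f x x := by
  conv_rhs => rw [decomp x, map_add, map_smul, map_smul, ← decomp x]
  change mulS 0 (dS 0 f) x + mulS 1 (dS 1 f) x = _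
  simp only [mulS_apply, dS_apply, Complex.real_smul]

lemma inner_single (i : Fin 2) (x : E2) :
    inner ℝ x (EuclideanSpace.single i (1 : ℝ)) = x i := by
  simp [EuclideanSpace.inner_single_right]

lemma fourier_dS (i : Fin 2) (f : SchwartzMap E2 ℂ) (ξ : E2) :
    (𝓕 (dS i f)) ξ = 2 * Real.pi * Complex.I * ((ξ i : ℂ) * (𝓕 f) ξ) := by
  have := SchwartzMap.fourier_lineDerivOp_eq f (EuclideanSpace.single i (1 : ℝ))
  have h2 := DFunLike.congr_fun this ξ
  simp only [inner_single] at h2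
  refine Eq.trans h2 ?_
  rw [smul_apply, SchwartzMap.smulLeftCLM_apply_apply (coord_growth i)]
  simp

lemma dS_fourier (i : Fin 2) (f : SchwartzMap E2 ℂ) (ξ : E2) :
    dS i (𝓕 f) ξ = -(2 * Real.pi * Complex.I) * (𝓕 (mulS i f)) ξ := by
  have := SchwartzMap.lineDerivOp_fourier_eq f (EuclideanSpace.single i (1 : ℝ))
  have h2 := DFunLike.congr_fun this ξ
  simp only [inner_single] at h2
  refine Eq.trans h2 ?_
  rw [FourierTransform.fourier_smul]
  rfl

lemma dS_mulS (i j : Fin 2) (f : SchwartzMap E2 ℂ) (x : E2) :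
    dS i (mulS j f) x = (if i = j then f x else 0) + (x j : ℂ) * dS i f x := by
  rw [dS_apply, dS_apply]
  have h0 : (mulS j f : E2 → ℂ) = (fun x : E2 => x j) • (f : E2 → ℂ) := by
    funext x; rw [mulS_apply, Pi.smul_apply', Complex.real_smul]
  have h1 : HasFDerivAt (fun x : E2 => x j)
    (EuclideanSpace.proj (𝕜 := ℝ) (ι := Fin 2) j) x :=
    (EuclideanSpace.proj (𝕜 := ℝ) (ι := Fin 2) j).hasFDerivAt
  have h2 := h1.smul (f.hasFDerivAt x)
  rw [h0, h2.fderiv]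
  simp only [add_apply, smul_apply,
    ContinuousLinearMap.smulRight_apply, Complex.real_smul]
  by_cases hij : i = j
  · subst hij; simp [add_comm]
  · have : j ≠ i := fun h => hij h.symm
    simp [hij, this]

lemma fourier_mulS_dS (a b : Fin 2) (f : SchwartzMap E2 ℂ) (ξ : E2) :
    (𝓕 (mulS a (dS b f))) ξ = -(if a = b then (𝓕 f) ξ else 0) - (ξ b : ℂ) * dS a (𝓕 f) ξ := by
  have h1 := dS_fourier a (dS b f) ξ
  have h2 : 𝓕 (dS b f) = (2 * Real.pi * Complex.I : ℂ) • mulS b (𝓕 f) := by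
    ext ξ
    rw [fourier_dS, smul_apply, mulS_apply, smul_eq_mul]
  have h3 : dS a (𝓕 (dS b f)) ξ = (2 * Real.pi * Complex.I : ℂ) * dS a (mulS b (𝓕 f)) ξ := by
    rw [h2, dS_apply, dS_apply]
    have := (mulS b (𝓕 f)).hasFDerivAt ξ
    have h := this.const_smul (2 * Real.pi * Complex.I : ℂ)
    have h' := h.fderiv
    have h'' := congrArg (fun L => L (EuclideanSpace.single a (1:ℝ))) h'
    exact h''
  rw [h3, dS_mulS] at h1
  have hc : (2 * Real.pi * Complex.I : ℂ) ≠ 0 := Complex.two_pi_I_ne_zero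
  have h4 := mul_left_cancel₀ hc (h1.trans (neg_mul_comm _ _))
  rw [← neg_eq_iff_eq_neg.2 h4.symm.symm]
  ring

lemma fourier_OmS (f : SchwartzMap E2 ℂ) : 𝓕 (OmS f) = OmS (𝓕 f) := by
  ext ξ
  have : 𝓕 (OmS f) = 𝓕 (mulS 0 (dS 1 f)) - 𝓕 (mulS 1 (dS 0 f)) := by
    change FourierTransform.fourierCLM ℂ (SchwartzMap E2 ℂ) (mulS 0 (dS 1 f) - mulS 1 (dS 0 f)) = _
    rw [map_sub]; rfl
  rw [this, sub_apply, fourier_mulS_dS, fourier_mulS_dS]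
  change _ = mulS 0 (dS 1 (𝓕 f)) ξ - mulS 1 (dS 0 (𝓕 f)) ξ
  rw [mulS_apply, mulS_apply]
  simp
  ring

/-- The Fourier transform turns `x·∇` into `-2 - ξ·∇` in dimension two. -/
lemma fourier_EuS (f : SchwartzMap E2 ℂ) (ξ : E2) :
    (𝓕 (EuS f)) ξ = -(2 * (𝓕 f) ξ) - EuS (𝓕 f) ξ := by
  have : 𝓕 (EuS f) = 𝓕 (mulS 0 (dS 0 f)) + 𝓕 (mulS 1 (dS 1 f)) := by
    change FourierTransform.fourierCLM ℂ (SchwartzMap E2 ℂ) (mulS 0 (dS 0 f) + mulS 1 (dS 1 f)) = _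
    rw [map_add]; rfl
  rw [this, add_apply, fourier_mulS_dS, fourier_mulS_dS]
  change _ = _ - (mulS 0 (dS 0 (𝓕 f)) ξ + mulS 1 (dS 1 (𝓕 f)) ξ)
  rw [mulS_apply, mulS_apply]
  simp
  ring

lemma N2_fourier (f : SchwartzMap E2 ℂ) : N2 (𝓕 f : SchwartzMap E2 ℂ) = N2 f := by
  rw [N2, N2, SchwartzMap.integral_norm_sq_fourier]

lemma schwartz_memLp (f : SchwartzMap E2 ℂ) : MemLp f 2 := f.memLp 2 volume

/-! ### Pointwise bounds by `L²` norms -/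

lemma sqrt_norm_le (ξ : E2) : Real.sqrt ‖ξ‖ ≤ 1 + |ξ 0| + |ξ 1| := by
  have h1 : ‖ξ‖ ≤ |ξ 0| + |ξ 1| := by
    conv_lhs => rw [decomp ξ]
    refine (norm_add_le _ _).trans ?_
    simp [norm_smul]
  rw [Real.sqrt_le_left (by positivity)]
  nlinarith [abs_nonneg (ξ 0), abs_nonneg (ξ 1)]

/-- The function `|ξ|^{1/2} F`. -/
def sqm (F : E2 → ℂ) (ξ : E2) : ℂ := ((Real.sqrt ‖ξ‖ : ℝ) : ℂ) * F ξ

lemma sqm_norm_le (F : SchwartzMap E2 ℂ) (ξ : E2) :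
    ‖sqm F ξ‖ ≤ ‖F ξ‖ + ‖mulS 0 F ξ‖ + ‖mulS 1 F ξ‖ := by
  have h := mul_le_mul_of_nonneg_right (sqrt_norm_le ξ) (norm_nonneg (F ξ))
  simp only [sqm, mulS_apply, norm_mul, Complex.norm_real, Real.norm_eq_abs,
    abs_of_nonneg (Real.sqrt_nonneg _)]
  linarith

lemma sqm_continuous {F : E2 → ℂ} (hF : Continuous F) : Continuous (sqm F) := by
  unfold sqm; fun_prop

lemma sqm_integrable (F : SchwartzMap E2 ℂ) : Integrable (sqm F) := by
  refine Integrable.mono' ((F.integrable.norm.add (mulS 0 F).integrable.norm).add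
    (mulS 1 F).integrable.norm) (sqm_continuous F.continuous).aestronglyMeasurable
    (Filter.Eventually.of_forall fun ξ => sqm_norm_le F ξ)

lemma sqm_memLp (F : SchwartzMap E2 ℂ) : MemLp (sqm F) 2 := by
  refine MemLp.of_le (((schwartz_memLp F).norm.add (schwartz_memLp (mulS 0 F)).norm).add
    (schwartz_memLp (mulS 1 F)).norm) (sqm_continuous F.continuous).aestronglyMeasurable
    (Filter.Eventually.of_forall fun ξ => ?_)
  refine (sqm_norm_le F ξ).trans (le_abs_self _)

lemma Rt_eq (t : ℝ) (F : SchwartzMap E2 ℂ) (ξ : E2) :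
    Rt t F ξ = EuS F ξ + (Complex.I * (t / 2)) * sqm F ξ := by
  rw [Rt, EuS_apply, sqm]
  push_cast
  ring

lemma Rt_memLp (t : ℝ) (F : SchwartzMap E2 ℂ) : MemLp (Rt t F) 2 := by
  have : Rt t F = fun ξ => EuS F ξ + (Complex.I * (t / 2)) * sqm F ξ := funext (Rt_eq t F)
  rw [this]
  exact (schwartz_memLp _).add ((sqm_memLp F).const_mul _)

lemma Om_fourier (f : SchwartzMap E2 ℂ) : Om (𝓕 f : SchwartzMap E2 ℂ) = (𝓕 (OmS f) : SchwartzMap E2 ℂ) := by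
  funext ξ
  rw [fourier_OmS, OmS_apply]
  rfl

/-- Multiplication by `ξ_j` commutes with `Rt` up to a lower order term, because `ξ_j` is homogeneous of
degree one. -/
lemma Rt_dS (t : ℝ) (j : Fin 2) (f : SchwartzMap E2 ℂ) (ξ : E2) :
    (ξ j : ℂ) * Rt t (𝓕 f : SchwartzMap E2 ℂ) ξ = (2 * Real.pi * Complex.I)⁻¹ *
      (Rt t (𝓕 (dS j f) : SchwartzMap E2 ℂ) ξ + (-1) * (𝓕 (dS j f) : SchwartzMap E2 ℂ) ξ) := by
  have hc : (2 * Real.pi * Complex.I : ℂ) ≠ 0 := Complex.two_pi_I_ne_zero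
  have h2 : 𝓕 (dS j f) = (2 * Real.pi * Complex.I : ℂ) • mulS j (𝓕 f) := by
    ext ξ
    rw [fourier_dS, smul_apply, mulS_apply, smul_eq_mul]
  have h3 : fderiv ℝ (𝓕 (dS j f) : SchwartzMap E2 ℂ) ξ ξ =
      (2 * Real.pi * Complex.I : ℂ) * fderiv ℝ (mulS j (𝓕 f)) ξ ξ := by
    rw [h2]
    have h := ((mulS j (𝓕 f)).hasFDerivAt ξ).const_smul (2 * Real.pi * Complex.I : ℂ)
    exact congrArg (fun L => L ξ) h.fderiv
  have h4 : fderiv ℝ (mulS j (𝓕 f)) ξ ξ = (ξ j : ℂ) * (𝓕 f : SchwartzMap E2 ℂ) ξ +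
      (ξ j : ℂ) * fderiv ℝ (𝓕 f : SchwartzMap E2 ℂ) ξ ξ := by
    rw [← EuS_apply, ← EuS_apply]
    change mulS 0 (dS 0 _) ξ + mulS 1 (dS 1 _) ξ = _ + _ * (mulS 0 (dS 0 _) ξ + mulS 1 (dS 1 _) ξ)
    simp only [mulS_apply, dS_mulS]
    fin_cases j <;> simp <;> ring
  rw [Rt, Rt, h3, h4, fourier_dS]
  field_simp
  ring

lemma norm_two_pi_inv_le : ‖(2 * Real.pi * Complex.I : ℂ)⁻¹‖ ≤ 1 := by
  rw [norm_inv]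
  refine inv_le_one_of_one_le₀ ?_
  simp [abs_of_pos Real.pi_pos]
  linarith [Real.pi_gt_three]

lemma N2_coord_fourier (j : Fin 2) (f : SchwartzMap E2 ℂ) :
    N2 (fun ξ : E2 => (ξ j : ℂ) * (𝓕 f : SchwartzMap E2 ℂ) ξ) ≤ N2 (dS j f) := by
  have hc : (2 * Real.pi * Complex.I : ℂ) ≠ 0 := Complex.two_pi_I_ne_zero
  have : (fun ξ : E2 => (ξ j : ℂ) * (𝓕 f : SchwartzMap E2 ℂ) ξ) =
      fun ξ => (2 * Real.pi * Complex.I)⁻¹ * (𝓕 (dS j f) : SchwartzMap E2 ℂ) ξ := by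
    funext ξ
    rw [fourier_dS]
    field_simp
  rw [this, N2_const_mul, N2_fourier]
  exact mul_le_of_le_one_left (N2_nonneg _) norm_two_pi_inv_le

lemma N2_coord_Rt (t : ℝ) (j : Fin 2) (f : SchwartzMap E2 ℂ) :
    MemLp (fun ξ : E2 => (ξ j : ℂ) * Rt t (𝓕 f : SchwartzMap E2 ℂ) ξ) 2 ∧
    N2 (fun ξ : E2 => (ξ j : ℂ) * Rt t (𝓕 f : SchwartzMap E2 ℂ) ξ) ≤
      N2 (Rt t (𝓕 (dS j f) : SchwartzMap E2 ℂ)) + N2 (dS j f) := by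
  have m1 := Rt_memLp t (𝓕 (dS j f))
  have m2 := (schwartz_memLp (𝓕 (dS j f))).const_mul (-1)
  simp only [Rt_dS]
  refine ⟨(m1.add m2).const_mul _, ?_⟩
  rw [N2_const_mul]
  refine (mul_le_of_le_one_left (N2_nonneg _) norm_two_pi_inv_le).trans ?_
  refine (N2_add_le m1 m2).trans ?_
  rw [N2_const_mul, N2_fourier]
  simp

lemma cs_fourier (f : SchwartzMap E2 ℂ) :
    Integrable (fun ξ : E2 => (Real.sqrt ‖ξ‖)⁻¹ * ‖(𝓕 f : SchwartzMap E2 ℂ) ξ‖) ∧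
    ∫ ξ : E2, (Real.sqrt ‖ξ‖)⁻¹ * ‖(𝓕 f : SchwartzMap E2 ℂ) ξ‖ ≤
      cw * (N2 f + N2 (dS 0 f) + N2 (dS 1 f)) := by
  have hm : ∀ i : Fin 2, MemLp (fun ξ : E2 => (ξ i : ℂ) * (𝓕 f : SchwartzMap E2 ℂ) ξ) 2 := fun i => by
    have := schwartz_memLp (mulS i (𝓕 f))
    rwa [show (mulS i (𝓕 f) : E2 → ℂ) = _ from funext (mulS_apply i (𝓕 f))] at this
  obtain ⟨h1, h2⟩ := weighted_cs (schwartz_memLp (𝓕 f)) hm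
  refine ⟨h1, h2.trans (mul_le_mul_of_nonneg_left ?_ cw_nonneg)⟩
  rw [N2_fourier]
  linarith [N2_coord_fourier 0 f, N2_coord_fourier 1 f]

lemma cs_Rt (t : ℝ) (f : SchwartzMap E2 ℂ) :
    Integrable (fun ξ : E2 => (Real.sqrt ‖ξ‖)⁻¹ * ‖Rt t (𝓕 f : SchwartzMap E2 ℂ) ξ‖) ∧
    ∫ ξ : E2, (Real.sqrt ‖ξ‖)⁻¹ * ‖Rt t (𝓕 f : SchwartzMap E2 ℂ) ξ‖ ≤
      cw * (N2 (Rt t (𝓕 f : SchwartzMap E2 ℂ)) +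
        (N2 (Rt t (𝓕 (dS 0 f) : SchwartzMap E2 ℂ)) + N2 (dS 0 f)) +
        (N2 (Rt t (𝓕 (dS 1 f) : SchwartzMap E2 ℂ)) + N2 (dS 1 f))) := by
  obtain ⟨h1, h2⟩ := weighted_cs (Rt_memLp t (𝓕 f)) fun i => (N2_coord_Rt t i f).1
  refine ⟨h1, h2.trans (mul_le_mul_of_nonneg_left ?_ cw_nonneg)⟩
  linarith [(N2_coord_Rt t 0 f).2, (N2_coord_Rt t 1 f).2]

lemma fourier_inversion (f : SchwartzMap E2 ℂ) (x : E2) :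
    f x = ∫ ξ, Complex.exp (Complex.I * (2 * Real.pi * inner ℝ ξ x : ℝ)) *
      (𝓕 f : SchwartzMap E2 ℂ) ξ := by
  have h : 𝓕⁻ (𝓕 f) = f := FourierTransform.fourierInv_fourier_eq f
  have h2 : (𝓕⁻ (𝓕 f) : SchwartzMap E2 ℂ) x = f x := by rw [h]
  rw [← h2, SchwartzMap.fourierInv_coe, Real.fourierInv_eq']
  refine integral_congr_ae (Filter.Eventually.of_forall fun ξ => ?_)
  simp only [smul_eq_mul]
  rw [mul_comm Complex.I]

/-- The sum of the `L²` norms of `h`, `∂₁h`, `∂₂h`. -/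
def Asum (h : SchwartzMap E2 ℂ) : ℝ := N2 h + N2 (dS 0 h) + N2 (dS 1 h)

/-- The sum of the `L²` norms of the image under `Rt` of the Fourier transforms of `h`, `∂₁h`,
`∂₂h`. -/
def Bsum (t : ℝ) (h : SchwartzMap E2 ℂ) : ℝ := N2 (Rt t (𝓕 h : SchwartzMap E2 ℂ)) +
  N2 (Rt t (𝓕 (dS 0 h) : SchwartzMap E2 ℂ)) + N2 (Rt t (𝓕 (dS 1 h) : SchwartzMap E2 ℂ))

lemma Phi_bound (t : ℝ) (f : SchwartzMap E2 ℂ) :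
    Integrable (Phi t (𝓕 f : SchwartzMap E2 ℂ)) ∧
    ∫ ξ, Phi t (𝓕 f : SchwartzMap E2 ℂ) ξ ≤ cw * (2 * Asum f + 2 * Asum (OmS f) +
      Asum (OmS (OmS f)) + Bsum t f + Bsum t (OmS f)) := by
  have e : Phi t (𝓕 f : SchwartzMap E2 ℂ) = fun ξ =>
      (Real.sqrt ‖ξ‖)⁻¹ * ‖(𝓕 f : SchwartzMap E2 ℂ) ξ‖ +
      (Real.sqrt ‖ξ‖)⁻¹ * ‖(𝓕 (OmS f) : SchwartzMap E2 ℂ) ξ‖ +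
      (Real.sqrt ‖ξ‖)⁻¹ * ‖(𝓕 (OmS (OmS f)) : SchwartzMap E2 ℂ) ξ‖ +
      (Real.sqrt ‖ξ‖)⁻¹ * ‖Rt t (𝓕 f : SchwartzMap E2 ℂ) ξ‖ +
      (Real.sqrt ‖ξ‖)⁻¹ * ‖Rt t (𝓕 (OmS f) : SchwartzMap E2 ℂ) ξ‖ := by
    funext ξ
    rw [Phi, Om_fourier, Om_fourier]
    ring
  obtain ⟨i1, b1⟩ := cs_fourier f
  obtain ⟨i2, b2⟩ := cs_fourier (OmS f)
  obtain ⟨i3, b3⟩ := cs_fourier (OmS (OmS f))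
  obtain ⟨i4, b4⟩ := cs_Rt t f
  obtain ⟨i5, b5⟩ := cs_Rt t (OmS f)
  rw [e]
  have j2 := i1.add i2
  have j3 := j2.add i3
  have j4 := j3.add i4
  refine ⟨j4.add i5, ?_⟩
  have s1 := integral_add j4 i5
  have s2 := integral_add j3 i4
  have s3 := integral_add j2 i3
  have s4 := integral_add i1 i2
  simp only [Pi.add_apply] at s1 s2 s3 s4
  rw [s1, s2, s3, s4]
  have n1 := mul_nonneg cw_nonneg (N2_nonneg f)
  have n2 := mul_nonneg cw_nonneg (N2_nonneg (OmS f))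
  simp only [Asum, Bsum]
  linarith

/-- The time-weighted pointwise bound for a Schwartz function. The origin `x = 0`, excluded in
`core_bound`, is recovered by continuity. -/
lemma freq_bound (t : ℝ) (f : SchwartzMap E2 ℂ) (x : E2) :
    |t| * ‖f x‖ ≤ 800000 * (cw * (2 * Asum f + 2 * Asum (OmS f) +
      Asum (OmS (OmS f)) + Bsum t f + Bsum t (OmS f))) := by
  obtain ⟨hi, hb⟩ := Phi_bound t f
  have hne : ∀ y : E2, y ≠ 0 → |t| * ‖f y‖ ≤ 800000 * ∫ ξ, Phi t (𝓕 f : SchwartzMap E2 ℂ) ξ := by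
    intro y hy
    rw [fourier_inversion f y]
    exact core_bound t ((𝓕 f : SchwartzMap E2 ℂ).smooth ⊤) (𝓕 f : SchwartzMap E2 ℂ).integrable hi hy
  have hcl : IsClosed {y : E2 | |t| * ‖f y‖ ≤ 800000 * ∫ ξ, Phi t (𝓕 f : SchwartzMap E2 ℂ) ξ} :=
    isClosed_le (by have := f.continuous; fun_prop) continuous_const
  have hd : Dense ({0}ᶜ : Set E2) := dense_compl_singleton 0
  have := hcl.closure_subset_iff.2 (fun y hy => hne y hy : ({0}ᶜ : Set E2) ⊆ _)
  rw [hd.closure_eq] at this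
  exact (this (Set.mem_univ x)).trans (mul_le_mul_of_nonneg_left hb (by norm_num))

/-- The Sobolev embedding used for bounded times. -/
lemma low_bound (f : SchwartzMap E2 ℂ) (x : E2) :
    ‖f x‖ ≤ cw * (Asum f + Asum (dS 0 f) + Asum (dS 1 f)) := by
  obtain ⟨i1, b1⟩ := cs_fourier f
  obtain ⟨i2, b2⟩ := cs_fourier (dS 0 f)
  obtain ⟨i3, b3⟩ := cs_fourier (dS 1 f)
  have j2 := i1.add i2
  have j3 := j2.add i3
  have s3 := integral_add j2 i3
  have s4 := integral_add i1 i2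
  simp only [Pi.add_apply] at s3 s4
  have h0 : ‖f x‖ ≤ ∫ ξ, ‖(𝓕 f : SchwartzMap E2 ℂ) ξ‖ := by
    rw [fourier_inversion f x]
    refine (norm_integral_le_integral_norm _).trans (le_of_eq ?_)
    refine integral_congr_ae (Filter.Eventually.of_forall fun ξ => ?_)
    simp only
    rw [norm_mul, mul_comm Complex.I, Complex.norm_exp_ofReal_mul_I, one_mul]
  have h1 : ∫ ξ, ‖(𝓕 f : SchwartzMap E2 ℂ) ξ‖ ≤
      ∫ ξ : E2, ((Real.sqrt ‖ξ‖)⁻¹ * ‖(𝓕 f : SchwartzMap E2 ℂ) ξ‖ +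
      (Real.sqrt ‖ξ‖)⁻¹ * ‖(𝓕 (dS 0 f) : SchwartzMap E2 ℂ) ξ‖ +
      (Real.sqrt ‖ξ‖)⁻¹ * ‖(𝓕 (dS 1 f) : SchwartzMap E2 ℂ) ξ‖) := by
    refine integral_mono_ae (𝓕 f : SchwartzMap E2 ℂ).integrable.norm j3 ?_
    have h0' : ∀ᵐ ξ : E2, ξ ≠ 0 := by simp [ae_iff]
    filter_upwards [h0'] with ξ hξ
    have hp : 0 < Real.sqrt ‖ξ‖ := Real.sqrt_pos.2 (norm_pos_iff.2 hξ)
    have hq : ∀ j : Fin 2, |ξ j| * ‖(𝓕 f : SchwartzMap E2 ℂ) ξ‖ ≤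
        ‖(𝓕 (dS j f) : SchwartzMap E2 ℂ) ξ‖ := fun j => by
      rw [fourier_dS, norm_mul, norm_mul (ξ j : ℂ), Complex.norm_real, Real.norm_eq_abs]
      refine le_mul_of_one_le_left (by positivity) ?_
      simp [abs_of_pos Real.pi_pos]
      linarith [Real.pi_gt_three]
    have h2 := mul_le_mul_of_nonneg_right (sqrt_norm_le ξ) (norm_nonneg ((𝓕 f : SchwartzMap E2 ℂ) ξ))
    rw [← mul_add, ← mul_add, inv_mul_eq_div, le_div_iff₀ hp]
    linarith [hq 0, hq 1]
  rw [s3, s4] at h1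
  simp only [Asum]
  linarith

/-! ### Curves of Schwartz functions -/

/-- `u` is smooth on `ℝ × ℝ²`, and `g`, `g'` are continuous curves of Schwartz functions
representing `u(t, ·)` and `∂_t u(t, ·)`. -/
structure Reg (u : ℝ × E2 → ℂ) (g g' : ℝ → SchwartzMap E2 ℂ) : Prop where
  smooth : ContDiff ℝ ∞ u
  cont : Continuous g
  cont' : Continuous g'
  eq : ∀ t x, g t x = u (t, x)
  eq' : ∀ t x, g' t x = fderiv ℝ u (t, x) (1, 0)

/-- The vector fields generating `Ω`, `∂₁`, `∂₂`. -/
def vf : Fin 3 → E2 → E2 :=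
  ![rotv, fun _ => EuclideanSpace.single 0 1, fun _ => EuclideanSpace.single 1 1]

/-- The operators `Ω`, `∂₁`, `∂₂` on Schwartz functions. -/
def opS : Fin 3 → SchwartzMap E2 ℂ →L[ℝ] SchwartzMap E2 ℂ := ![OmS, dS 0, dS 1]

lemma opT_eq (i : Fin 3) (u : ℝ × E2 → ℂ) :
    opT i u = fun p => fderiv ℝ u p (0, vf i p.2) := by
  fin_cases i <;> rfl

lemma opS_apply (i : Fin 3) (f : SchwartzMap E2 ℂ) (x : E2) :
    opS i f x = fderiv ℝ f x (vf i x) := by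
  fin_cases i
  · exact OmS_apply f x
  · rfl
  · rfl

lemma vf_contDiff (i : Fin 3) : ContDiff ℝ ∞ (vf i) := by
  fin_cases i
  · exact rotL.contDiff
  · exact contDiff_const
  · exact contDiff_const

lemma hasFDerivAt_slice {u : ℝ × E2 → ℂ} {t : ℝ} {x : E2} (hu : DifferentiableAt ℝ u (t, x))
    (v : E2) : fderiv ℝ (fun x => u (t, x)) x v = fderiv ℝ u (t, x) (0, v) := by
  have h1 : HasFDerivAt (fun x : E2 => ((t, x) : ℝ × E2)) (ContinuousLinearMap.inr ℝ ℝ E2) x := by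
    have := (hasFDerivAt_const t x).prodMk (hasFDerivAt_id (𝕜 := ℝ) x)
    exact this
  have h2 : HasFDerivAt (fun x => u (t, x)) ((fderiv ℝ u (t, x)).comp
      (ContinuousLinearMap.inr ℝ ℝ E2)) x := hu.hasFDerivAt.comp x h1
  rw [h2.fderiv]
  rfl

lemma fderiv_time {u : ℝ × E2 → ℂ} {t : ℝ} {x : E2} (hu : DifferentiableAt ℝ u (t, x)) :
    HasDerivAt (fun s => u (s, x)) (fderiv ℝ u (t, x) (1, 0)) t := by
  have l : HasDerivAt (fun s : ℝ => ((s, x) : ℝ × E2)) (1, 0) t :=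
    (hasDerivAt_id' t).prodMk (hasDerivAt_const t x)
  have hu' : HasFDerivAt u (fderiv ℝ u (t, x)) ((fun s : ℝ => ((s, x) : ℝ × E2)) t) :=
    hu.hasFDerivAt
  exact hu'.comp_hasDerivAt t l

lemma opT_contDiff (i : Fin 3) {u : ℝ × E2 → ℂ} (hu : ContDiff ℝ ∞ u) :
    ContDiff ℝ ∞ (opT i u) := by
  rw [opT_eq]
  exact (hu.fderiv_right (m := ∞) (by simp)).clm_apply
    (contDiff_const.prodMk ((vf_contDiff i).comp contDiff_snd))

lemma Reg.slice {u : ℝ × E2 → ℂ} {g g' : ℝ → SchwartzMap E2 ℂ} (h : Reg u g g') (t : ℝ) (x v : E2) :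
    fderiv ℝ (g t) x v = fderiv ℝ u (t, x) (0, v) := by
  have : (g t : E2 → ℂ) = fun x => u (t, x) := funext (h.eq t)
  rw [this, hasFDerivAt_slice (h.smooth.differentiable (by simp) _)]

/-- `∂_t` commutes with `Ω`, `∂₁`, `∂₂`. -/
lemma fderiv_opT_time (i : Fin 3) {u : ℝ × E2 → ℂ} (hu : ContDiff ℝ ∞ u) (t : ℝ) (x : E2) :
    fderiv ℝ (opT i u) (t, x) (1, 0) =
      fderiv ℝ (fun p => fderiv ℝ u p (1, 0)) (t, x) (0, vf i x) := by
  have h1 := fderiv_time ((opT_contDiff i hu).differentiable (by simp) (t, x))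
  have h2 := fderiv_time (differentiable_fderiv_apply hu (0, vf i x) (t, x))
  rw [fderiv_clm_apply_const hu] at h2 ⊢
  rw [fderiv_fderiv_symm hu]
  rw [opT_eq] at h1 ⊢
  exact h1.unique h2

lemma Reg.opT {u : ℝ × E2 → ℂ} {g g' : ℝ → SchwartzMap E2 ℂ} (h : Reg u g g') (i : Fin 3) :
    Reg (opT i u) (fun t => opS i (g t)) (fun t => opS i (g' t)) where
  smooth := opT_contDiff i h.smooth
  cont := (opS i).continuous.comp h.cont
  cont' := (opS i).continuous.comp h.cont'
  eq t x := by rw [opS_apply, h.slice, opT_eq]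
  eq' t x := by
    rw [fderiv_opT_time i h.smooth, opS_apply,
      ← hasFDerivAt_slice (differentiable_fderiv_apply h.smooth _ _)]
    have : (g' t : E2 → ℂ) = fun x => fderiv ℝ u (t, x) (1, 0) := funext (h.eq' t)
    rw [this]

/-- Locally uniform decay along a continuous curve of Schwartz functions. -/
lemma uniform_decay {K : ℝ → SchwartzMap E2 ℂ} (hK : Continuous K) (t₀ : ℝ) (k : ℕ) :
    ∃ C : ℝ, 0 ≤ C ∧ ∀ t ∈ Metric.ball t₀ 1, ∀ x, ‖K t x‖ ≤ C * (1 + ‖x‖) ^ (-(k : ℝ)) := by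
  obtain ⟨p, hp⟩ : ∃ p : Seminorm ℝ (SchwartzMap E2 ℂ), p = (Finset.Iic (k, 0)).sup
    fun m => SchwartzMap.seminorm ℝ m.1 m.2 := ⟨_, rfl⟩
  have hpc : Continuous p := by
    rw [hp]
    refine Seminorm.continuous_finsetSup fun m _ => ?_
    exact (schwartz_withSeminorms ℝ E2 ℂ).continuous_seminorm m
  obtain ⟨B, hB⟩ := (isCompact_closedBall t₀ 1).bddAbove_image (f := fun t => p (K t))
    (hpc.comp hK).continuousOn
  refine ⟨2 ^ k * |B|, by positivity, fun t ht x => ?_⟩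
  have h1 := SchwartzMap.one_add_le_sup_seminorm_apply (𝕜 := ℝ) (m := (k, 0)) (k := k) (n := 0)
    le_rfl le_rfl (K t) x
  rw [← hp, norm_iteratedFDeriv_zero] at h1
  have h2 : p (K t) ≤ |B| := (hB ⟨t, Metric.ball_subset_closedBall ht, rfl⟩).trans (le_abs_self B)
  have hpos : 0 < (1 + ‖x‖) ^ k := by positivity
  rw [Real.rpow_neg (by positivity), Real.rpow_natCast, ← div_eq_mul_inv, le_div_iff₀ hpos]
  have h3 : (2:ℝ) ^ k * p (K t) ≤ 2 ^ k * |B| := mul_le_mul_of_nonneg_left h2 (by positivity)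
  linarith

lemma decay_integrable : Integrable (fun x : E2 => (1 + ‖x‖) ^ (-((3:ℕ) : ℝ))) := by
  refine integrable_one_add_norm ?_
  rw [finrank_euclideanSpace_fin]; norm_num

/-- The Fourier transform of a curve with Schwartz time derivative may be differentiated under
the integral sign. -/
lemma Reg.fourier_deriv {u : ℝ × E2 → ℂ} {g g' : ℝ → SchwartzMap E2 ℂ} (h : Reg u g g')
    (t : ℝ) (ξ : E2) :
    HasDerivAt (fun t => (𝓕 (g t) : SchwartzMap E2 ℂ) ξ) ((𝓕 (g' t) : SchwartzMap E2 ℂ) ξ) t := by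
  obtain ⟨C, hC, hb⟩ := uniform_decay h.cont' t 3
  simp only [SchwartzMap.fourier_coe, Real.fourier_eq']
  have e : ∀ x : E2, ‖Complex.exp (((-2 * Real.pi * inner ℝ x ξ : ℝ) : ℂ) * Complex.I)‖ = 1 :=
    fun x => Complex.norm_exp_ofReal_mul_I _
  have hec : Continuous fun x : E2 => Complex.exp (((-2 * Real.pi * inner ℝ x ξ : ℝ) : ℂ) * Complex.I) := by
    fun_prop
  have key := hasDerivAt_integral_of_dominated_loc_of_deriv_le (μ := (volume : Measure E2))
    (F := fun t x => Complex.exp (((-2 * Real.pi * inner ℝ x ξ : ℝ) : ℂ) * Complex.I) • g t x)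
    (F' := fun t x => Complex.exp (((-2 * Real.pi * inner ℝ x ξ : ℝ) : ℂ) * Complex.I) • g' t x)
    (x₀ := t) (s := Metric.ball t 1) (bound := fun x => C * (1 + ‖x‖) ^ (-((3:ℕ) : ℝ)))
    (Metric.ball_mem_nhds t one_pos)
    (Filter.Eventually.of_forall fun s => (hec.smul (g s).continuous).aestronglyMeasurable)
    ?_ (hec.smul (g' t).continuous).aestronglyMeasurable ?_ (decay_integrable.const_mul C) ?_
  · exact key.2
  · refine (g t).integrable.norm.mono' (hec.smul (g t).continuous).aestronglyMeasurable
      (Filter.Eventually.of_forall fun x => ?_)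
    rw [norm_smul, e, one_mul]
  · refine Filter.Eventually.of_forall fun x s hs => ?_
    rw [norm_smul, e, one_mul]
    exact hb s hs x
  · refine Filter.Eventually.of_forall fun x s hs => ?_
    have h1 : HasDerivAt (fun s => g s x) (g' s x) s := by
      have := fderiv_time (h.smooth.differentiable (by simp) (s, x))
      rw [h.eq' s x]
      simpa only [h.eq] using this
    simp only [smul_eq_mul]
    exact h1.const_mul _

/-! ### Commutation of the vector fields with the half-wave operator -/

/-- The phase `2πi ξ·x` of the inverse Fourier transform, as a function of `(t, x)`. -/
def phaseL (ξ : E2) : ℝ × E2 →L[ℝ] ℂ :=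
  ((innerSL ℝ ξ).comp (ContinuousLinearMap.snd ℝ ℝ E2)).smulRight (2 * Real.pi * Complex.I)

lemma phaseL_apply (ξ : E2) (p : ℝ × E2) :
    phaseL ξ p = ((2 * Real.pi * inner ℝ ξ p.2 : ℝ) : ℂ) * Complex.I := by
  simp [phaseL]
  ring

lemma norm_exp_phaseL (ξ : E2) (p : ℝ × E2) : ‖Complex.exp (phaseL ξ p)‖ = 1 := by
  rw [phaseL_apply]; exact Complex.norm_exp_ofReal_mul_I _

lemma phaseL_continuous (p : ℝ × E2) : Continuous fun ξ => Complex.exp (phaseL ξ p) := by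
  simp only [phaseL_apply]
  fun_prop

lemma exp_integrable {W : E2 → ℂ} (hW : Integrable W) (p : ℝ × E2) :
    Integrable fun ξ => Complex.exp (phaseL ξ p) * W ξ := by
  refine hW.norm.mono' ((phaseL_continuous p).aestronglyMeasurable.mul hW.aestronglyMeasurable)
    (Filter.Eventually.of_forall fun ξ => ?_)
  rw [norm_mul, norm_exp_phaseL, one_mul]

lemma fourierInv_phaseL (W : E2 → ℂ) (p : ℝ × E2) :
    𝓕⁻ W p.2 = ∫ ξ, Complex.exp (phaseL ξ p) * W ξ := by
  rw [Real.fourierInv_eq']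
  simp only [phaseL_apply, smul_eq_mul]

/-- `Λ^{1/2}` applied to a curve of Schwartz functions, as a function of `(t, x)`. -/
def Mu (g : ℝ → SchwartzMap E2 ℂ) (p : ℝ × E2) : ℂ :=
  𝓕⁻ (sqm (𝓕 (g p.1) : SchwartzMap E2 ℂ)) p.2

lemma Reg.halfWaveOp_eq {u : ℝ × E2 → ℂ} {g g' : ℝ → SchwartzMap E2 ℂ} (h : Reg u g g') :
    halfWaveOp u = fun p => fderiv ℝ u p (1, 0) + Complex.I * Mu g p := by
  funext p
  have : (fun x => u (p.1, x)) = (g p.1 : E2 → ℂ) := funext fun x => (h.eq p.1 x).symm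
  simp only [halfWaveOp, fm, Mu, this, SchwartzMap.fourier_coe]
  rfl

/-- The directional derivative `v·∇`. -/
def dirS (v : E2) (f : SchwartzMap E2 ℂ) : SchwartzMap E2 ℂ := v 0 • dS 0 f + v 1 • dS 1 f

lemma inner_coord (ξ v : E2) : inner ℝ ξ v = v 0 * ξ 0 + v 1 * ξ 1 := by
  simp [PiLp.inner_apply]

lemma fourier_dirS (v : E2) (f : SchwartzMap E2 ℂ) (ξ : E2) :
    (𝓕 (dirS v f) : SchwartzMap E2 ℂ) ξ =
      2 * Real.pi * Complex.I * ((inner ℝ ξ v : ℝ) : ℂ) * (𝓕 f : SchwartzMap E2 ℂ) ξ := by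
  have h : 𝓕 (dirS v f) = ((v 0 : ℝ) : ℂ) • 𝓕 (dS 0 f) + ((v 1 : ℝ) : ℂ) • 𝓕 (dS 1 f) := by
    rw [← FourierTransform.fourier_smul, ← FourierTransform.fourier_smul,
      ← FourierTransform.fourier_add]
    rfl
  rw [h, add_apply, smul_apply, smul_apply, fourier_dS, fourier_dS, inner_coord, smul_eq_mul,
    smul_eq_mul]
  push_cast
  ring

/-- The `(t, x)`-derivative of the integrand defining `Mu`. -/
def dMu (g g' : ℝ → SchwartzMap E2 ℂ) (p : ℝ × E2) (ξ : E2) : ℝ × E2 →L[ℝ] ℂ :=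
  (Complex.exp (phaseL ξ p) * ((Real.sqrt ‖ξ‖ : ℝ) : ℂ)) •
    ((ContinuousLinearMap.fst ℝ ℝ E2).smulRight ((𝓕 (g' p.1) : SchwartzMap E2 ℂ) ξ) +
      (𝓕 (g p.1) : SchwartzMap E2 ℂ) ξ • phaseL ξ)

lemma dMu_apply (g g' : ℝ → SchwartzMap E2 ℂ) (p q : ℝ × E2) (ξ : E2) :
    dMu g g' p ξ q = Complex.exp (phaseL ξ p) * ((Real.sqrt ‖ξ‖ : ℝ) : ℂ) *
      (q.1 * (𝓕 (g' p.1) : SchwartzMap E2 ℂ) ξ +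
        (𝓕 (g p.1) : SchwartzMap E2 ℂ) ξ * phaseL ξ q) := by
  simp [dMu]
  ring

lemma Reg.hasFDerivAt_integrand {u : ℝ × E2 → ℂ} {g g' : ℝ → SchwartzMap E2 ℂ} (h : Reg u g g')
    (p : ℝ × E2) (ξ : E2) :
    HasFDerivAt (fun p : ℝ × E2 => Complex.exp (phaseL ξ p) *
      sqm (𝓕 (g p.1) : SchwartzMap E2 ℂ) ξ) (dMu g g' p ξ) p := by
  have d1 : HasFDerivAt (fun p => Complex.exp (phaseL ξ p))
      (Complex.exp (phaseL ξ p) • phaseL ξ) p := (phaseL ξ).hasFDerivAt.cexp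
  have d2 : HasFDerivAt (fun p : ℝ × E2 => (𝓕 (g p.1) : SchwartzMap E2 ℂ) ξ)
      ((ContinuousLinearMap.toSpanSingleton ℝ ((𝓕 (g' p.1) : SchwartzMap E2 ℂ) ξ)).comp
        (ContinuousLinearMap.fst ℝ ℝ E2)) p :=
    (h.fourier_deriv p.1 ξ).hasFDerivAt.comp p hasFDerivAt_fst
  have d3 := d1.mul (d2.const_mul ((Real.sqrt ‖ξ‖ : ℝ) : ℂ))
  refine d3.congr_fderiv ?_
  ext q <;> simp [dMu] <;> ring

lemma norm_phaseL_le (ξ : E2) (q : ℝ × E2) : ‖phaseL ξ q‖ ≤ 7 * ‖ξ‖ * ‖q‖ := by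
  rw [phaseL_apply, norm_mul, Complex.norm_I, mul_one, Complex.norm_real, norm_mul,
    Real.norm_of_nonneg (by positivity)]
  have h1 : ‖(inner ℝ ξ q.2 : ℝ)‖ ≤ ‖ξ‖ * ‖q‖ :=
    (norm_inner_le_norm ξ q.2).trans (mul_le_mul_of_nonneg_left (norm_snd_le q) (norm_nonneg _))
  have h2 : 2 * Real.pi ≤ 7 := by linarith [Real.pi_lt_d2]
  calc 2 * Real.pi * ‖(inner ℝ ξ q.2 : ℝ)‖ ≤ 7 * (‖ξ‖ * ‖q‖) := by
        apply mul_le_mul h2 h1 (norm_nonneg _) (by norm_num)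
    _ = _ := by ring

lemma dMu_norm_le {g g' : ℝ → SchwartzMap E2 ℂ} {p : ℝ × E2} {ξ : E2} {C C' : ℝ}
    (hC : 0 ≤ C) (hC' : 0 ≤ C')
    (h : ‖(𝓕 (g p.1) : SchwartzMap E2 ℂ) ξ‖ ≤ C * (1 + ‖ξ‖) ^ (-((5:ℕ) : ℝ)))
    (h' : ‖(𝓕 (g' p.1) : SchwartzMap E2 ℂ) ξ‖ ≤ C' * (1 + ‖ξ‖) ^ (-((5:ℕ) : ℝ))) :
    ‖dMu g g' p ξ‖ ≤ (C' + 7 * C) * (1 + ‖ξ‖) ^ (-((3:ℕ) : ℝ)) := by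
  have hr : 0 ≤ ‖ξ‖ := norm_nonneg ξ
  have hs : Real.sqrt ‖ξ‖ ≤ 1 + ‖ξ‖ := by
    rw [Real.sqrt_le_left (by positivity)]; nlinarith
  have e : (1 + ‖ξ‖) ^ (-((3:ℕ) : ℝ)) = (1 + ‖ξ‖) ^ 2 * (1 + ‖ξ‖) ^ (-((5:ℕ) : ℝ)) := by
    rw [← Real.rpow_natCast, ← Real.rpow_add (by positivity)]; norm_num
  obtain ⟨D, hD⟩ : ∃ D, D = (1 + ‖ξ‖) ^ (-((5:ℕ) : ℝ)) := ⟨_, rfl⟩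
  have hD0 : 0 ≤ D := by rw [hD]; positivity
  rw [e]
  rw [← hD] at h h' ⊢
  refine ContinuousLinearMap.opNorm_le_bound _ (by positivity) fun q => ?_
  rw [dMu_apply, norm_mul, norm_mul, norm_exp_phaseL, one_mul, Complex.norm_real,
    Real.norm_of_nonneg (Real.sqrt_nonneg _)]
  have hq := norm_nonneg q
  have h1 : ‖(q.1 : ℂ) * (𝓕 (g' p.1) : SchwartzMap E2 ℂ) ξ +
        (𝓕 (g p.1) : SchwartzMap E2 ℂ) ξ * phaseL ξ q‖ ≤ (C' + 7 * C) * (1 + ‖ξ‖) * D * ‖q‖ := by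
    refine (norm_add_le _ _).trans ?_
    rw [norm_mul, norm_mul, Complex.norm_real]
    have a1 : ‖q.1‖ * ‖(𝓕 (g' p.1) : SchwartzMap E2 ℂ) ξ‖ ≤ ‖q‖ * (C' * D) :=
      mul_le_mul (norm_fst_le q) h' (norm_nonneg _) hq
    have a2 : ‖(𝓕 (g p.1) : SchwartzMap E2 ℂ) ξ‖ * ‖phaseL ξ q‖ ≤ (C * D) * (7 * ‖ξ‖ * ‖q‖) :=
      mul_le_mul h (norm_phaseL_le ξ q) (norm_nonneg _) (by positivity)
    have a3 : 0 ≤ C' * D * ‖ξ‖ * ‖q‖ := by positivity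
    have a4 : 0 ≤ C * D * ‖q‖ := by positivity
    nlinarith
  calc _ ≤ (1 + ‖ξ‖) * ((C' + 7 * C) * (1 + ‖ξ‖) * D * ‖q‖) :=
        mul_le_mul hs h1 (norm_nonneg _) (by positivity)
    _ = _ := by ring

lemma dMu_continuous (g g' : ℝ → SchwartzMap E2 ℂ) (p : ℝ × E2) : Continuous (dMu g g' p) := by
  rw [continuous_clm_apply]
  intro q
  simp only [dMu_apply]
  have h1 := phaseL_continuous p
  have h2 : Continuous fun ξ => phaseL ξ q := by simp only [phaseL_apply]; fun_prop
  have h3 := (𝓕 (g p.1) : SchwartzMap E2 ℂ).continuous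
  have h4 := (𝓕 (g' p.1) : SchwartzMap E2 ℂ).continuous
  fun_prop

lemma fourier_curve {g : ℝ → SchwartzMap E2 ℂ} (hg : Continuous g) :
    Continuous fun t => (𝓕 (g t) : SchwartzMap E2 ℂ) :=
  (FourierTransform.fourierCLM ℝ (SchwartzMap E2 ℂ)).continuous.comp hg

/-- Differentiation of `Λ^{1/2} u` under the integral sign, jointly in `(t, x)`. -/
lemma Reg.Mu_hasFDerivAt {u : ℝ × E2 → ℂ} {g g' : ℝ → SchwartzMap E2 ℂ} (h : Reg u g g')
    (p : ℝ × E2) : Integrable (dMu g g' p) ∧ HasFDerivAt (Mu g) (∫ ξ, dMu g g' p ξ) p := by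
  obtain ⟨C, hC, hb⟩ := uniform_decay (fourier_curve h.cont) p.1 5
  obtain ⟨C', hC', hb'⟩ := uniform_decay (fourier_curve h.cont') p.1 5
  have hbd : ∀ ξ : E2, ∀ q ∈ Metric.ball p 1,
      ‖dMu g g' q ξ‖ ≤ (C' + 7 * C) * (1 + ‖ξ‖) ^ (-((3:ℕ) : ℝ)) := by
    intro ξ q hq
    have hq1 : q.1 ∈ Metric.ball p.1 1 := by
      rw [Metric.mem_ball] at hq ⊢
      exact lt_of_le_of_lt (le_max_left _ _) hq
    exact dMu_norm_le hC hC' (hb _ hq1 ξ) (hb' _ hq1 ξ)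
  have hm : ∀ q, AEStronglyMeasurable (dMu g g' q) (volume : Measure E2) :=
    fun q => (dMu_continuous g g' q).aestronglyMeasurable
  have hint := decay_integrable.const_mul (C' + 7 * C)
  have hi : ∀ q : ℝ × E2, Integrable fun ξ => Complex.exp (phaseL ξ q) *
      sqm (𝓕 (g q.1) : SchwartzMap E2 ℂ) ξ := fun q => exp_integrable (sqm_integrable _) q
  refine ⟨hint.mono' (hm p) (Filter.Eventually.of_forall fun ξ =>
    hbd ξ p (Metric.mem_ball_self one_pos)), ?_⟩
  have key := hasFDerivAt_integral_of_dominated_of_fderiv_le (μ := (volume : Measure E2))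
    (F := fun p ξ => Complex.exp (phaseL ξ p) * sqm (𝓕 (g p.1) : SchwartzMap E2 ℂ) ξ)
    (F' := dMu g g') (x₀ := p) (s := Metric.ball p 1)
    (Metric.ball_mem_nhds p one_pos)
    (Filter.Eventually.of_forall fun q => (hi q).aestronglyMeasurable) (hi p) (hm p)
    (Filter.Eventually.of_forall hbd) hint
    (Filter.Eventually.of_forall fun ξ q _ => h.hasFDerivAt_integrand q ξ)
  have e : Mu g = fun p => ∫ ξ, Complex.exp (phaseL ξ p) *
      sqm (𝓕 (g p.1) : SchwartzMap E2 ℂ) ξ := funext fun q => fourierInv_phaseL _ q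
  rw [e]
  exact key

lemma Reg.Mu_fderiv {u : ℝ × E2 → ℂ} {g g' : ℝ → SchwartzMap E2 ℂ} (h : Reg u g g')
    (p : ℝ × E2) (v : E2) :
    fderiv ℝ (Mu g) p (0, v) = 𝓕⁻ (sqm (𝓕 (dirS v (g p.1)) : SchwartzMap E2 ℂ)) p.2 := by
  obtain ⟨h1, h2⟩ := h.Mu_hasFDerivAt p
  rw [h2.fderiv, ContinuousLinearMap.integral_apply h1, fourierInv_phaseL]
  refine integral_congr_ae (Filter.Eventually.of_forall fun ξ => ?_)
  simp only [dMu_apply, sqm, fourier_dirS, phaseL_apply]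
  push_cast
  ring

/-- Integration by parts in the angular variable: the weight `|ξ|^{1/2}` is radial. -/
lemma integral_sqm_Om {H : E2 → ℂ} (hH : ContDiff ℝ ∞ H) (hi : Integrable (sqm (Om H))) :
    ∫ ξ, sqm (Om H) ξ = 0 := by
  rw [← (polar_integral hi).2]
  refine (setIntegral_congr_fun measurableSet_Ioi fun s hs => ?_).trans (integral_zero' ℝ ℂ)
  have hs' : (0:ℝ) < s := hs
  have e : ∀ θ, (2 * s ^ 3) • sqm (Om H) (s ^ 2 • eθ θ) =
      ((2 * s ^ 3 * s : ℝ) : ℂ) * pol 0 0 (Om H) s θ := by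
    intro θ
    have h2 : ‖s ^ 2 • eθ θ‖ = s ^ 2 := by rw [norm_smul, norm_eθ]; simp
    simp only [sqm, h2, Real.sqrt_sq hs'.le, pol]
    simp
    ring
  simp only [e, Pi.zero_apply]
  rw [intervalIntegral.integral_const_mul]
  have hc : Continuous (pol 0 0 (Om H) s) := by
    have := (pol_contDiff 0 0 (Om_contDiff hH)).continuous
    exact this.comp (Continuous.prodMk continuous_const continuous_id)
  rw [intervalIntegral.integral_eq_sub_of_hasDerivAt (fun θ _ => pol_dθ 0 0 hH s θ)
    (hc.intervalIntegrable _ _)]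
  have : pol 0 0 H s Real.pi = pol 0 0 H s (-Real.pi) := by
    simp [pol, eθ]
  rw [this, sub_self, mul_zero]

lemma inner_rotv (ξ x : E2) : inner ℝ (rotv ξ) x = -inner ℝ ξ (rotv x) := by
  simp [inner_coord, rotv]

/-- `Ω` commutes with the radial multiplier `Λ^{1/2}`. -/
lemma fourierInv_rot (f : SchwartzMap E2 ℂ) (x : E2) :
    𝓕⁻ (sqm (𝓕 (dirS (rotv x) f) : SchwartzMap E2 ℂ)) x =
      𝓕⁻ (sqm (𝓕 (OmS f) : SchwartzMap E2 ℂ)) x := by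
  obtain ⟨F, hF⟩ : ∃ F : SchwartzMap E2 ℂ, F = 𝓕 f := ⟨_, rfl⟩
  have a1 := fourierInv_phaseL (sqm (𝓕 (dirS (rotv x) f) : SchwartzMap E2 ℂ)) (0, x)
  have a2 := fourierInv_phaseL (sqm (𝓕 (OmS f) : SchwartzMap E2 ℂ)) (0, x)
  simp only at a1 a2
  rw [a1, a2]
  have i1 := exp_integrable (sqm_integrable (𝓕 (dirS (rotv x) f))) (0, x)
  have i2 := exp_integrable (sqm_integrable (𝓕 (OmS f))) (0, x)
  obtain ⟨L, hL⟩ : ∃ L : E2 →L[ℝ] ℂ, L = (innerSL ℝ x).smulRight (2 * Real.pi * Complex.I) :=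
    ⟨_, rfl⟩
  have hLa : ∀ ξ, L ξ = phaseL ξ (0, x) := by
    intro ξ
    rw [phaseL_apply, hL]
    simp [real_inner_comm]
    ring
  have hsm : ContDiff ℝ ∞ (fun ξ => Complex.exp (L ξ) * F ξ) :=
    (Complex.contDiff_exp.comp L.contDiff).mul (F.smooth ⊤)
  have hOm : ∀ ξ, Om (fun ξ => Complex.exp (L ξ) * F ξ) ξ =
      Complex.exp (phaseL ξ (0, x)) * ((𝓕 (OmS f) : SchwartzMap E2 ℂ) ξ -
        (𝓕 (dirS (rotv x) f) : SchwartzMap E2 ℂ) ξ) := by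
    intro ξ
    have d1 : HasFDerivAt (fun ξ => Complex.exp (L ξ)) (Complex.exp (L ξ) • L) ξ :=
      L.hasFDerivAt.cexp
    have d2 : HasFDerivAt F (fderiv ℝ F ξ) ξ := (F.differentiable ξ).hasFDerivAt
    have d3 : HasFDerivAt (fun ξ => Complex.exp (L ξ) * F ξ)
      (Complex.exp (L ξ) • fderiv ℝ F ξ + F ξ • Complex.exp (L ξ) • L) ξ := d1.mul d2
    have e1 : L (rotv ξ) = -(2 * Real.pi * Complex.I * ((inner ℝ ξ (rotv x) : ℝ) : ℂ)) := by
      rw [hLa, phaseL_apply, inner_rotv]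
      push_cast
      ring
    rw [Om, HasFDerivAt.fderiv d3, fourier_OmS, OmS_apply, fourier_dirS, ← hF, ← hLa]
    simp only [add_apply, smul_apply, smul_eq_mul, e1]
    ring
  have e : sqm (Om (fun ξ => Complex.exp (L ξ) * F ξ)) = fun ξ =>
      Complex.exp (phaseL ξ (0, x)) * sqm (𝓕 (OmS f) : SchwartzMap E2 ℂ) ξ -
      Complex.exp (phaseL ξ (0, x)) * sqm (𝓕 (dirS (rotv x) f) : SchwartzMap E2 ℂ) ξ := by
    funext ξ
    rw [sqm, hOm, sqm, sqm]
    ring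
  have hz := integral_sqm_Om hsm (by rw [e]; exact i2.sub i1)
  rw [e, integral_sub i2 i1] at hz
  exact (sub_eq_zero.mp hz).symm

lemma Reg.Mu_opT {u : ℝ × E2 → ℂ} {g g' : ℝ → SchwartzMap E2 ℂ} (h : Reg u g g') (i : Fin 3)
    (p : ℝ × E2) : fderiv ℝ (Mu g) p (0, vf i p.2) = Mu (fun t => opS i (g t)) p := by
  rw [h.Mu_fderiv, Mu]
  have s0 : dirS (EuclideanSpace.single 0 1) (g p.1) = dS 0 (g p.1) := by ext; simp [dirS]
  have s1 : dirS (EuclideanSpace.single 1 1) (g p.1) = dS 1 (g p.1) := by ext; simp [dirS]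
  fin_cases i
  · exact fourierInv_rot (g p.1) p.2
  · exact congrArg (fun f : SchwartzMap E2 ℂ => 𝓕⁻ (sqm (𝓕 f : SchwartzMap E2 ℂ)) p.2) s0
  · exact congrArg (fun f : SchwartzMap E2 ℂ => 𝓕⁻ (sqm (𝓕 f : SchwartzMap E2 ℂ)) p.2) s1

lemma Reg.opT_halfWaveOp {u : ℝ × E2 → ℂ} {g g' : ℝ → SchwartzMap E2 ℂ} (h : Reg u g g')
    (i : Fin 3) : _root_.opT i (halfWaveOp u) = halfWaveOp (_root_.opT i u) := by
  rw [(h.opT i).halfWaveOp_eq, h.halfWaveOp_eq, opT_eq]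
  funext p
  obtain ⟨t, x⟩ := p
  have d1 : DifferentiableAt ℝ (fun p => fderiv ℝ u p (1, 0)) (t, x) :=
    differentiable_fderiv_apply h.smooth _ _
  have d2 := (h.Mu_hasFDerivAt (t, x)).2.differentiableAt
  have d3 : HasFDerivAt (fun p => fderiv ℝ u p (1, 0) + Complex.I * Mu g p)
      (fderiv ℝ (fun p => fderiv ℝ u p (1, 0)) (t, x) + Complex.I • fderiv ℝ (Mu g) (t, x))
      (t, x) := d1.hasFDerivAt.add (d2.hasFDerivAt.const_mul Complex.I)
  rw [HasFDerivAt.fderiv d3, fderiv_opT_time i h.smooth, ← h.Mu_opT i]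
  rfl

/-! ### Fixed-time estimate and conclusion -/

lemma Reg.Sop_eq {u : ℝ × E2 → ℂ} {g g' : ℝ → SchwartzMap E2 ℂ} (h : Reg u g g') (t : ℝ) (x : E2) :
    Sop u (t, x) = ((t / 2 : ℝ) : ℂ) * g' t x + EuS (g t) x := by
  have e : ((t / 2, x) : ℝ × E2) = (t / 2) • ((1, 0) : ℝ × E2) + (0, x) := by simp
  rw [EuS_apply, h.slice, h.eq']
  simp only [Sop]
  rw [e, map_add, map_smul, Complex.real_smul]

/-- At a fixed time, `S - (t/2)(∂_t + iΛ^{1/2})` is, on the Fourier side, `-Rt t - 2`. Hence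
Plancherel bounds `Rt t` applied to the Fourier transform. -/
lemma Reg.N2_Rt_le {u : ℝ × E2 → ℂ} {g g' : ℝ → SchwartzMap E2 ℂ} (h : Reg u g g') (t : ℝ) :
    N2 (Rt t (𝓕 (g t) : SchwartzMap E2 ℂ)) ≤
      L2at t (Sop u) + |t| / 2 * L2at t (halfWaveOp u) + 2 * L2at t u := by
  obtain ⟨F, hF⟩ : ∃ F : SchwartzMap E2 ℂ, F = 𝓕 (g t) := ⟨_, rfl⟩
  obtain ⟨E, hE⟩ : ∃ E : SchwartzMap E2 ℂ, E = 𝓕 (EuS (g t)) := ⟨_, rfl⟩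
  obtain ⟨W, hW⟩ : ∃ W : E2 → ℂ, W = fun ξ => E ξ + (-(Complex.I * (t / 2))) * sqm F ξ := ⟨_, rfl⟩
  have hW1 : Integrable W := by
    rw [hW]; exact E.integrable.add ((sqm_integrable F).const_mul _)
  have hW2 : MemLp W 2 := by
    rw [hW]; exact (schwartz_memLp E).add ((sqm_memLp F).const_mul _)
  obtain ⟨hP1, hP2⟩ := plancherel hW1 hW2
  obtain ⟨hM, -⟩ := plancherel (sqm_integrable F) (sqm_memLp F)
  have hRt : Rt t F = fun ξ => (-1 : ℂ) * W ξ + (-2 : ℂ) * F ξ := by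
    funext ξ
    have e := fourier_EuS (g t) ξ
    rw [← hE, ← hF] at e
    simp only [Rt_eq, hW, e]
    ring
  have hSm : MemLp (fun x => Sop u (t, x)) 2 := by
    simp only [h.Sop_eq]
    exact ((schwartz_memLp (g' t)).const_mul _).add (schwartz_memLp _)
  have hHe : ∀ x, halfWaveOp u (t, x) = g' t x + Complex.I * 𝓕⁻ (sqm F) x := by
    intro x
    rw [h.halfWaveOp_eq, h.eq', hF]
    rfl
  have hHm : MemLp (fun x => halfWaveOp u (t, x)) 2 := by
    simp only [hHe]
    exact (schwartz_memLp (g' t)).add (hM.const_mul _)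
  have hWe : 𝓕⁻ W = fun x => Sop u (t, x) + (-((t / 2 : ℝ) : ℂ)) * halfWaveOp u (t, x) := by
    funext x
    have e1 : 𝓕⁻ W x = 𝓕⁻ (E : E2 → ℂ) x + (-(Complex.I * (t / 2))) * 𝓕⁻ (sqm F) x := by
      have a1 := fourierInv_phaseL W (0, x)
      have a2 := fourierInv_phaseL (E : E2 → ℂ) (0, x)
      have a3 := fourierInv_phaseL (sqm F) (0, x)
      simp only at a1 a2 a3
      rw [a1, a2, a3, ← integral_const_mul, ← integral_add (exp_integrable E.integrable _)
        ((exp_integrable (sqm_integrable F) _).const_mul _)]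
      refine integral_congr_ae (Filter.Eventually.of_forall fun ξ => ?_)
      simp only [hW]
      ring
    have e2 : 𝓕⁻ (E : E2 → ℂ) x = EuS (g t) x := by
      rw [hE, ← SchwartzMap.fourierInv_coe, FourierTransform.fourierInv_fourier_eq]
    rw [e1, e2, h.Sop_eq, hHe]
    push_cast
    ring
  have b1 : N2 (𝓕⁻ W) ≤ L2at t (Sop u) + |t| / 2 * L2at t (halfWaveOp u) := by
    rw [hWe]
    refine (N2_add_le hSm (hHm.const_mul _)).trans ?_
    rw [N2_const_mul]
    have : ‖-((t / 2 : ℝ) : ℂ)‖ = |t| / 2 := by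
      rw [norm_neg, Complex.norm_real, Real.norm_eq_abs, abs_div, abs_two]
    rw [this]
    exact le_rfl
  have b2 : N2 F = L2at t u := by
    rw [hF, N2_fourier]
    have : (g t : E2 → ℂ) = fun x => u (t, x) := funext (h.eq t)
    rw [this]
    rfl
  rw [← hF, hRt]
  refine (N2_add_le (hW2.const_mul _) ((schwartz_memLp F).const_mul _)).trans ?_
  rw [N2_const_mul, N2_const_mul, b2, ← hP2]
  have n1 : ‖(-1 : ℂ)‖ = 1 := by simp
  have n2 : ‖(-2 : ℂ)‖ = 2 := by simp
  rw [n1, n2]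
  linarith

/-- The composition `D^I` on Schwartz functions. -/
def opL : List (Fin 3) → SchwartzMap E2 ℂ → SchwartzMap E2 ℂ
  | [], f => f
  | i :: l, f => opS i (opL l f)

lemma Reg.DI {u : ℝ × E2 → ℂ} {g g' : ℝ → SchwartzMap E2 ℂ} (h : Reg u g g') :
    ∀ l : List (Fin 3), Reg (DI l u) (fun t => opL l (g t)) (fun t => opL l (g' t))
  | [] => h
  | i :: l => (Reg.DI h l).opT i

lemma Reg.DI_halfWaveOp {u : ℝ × E2 → ℂ} {g g' : ℝ → SchwartzMap E2 ℂ} (h : Reg u g g') :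
    ∀ l : List (Fin 3), _root_.DI l (halfWaveOp u) = halfWaveOp (_root_.DI l u)
  | [] => rfl
  | i :: l => by
    rw [_root_.DI, Reg.DI_halfWaveOp h l, (h.DI l).opT_halfWaveOp i]
    rfl

lemma L2at_nonneg (t : ℝ) (u : ℝ × E2 → ℂ) : 0 ≤ L2at t u := N2_nonneg _

/-- Each term indexed by a list of length at most four is one of the terms of the sum over all `D^I`. -/
lemma le_list_sum {φ : List (Fin 3) → ℝ} (h : ∀ l, 0 ≤ φ l) {l : List (Fin 3)}
    (hl : l.length ≤ 4) :
    φ l ≤ ∑ n ∈ Finset.range 5, ∑ I : Fin n → Fin 3, φ (List.ofFn I) := by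
  have h1 : φ l ≤ ∑ I : Fin l.length → Fin 3, φ (List.ofFn I) := by
    have := Finset.single_le_sum (f := fun I : Fin l.length → Fin 3 => φ (List.ofFn I))
      (fun I _ => h _) (Finset.mem_univ l.get)
    simpa using this
  exact h1.trans (Finset.single_le_sum
    (f := fun n => ∑ I : Fin n → Fin 3, φ (List.ofFn I))
    (fun n _ => Finset.sum_nonneg fun I _ => h _) (Finset.mem_range.2 (by omega)))

lemma final_algebra {τ y c a b d : ℝ} (hτ : 0 ≤ τ) (hc : 0 ≤ c) (ha : 0 ≤ a) (hb : 0 ≤ b)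
    (hd : 0 ≤ d) (h1 : τ * y ≤ 800000 * (c * (27 * a + 6 * b + 3 * τ * d)))
    (h2 : y ≤ 9 * c * a) :
    y ≤ (800000 * 28 * (c + 1)) * ((1 + τ)⁻¹ * (a + b) + d) := by
  have hτ' : 0 < 1 + τ := by linarith
  have e : (800000 * 28 * (c + 1)) * ((1 + τ)⁻¹ * (a + b) + d) =
      ((800000 * 28 * (c + 1)) * (a + b + (1 + τ) * d)) / (1 + τ) := by
    field_simp
  rw [e, le_div_iff₀ hτ']
  have p1 : 0 ≤ c * a := mul_nonneg hc ha
  have p2 : 0 ≤ c * b := mul_nonneg hc hb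
  have p3 : 0 ≤ c * d := mul_nonneg hc hd
  have p4 : 0 ≤ τ * d := mul_nonneg hτ hd
  have p5 : 0 ≤ c * (τ * d) := mul_nonneg hc p4
  nlinarith

/-- The estimate in terms of the sums over all `D^I`, `|I| ≤ 4`. -/
lemma Reg.bound {u : ℝ × E2 → ℂ} {g g' : ℝ → SchwartzMap E2 ℂ} (h : Reg u g g') (t : ℝ) (x : E2)
    {a b d : ℝ} (ha : ∀ l : List (Fin 3), l.length ≤ 4 → L2at t (_root_.DI l u) ≤ a)
    (hb : ∀ l : List (Fin 3), l.length ≤ 4 → L2at t (Sop (_root_.DI l u)) ≤ b)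
    (hd : ∀ l : List (Fin 3), l.length ≤ 4 → L2at t (_root_.DI l (halfWaveOp u)) ≤ d) :
    ‖u (t, x)‖ ≤ (800000 * 28 * (cw + 1)) * ((1 + |t|)⁻¹ * (a + b) + d) := by
  have hN : ∀ l : List (Fin 3), l.length ≤ 4 → N2 (opL l (g t)) ≤ a := by
    intro l hl
    have : (opL l (g t) : E2 → ℂ) = fun x => _root_.DI l u (t, x) := funext ((h.DI l).eq t)
    rw [this]
    exact ha l hl
  have hR : ∀ l : List (Fin 3), l.length ≤ 4 →
      N2 (Rt t (𝓕 (opL l (g t)) : SchwartzMap E2 ℂ)) ≤ b + |t| / 2 * d + 2 * a := by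
    intro l hl
    have k := (h.DI l).N2_Rt_le t
    rw [← h.DI_halfWaveOp l] at k
    have k1 := mul_le_mul_of_nonneg_left (hd l hl) (by positivity : 0 ≤ |t| / 2)
    linarith [ha l hl, hb l hl]
  have hA : ∀ l : List (Fin 3), l.length ≤ 3 → Asum (opL l (g t)) ≤ 3 * a := by
    intro l hl
    have k0 := hN l (by omega)
    have k1 : N2 (dS 0 (opL l (g t))) ≤ a := hN (1 :: l) (by simp; omega)
    have k2 : N2 (dS 1 (opL l (g t))) ≤ a := hN (2 :: l) (by simp; omega)
    unfold Asum
    linarith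
  have hB : ∀ l : List (Fin 3), l.length ≤ 3 →
      Bsum t (opL l (g t)) ≤ 3 * (b + |t| / 2 * d + 2 * a) := by
    intro l hl
    have k0 := hR l (by omega)
    have k1 : N2 (Rt t (𝓕 (dS 0 (opL l (g t))) : SchwartzMap E2 ℂ)) ≤ _ :=
      hR (1 :: l) (by simp; omega)
    have k2 : N2 (Rt t (𝓕 (dS 1 (opL l (g t))) : SchwartzMap E2 ℂ)) ≤ _ :=
      hR (2 :: l) (by simp; omega)
    unfold Bsum
    linarith
  have A0 : Asum (g t) ≤ 3 * a := hA [] (by simp)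
  have A1 : Asum (OmS (g t)) ≤ 3 * a := hA [0] (by simp)
  have A2 : Asum (OmS (OmS (g t))) ≤ 3 * a := hA [0, 0] (by simp)
  have A3 : Asum (dS 0 (g t)) ≤ 3 * a := hA [1] (by simp)
  have A4 : Asum (dS 1 (g t)) ≤ 3 * a := hA [2] (by simp)
  have B0 : Bsum t (g t) ≤ 3 * (b + |t| / 2 * d + 2 * a) := hB [] (by simp)
  have B1 : Bsum t (OmS (g t)) ≤ 3 * (b + |t| / 2 * d + 2 * a) := hB [0] (by simp)
  have hcw : 0 ≤ cw := cw_nonneg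
  have f1 := freq_bound t (g t) x
  have f2 := low_bound (g t) x
  rw [h.eq] at f1 f2
  refine final_algebra (abs_nonneg t) hcw ((L2at_nonneg _ _).trans (ha [] (by simp)))
    ((L2at_nonneg _ _).trans (hb [] (by simp))) ((L2at_nonneg _ _).trans (hd [] (by simp)))
    (f1.trans ?_) (f2.trans ?_)
  · refine mul_le_mul_of_nonneg_left (mul_le_mul_of_nonneg_left ?_ hcw) (by norm_num)
    linarith
  · rw [show 9 * cw * a = cw * (9 * a) by ring]
    exact mul_le_mul_of_nonneg_left (by linarith) hcw

/-- **Klainerman–Sobolev type `L^∞` estimate for the half-wave equation.** -/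
theorem klainerman_sobolev_halfwave :
    ∃ C : ℝ, 0 < C ∧
      ∀ u : ℝ × E2 → ℂ, ContDiff ℝ (⊤ : ℕ∞) u →
        (∃ g : ℝ → SchwartzMap E2 ℂ, Continuous g ∧ ∀ (t : ℝ) (x : E2), g t x = u (t, x)) →
        (∃ g' : ℝ → SchwartzMap E2 ℂ, Continuous g' ∧
          ∀ (t : ℝ) (x : E2), g' t x = fderiv ℝ u (t, x) (1, 0)) →
        ∀ t : ℝ, ∀ x₀ : E2,
          ‖u (t, x₀)‖ ≤
            C * ((1 + |t|)⁻¹ *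
                  (∑ k ∈ Finset.range 2, ∑ n ∈ Finset.range 5, ∑ I : Fin n → Fin 3,
                    L2at t (Sop^[k] (DI (List.ofFn I) u))) +
                (∑ n ∈ Finset.range 5, ∑ I : Fin n → Fin 3,
                  L2at t (DI (List.ofFn I) (halfWaveOp u)))) := by
  have hcw : 0 ≤ cw := cw_nonneg
  refine ⟨800000 * 28 * (cw + 1), by positivity, ?_⟩
  rintro u hu ⟨g, hg, hgu⟩ ⟨g', hg', hgu'⟩ t x₀
  have h : Reg u g g' := ⟨hu, hg, hg', hgu, hgu'⟩
  rw [Finset.sum_range_succ, Finset.sum_range_one]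
  exact h.bound t x₀
    (fun l hl => le_list_sum (φ := fun l => L2at t (DI l u)) (fun _ => L2at_nonneg _ _) hl)
    (fun l hl => le_list_sum (φ := fun l => L2at t (Sop (DI l u))) (fun _ => L2at_nonneg _ _) hl)
    (fun l hl => le_list_sum (φ := fun l => L2at t (DI l (halfWaveOp u)))
      (fun _ => L2at_nonneg _ _) hl)

end
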